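/- arXiv:2603.21538 — 2 statements merged into one kernel-verified Lean document; each statement's English description precedes it below -/
import Mathlib

section
/- Every (bull, odd torch)-free graph is perfectly weight divisible, and hence perfectly divisible. -/
/-!
Let `s` be a set of vertices of a (bull, odd torch)-free graph `G`; the claim is proved by induction
on `|s|`, for all positive weights at once (`exists_partition`).

If `G[s]` has a homogeneous set `X`, contract `X` to a vertex carrying the maximum weight of a
clique of `X` and combine the partitions of the two smaller graphs; the perfect part remains perfect
by the substitution lemma `perf_subst`.

If `G[s]` has no homogeneous set, take any `v ∈ s` and put `W = N(v) ∩ s` and `P = s \ N(v)`. A clique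
of `W` becomes heavier by adding `v`, so only the perfection of `P` is at stake (`perf_nonNbrs`).
Suppose that `P` contains a minimally imperfect `H`. Since `H` is connected, `v ∉ H`, and `v` is
anticomplete to `H`. The set `D` of vertices anticomplete to `H` is nonempty, and `s \ D ⊇ H` is not
homogeneous, so some `u ∉ D` has a neighbour in `D` and a neighbour in `H`.

* If `N(u) ∩ H` contains an edge, then `u` is complete to `H` (`MinImp.complete_of_edge`), and a
  set `H` with a centre and an anticentre extends to a homogeneous set (`MinImp.exists_homog`).
* If `N(u) ∩ H` is stable and `ω(H) ≥ 3`, bull-freeness shows that some neighbourhood in `H` is a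
  join of two nonempty sets (`MinImp.not_stable_attachment`), which never happens in a minimally
  imperfect graph (`MinImp.no_antistar`).
* If `N(u) ∩ H` is stable and `ω(H) = 2`, there is an odd hole in `H` through a neighbour of `u`
  (`MinImp.exists_odd_hole`), and together with `u` and its neighbour in `D` it is an odd torch.

The needed facts on minimally imperfect graphs `H` with `ω(H) ≤ k` follow from colourings of
`H \ {p}`: in such a colouring any set `I` of fewer than `k` colours spans a clique of size `|I|` in
`N(p)` (`MinImp.exists_clique_of_col`). The strong perfect graph theorem is not used.
-/

open SimpleGraph

/-- `H` is isomorphic to an induced subgraph of `G`. -/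
def ContainsInduced {α β : Type*} (G : SimpleGraph α) (H : SimpleGraph β) : Prop :=
  ∃ f : β ↪ α, ∀ a b, G.Adj (f a) (f b) ↔ H.Adj a b

/-- `G` is `H`-free: `G` does not contain `H` as an induced subgraph. -/
def IsFree {α β : Type*} (G : SimpleGraph α) (H : SimpleGraph β) : Prop :=
  ¬ ContainsInduced G H

/-- The clique number of the subgraph of `G` induced on `s`. -/
noncomputable def cliqueNumOn {V : Type*} (G : SimpleGraph V) (s : Set V) : ℕ :=
  sSup {n | ∃ t : Finset V, ↑t ⊆ s ∧ G.IsNClique n t}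

/-- The maximum `w`-weight of a clique of `G` contained in `s`. -/
noncomputable def wCliqueNumOn {V : Type*} (G : SimpleGraph V) (w : V → ℕ) (s : Set V) : ℕ :=
  sSup {n | ∃ t : Finset V, ↑t ⊆ s ∧ G.IsClique (↑t : Set V) ∧ ∑ v ∈ t, w v = n}

/-- A graph is perfect if every induced subgraph has chromatic number equal to clique number. -/
def IsPerfect {V : Type*} (G : SimpleGraph V) : Prop :=
  ∀ s : Set V, (G.induce s).chromaticNumber = (cliqueNumOn G s : ℕ∞)

/-- `G` is perfectly divisible: every (nonempty) induced subgraph `H` of `G` admits a partition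
`(A, B)` of its vertex set with `H[A]` perfect and `ω(H[B]) < ω(H)`. -/
def PerfectlyDivisible {V : Type*} (G : SimpleGraph V) : Prop :=
  ∀ s : Set V, s.Nonempty →
    ∃ A B : Set V, A ∪ B = s ∧ A ∩ B = ∅ ∧
      IsPerfect (G.induce A) ∧ cliqueNumOn G B < cliqueNumOn G s

/-- `G` is perfectly weight divisible: for every positive integer weight function `w` and every
(nonempty) induced subgraph `H` of `G`, there is a partition `(P, W)` of its vertex set with
`H[P]` perfect and the maximum weight of a clique of `H[W]` less than that of `H`. -/
def PerfectlyWeightDivisible {V : Type*} (G : SimpleGraph V) : Prop :=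
  ∀ w : V → ℕ, (∀ v, 0 < w v) →
    ∀ s : Set V, s.Nonempty →
      ∃ P W : Set V, P ∪ W = s ∧ P ∩ W = ∅ ∧
        IsPerfect (G.induce P) ∧ wCliqueNumOn G w W < wCliqueNumOn G w s

/-- The bull: a triangle `{0,1,2}` with pendant edges `0-3` and `1-4`. -/
def bull : SimpleGraph (Fin 5) :=
  SimpleGraph.fromEdgeSet {s(0,1), s(0,2), s(1,2), s(0,3), s(1,4)}

/-- The house: the complement of the path on 5 vertices. -/
def house : SimpleGraph (Fin 5) := (SimpleGraph.pathGraph 5)ᶜ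

/-- The hammer: a triangle `{0,1,2}` together with the path `2-3-4`. -/
def hammer : SimpleGraph (Fin 5) :=
  SimpleGraph.fromEdgeSet {s(0,1), s(0,2), s(1,2), s(2,3), s(3,4)}

/-- The diamond: `K₄` minus an edge. -/
def diamond : SimpleGraph (Fin 4) :=
  SimpleGraph.fromEdgeSet {s(0,1), s(0,2), s(0,3), s(1,2), s(1,3)}

/-- The odd torch built on the cycle `C_k` from a set `S` of cycle vertices: two new adjacent
vertices are added, the first adjacent exactly to `S`, the second to no cycle vertex. -/
def oddTorch (k : ℕ) (S : Set (Fin k)) : SimpleGraph (Fin k ⊕ Fin 2) :=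
  SimpleGraph.fromRel (fun a b =>
    match a, b with
    | Sum.inl i, Sum.inl j => (SimpleGraph.cycleGraph k).Adj i j
    | Sum.inl i, Sum.inr u => u = 0 ∧ i ∈ S
    | Sum.inr _, Sum.inl _ => False
    | Sum.inr u, Sum.inr v => u ≠ v)

/-- `G` contains no odd torch as an induced subgraph. -/
def OddTorchFree {V : Type*} (G : SimpleGraph V) : Prop :=
  ∀ (k : ℕ) (S : Set (Fin k)), 5 ≤ k → Odd k → S.Nonempty →
    (∀ i ∈ S, ∀ j ∈ S, ¬ (SimpleGraph.cycleGraph k).Adj i j) →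
    IsFree G (oddTorch k S)

/-- `G` is locally perfect: the neighbourhood of each vertex induces a perfect graph. -/
def LocallyPerfect {V : Type*} (G : SimpleGraph V) : Prop :=
  ∀ v : V, IsPerfect (G.induce (G.neighborSet v))

/-- `N(X)`: vertices outside `X` with a neighbour in `X`. -/
def nbhd {V : Type*} (G : SimpleGraph V) (X : Set V) : Set V :=
  {u | u ∉ X ∧ ∃ x ∈ X, G.Adj u x}

/-- `M(X) = V(G) \ (X ∪ N(X))`: vertices outside `X` with no neighbour in `X`. -/
def antiNbhd {V : Type*} (G : SimpleGraph V) (X : Set V) : Set V :=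
  {u | u ∉ X ∧ ∀ x ∈ X, ¬ G.Adj u x}

/-- Minimally non-perfectly divisible. -/
def MNPD {V : Type*} (G : SimpleGraph V) : Prop :=
  ¬ PerfectlyDivisible G ∧ ∀ s : Set V, s ≠ Set.univ → PerfectlyDivisible (G.induce s)

/-- Minimally non-perfectly weight divisible. -/
def MNWD {V : Type*} (G : SimpleGraph V) : Prop :=
  ¬ PerfectlyWeightDivisible G ∧ ∀ s : Set V, s ≠ Set.univ → PerfectlyWeightDivisible (G.induce s)

namespace BullTorch

variable {V : Type*}

/-- Every clique of `G` inside `s` has at most `n` vertices, that is `ω(G[s]) ≤ n`. -/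
def CliqueBound (G : SimpleGraph V) (s : Set V) (n : ℕ) : Prop :=
  ∀ t : Finset V, (t : Set V) ⊆ s → G.IsClique (t : Set V) → t.card ≤ n

/-- `G[s]` is `n`-colourable; the colours are the naturals below `n`, and the colouring is a
function on all of `V` whose values outside `s` are irrelevant. -/
def Col (G : SimpleGraph V) (s : Set V) (n : ℕ) : Prop :=
  ∃ f : V → ℕ, (∀ x ∈ s, f x < n) ∧ ∀ x ∈ s, ∀ y ∈ s, G.Adj x y → f x ≠ f y

/-- `G[s]` is perfect, phrased with upper bounds on clique numbers. -/
def Perf (G : SimpleGraph V) (s : Set V) : Prop :=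
  ∀ t ⊆ s, ∀ n, CliqueBound G t n → Col G t n

/-- `G[H]` is minimally imperfect, with clique number at most `k` but not `k`-colourable. -/
structure MinImp (G : SimpleGraph V) (H : Set V) (k : ℕ) : Prop where
  bound : CliqueBound G H k
  not_col : ¬ Col G H k
  perf : ∀ t ⊆ H, t ≠ H → ∀ n, CliqueBound G t n → Col G t n

/-- Bull-freeness spelled out on a triangle `a b c` with pendant edges `a d` and `b e`. -/
def NoBull (G : SimpleGraph V) : Prop :=
  ∀ a b c d e : V, G.Adj a b → G.Adj a c → G.Adj b c → G.Adj a d → G.Adj b e →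
    ¬ G.Adj a e → ¬ G.Adj b d → ¬ G.Adj c d → ¬ G.Adj c e → ¬ G.Adj d e → False

/-- `X` is a homogeneous set of `G[s]`: at least two vertices, not all of `s`, and no vertex of
`s` outside `X` is mixed on `X`. -/
def Homog (G : SimpleGraph V) (s X : Set V) : Prop :=
  X ⊆ s ∧ (∃ x ∈ X, ∃ y ∈ X, x ≠ y) ∧ (∃ y ∈ s, y ∉ X) ∧
    ∀ y ∈ s, y ∉ X → ∀ x ∈ X, ∀ x' ∈ X, G.Adj y x → G.Adj y x'

lemma noBull_of_isFree {G : SimpleGraph V} (h : IsFree G bull) : NoBull G := by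
  intro a b c d e hab hac hbc had hbe hae hbd hcd hce hde
  have h1 := hab.ne; have h2 := hac.ne; have h3 := hbc.ne; have h4 := had.ne; have h5 := hbe.ne
  have n1 : a ≠ e := by rintro rfl; exact hce hac.symm
  have n2 : b ≠ d := by rintro rfl; exact hcd hbc.symm
  have n3 : c ≠ d := by rintro rfl; exact hbd hbc
  have n4 : c ≠ e := by rintro rfl; exact hae hac
  have n5 : d ≠ e := by rintro rfl; exact hae had
  apply h
  refine ⟨⟨![a, b, c, d, e], ?_⟩, ?_⟩
  · intro i j hij
    fin_cases i <;> fin_cases j <;> simp_all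
  · intro i j
    change G.Adj (![a, b, c, d, e] i) (![a, b, c, d, e] j) ↔ bull.Adj i j
    have s1 := hab.symm; have s2 := hac.symm; have s3 := hbc.symm; have s4 := had.symm
    have s5 := hbe.symm
    have m1 : ¬ G.Adj e a := fun h => hae h.symm
    have m2 : ¬ G.Adj d b := fun h => hbd h.symm
    have m3 : ¬ G.Adj d c := fun h => hcd h.symm
    have m4 : ¬ G.Adj e c := fun h => hce h.symm
    have m5 : ¬ G.Adj e d := fun h => hde h.symm
    fin_cases i <;> fin_cases j <;> simp [bull, *]

lemma CliqueBound.mono {G : SimpleGraph V} {s t : Set V} {m n : ℕ} (h : CliqueBound G t m)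
    (hs : s ⊆ t) (hmn : m ≤ n) : CliqueBound G s n :=
  fun r hr hc => (h r (hr.trans hs) hc).trans hmn

/-- A proper colouring with colours in a finite set `C` gives one with `C.card` colours. -/
lemma col_of_finset {G : SimpleGraph V} {s : Set V} (C : Finset ℕ) (f : V → ℕ)
    (hf : ∀ x ∈ s, f x ∈ C) (hp : ∀ x ∈ s, ∀ y ∈ s, G.Adj x y → f x ≠ f y) :
    Col G s C.card := by
  classical
  refine ⟨fun x => if h : f x ∈ C then (C.equivFin ⟨f x, h⟩ : ℕ) else 0, ?_, ?_⟩
  · intro x hx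
    simp [hf x hx]
  · intro x hx y hy hxy
    simp only [hf x hx, hf y hy, dif_pos]
    intro he
    have := C.equivFin.injective (Fin.ext he)
    exact hp x hx y hy hxy (by simpa using this)

lemma Col.mono {G : SimpleGraph V} {s : Set V} {m n : ℕ} (h : Col G s m) (hmn : m ≤ n) :
    Col G s n := by
  obtain ⟨f, h1, h2⟩ := h
  exact ⟨f, fun x hx => (h1 x hx).trans_le hmn, h2⟩

/-- A properly coloured clique has at most as many vertices as there are colours. -/
lemma clique_card_le_of_col {G : SimpleGraph V} (t : Finset V) (ht : G.IsClique (t : Set V))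
    (C : Finset ℕ) (f : V → ℕ) (hf : ∀ x ∈ t, f x ∈ C)
    (hp : ∀ x ∈ t, ∀ y ∈ t, G.Adj x y → f x ≠ f y) : t.card ≤ C.card := by
  apply Finset.card_le_card_of_injOn f (fun x hx => hf x hx)
  intro x hx y hy he
  by_contra hne
  exact hp x hx y hy (ht hx hy hne) he

lemma exists_max_clique [Finite V] (G : SimpleGraph V) (s : Set V) :
    ∃ t : Finset V, (t : Set V) ⊆ s ∧ G.IsClique (t : Set V) ∧ CliqueBound G s t.card := by
  classical
  have := Fintype.ofFinite V
  obtain ⟨t, ht, hm⟩ := Finset.exists_max_image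
    (Finset.univ.filter fun t : Finset V => (t : Set V) ⊆ s ∧ G.IsClique (t : Set V))
    Finset.card ⟨∅, by simp⟩
  simp only [Finset.mem_filter, Finset.mem_univ, true_and] at ht hm
  exact ⟨t, ht.1, ht.2, fun r hr hc => hm r ⟨hr, hc⟩⟩

lemma exists_minImp [Finite V] {G : SimpleGraph V} {s : Set V} (h : ¬ Perf G s) :
    ∃ H ⊆ s, ∃ k, MinImp G H k := by
  classical
  have hne : {t : Set V | t ⊆ s ∧ ∃ n, CliqueBound G t n ∧ ¬ Col G t n}.Nonempty := by
    unfold Perf at h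
    push Not at h
    obtain ⟨t, ht, n, h1, h2⟩ := h
    exact ⟨t, ht, n, h1, h2⟩
  obtain ⟨H, hH⟩ := Set.Finite.exists_minimal (Set.toFinite _) hne
  obtain ⟨hs, k, hk, hc⟩ := hH.1
  refine ⟨H, hs, k, hk, hc, fun t ht hne n hn => ?_⟩
  by_contra hcol
  exact hne (ht.antisymm (hH.2 ⟨ht.trans hs, n, hn, hcol⟩ ht))

/-! ### Minimally imperfect graphs -/

namespace MinImp

variable {G : SimpleGraph V} {H : Set V} {k : ℕ}

/-- A minimally imperfect graph cannot be split into a `c`-colourable part and a proper part of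
clique number at most `m` with `c + m ≤ k`. -/
lemma partition (hH : MinImp G H k) {A B : Set V} {c m : ℕ} (hAB : H ⊆ A ∪ B) (hB : B ⊆ H)
    (hBH : B ≠ H) (hc : Col G A c) (hm : CliqueBound G B m) (hk : c + m ≤ k) : False := by
  classical
  obtain ⟨f, f1, f2⟩ := hc
  obtain ⟨g, g1, g2⟩ := hH.perf B hB hBH m hm
  apply hH.not_col
  refine ⟨fun x => if x ∈ B then c + g x else f x, ?_, ?_⟩
  · intro x hx
    by_cases h : x ∈ B
    · have := g1 x h
      simp only [h, if_true]; omega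
    · have := f1 x ((hAB hx).resolve_right h)
      simp only [h, if_false]; omega
  · intro x hx y hy hxy
    by_cases h : x ∈ B <;> by_cases h' : y ∈ B <;> simp only [h, h', if_true, if_false]
    · have := g2 x h y h' hxy; omega
    · have := f1 y ((hAB hy).resolve_right h'); omega
    · have := f1 x ((hAB hx).resolve_right h); omega
    · exact f2 x ((hAB hx).resolve_right h) y ((hAB hy).resolve_right h') hxy

lemma exists_col_erase (hH : MinImp G H k) {p : V} (hp : p ∈ H) : Col G (H \ {p}) k :=
  hH.perf _ Set.sdiff_subset (fun h => by rw [← h] at hp; exact hp.2 rfl) _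
    (hH.bound.mono Set.sdiff_subset le_rfl)

/-- In a colouring of `H \ {p}` every set `I` of fewer than `k` colours spans a clique of size
`|I|` in the neighbourhood of `p`; otherwise the vertices coloured from `I` together with `p`
could be recoloured with `|I|` colours. -/
lemma exists_clique_of_col (hH : MinImp G H k) {p : V} (hp : p ∈ H) {f : V → ℕ}
    (f1 : ∀ x ∈ H \ {p}, f x < k)
    (f2 : ∀ x ∈ H \ {p}, ∀ y ∈ H \ {p}, G.Adj x y → f x ≠ f y)
    (I : Finset ℕ) (hI : I ⊆ Finset.range k) {c : ℕ} (hck : c < k) (hc : c ∉ I) :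
    ∃ t : Finset V, (∀ x ∈ t, x ∈ H ∧ G.Adj p x ∧ f x ∈ I) ∧ G.IsClique (t : Set V) ∧
      I.card ≤ t.card := by
  classical
  by_contra hno
  push Not at hno
  have hV1 : CliqueBound G ({p} ∪ {x | x ∈ H \ {p} ∧ f x ∈ I}) I.card := by
    intro t ht hcl
    by_cases hpt : p ∈ t
    · have := hno (t.erase p) (by
        intro x hx
        have hx' := Finset.mem_erase.1 hx
        rcases ht hx'.2 with h | h
        · exact absurd h hx'.1
        · exact ⟨h.1.1, hcl hpt hx'.2 hx'.1.symm, h.2⟩)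
        (hcl.subset (by simp))
      rw [Finset.card_erase_of_mem hpt] at this
      omega
    · have hm : ∀ x ∈ t, x ∈ H \ {p} ∧ f x ∈ I := fun x hx =>
        (ht hx).resolve_left (fun h => hpt (by rw [← Set.mem_singleton_iff.1 h]; exact hx))
      exact clique_card_le_of_col t hcl I f (fun x hx => (hm x hx).2)
        (fun x hx y hy => f2 x (hm x hx).1 y (hm y hy).1)
  have hV2 : Col G {x | x ∈ H \ {p} ∧ f x ∉ I} (Finset.range k \ I).card :=
    col_of_finset _ f (fun x hx => by simp [f1 x hx.1, hx.2])
      (fun x hx y hy => f2 x hx.1 y hy.1)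
  refine hH.partition (A := {x | x ∈ H \ {p} ∧ f x ∉ I}) ?_ ?_ ?_ hV2 hV1 ?_
  · intro x hx
    by_cases h1 : x = p
    · right; left; exact h1
    · by_cases h2 : f x ∈ I
      · right; right; exact ⟨⟨hx, h1⟩, h2⟩
      · left; exact ⟨⟨hx, h1⟩, h2⟩
  · rintro x (h | h)
    · rw [Set.mem_singleton_iff.1 h]; exact hp
    · exact h.1.1
  · intro heq
    -- colour `c` is not used on `H \ {p}`, so it is available for `p`
    have hu : ∀ x ∈ H \ {p}, f x ≠ c := by
      intro x hx hxc
      have : x ∈ ({p} ∪ {x | x ∈ H \ {p} ∧ f x ∈ I} : Set V) := by rw [heq]; exact hx.1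
      rcases this with h | h
      · exact hx.2 h
      · exact hc (hxc ▸ h.2)
    apply hH.not_col
    refine ⟨fun x => if x = p then c else f x, ?_, ?_⟩
    · intro x hx
      by_cases h : x = p
      · simp [h, hck]
      · simp [h, f1 x ⟨hx, h⟩]
    · intro x hx y hy hxy
      by_cases h : x = p <;> by_cases h' : y = p <;> simp only [h, h', if_true, if_false]
      · exact absurd (h.trans h'.symm) hxy.ne
      · exact (hu y ⟨hy, h'⟩).symm
      · exact hu x ⟨hx, h⟩
      · exact f2 x ⟨hx, h⟩ y ⟨hy, h'⟩ hxy
  · have := Finset.card_sdiff_add_card_eq_card hI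
    rw [Finset.card_range] at this
    omega

lemma nonempty (hH : MinImp G H k) : H.Nonempty := by
  by_contra h
  rw [Set.not_nonempty_iff_eq_empty] at h
  exact hH.not_col ⟨fun _ => 0, by simp [h], by simp [h]⟩

lemma exists_adj (hH : MinImp G H k) {p : V} (hp : p ∈ H) : ∃ q ∈ H, G.Adj p q := by
  classical
  by_contra hno
  push Not at hno
  obtain ⟨f, f1, f2⟩ := hH.exists_col_erase hp
  have hk : 1 ≤ k := by simpa using hH.bound {p} (by simpa using hp) (by simp)
  apply hH.not_col
  refine ⟨fun x => if x = p then 0 else f x, ?_, ?_⟩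
  · intro x hx
    by_cases h : x = p
    · simp only [h, if_true]; omega
    · simp [h, f1 x ⟨hx, h⟩]
  · intro x hx y hy hxy
    have h : x ≠ p := by rintro rfl; exact hno y hy hxy
    have h' : y ≠ p := by rintro rfl; exact hno x hx hxy.symm
    simp only [h, h', if_false]
    exact f2 x ⟨hx, h⟩ y ⟨hy, h'⟩ hxy

/-- A minimally imperfect graph is connected. -/
lemma connected (hH : MinImp G H k) {X : Set V} (hX : X ⊆ H) (hne : X.Nonempty)
    (ha : ∀ x ∈ X, ∀ y ∈ H, y ∉ X → ¬ G.Adj x y) : X = H := by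
  classical
  by_contra hXH
  obtain ⟨x0, hx0⟩ := hne
  obtain ⟨f, f1, f2⟩ := hH.perf X hX hXH k (hH.bound.mono hX le_rfl)
  obtain ⟨g, g1, g2⟩ := hH.perf (H \ X) Set.sdiff_subset
    (fun h => by have := hX hx0; rw [← h] at this; exact this.2 hx0) k
    (hH.bound.mono Set.sdiff_subset le_rfl)
  apply hH.not_col
  refine ⟨fun x => if x ∈ X then f x else g x, ?_, ?_⟩
  · intro x hx
    by_cases h : x ∈ X
    · simp [h, f1 x h]
    · simp [h, g1 x ⟨hx, h⟩]
  · intro x hx y hy hxy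
    by_cases h : x ∈ X <;> by_cases h' : y ∈ X <;> simp only [h, h', if_true, if_false]
    · exact f2 x h y h' hxy
    · exact absurd hxy (ha x h y hy h')
    · exact absurd hxy.symm (ha y h' x hx h)
    · exact g2 x ⟨hx, h⟩ y ⟨hy, h'⟩ hxy

lemma isClique_union {t₁ t₂ : Set V} (h₁ : G.IsClique t₁) (h₂ : G.IsClique t₂)
    (h : ∀ x ∈ t₁, ∀ y ∈ t₂, G.Adj x y) : G.IsClique (t₁ ∪ t₂) := by
  rintro x (hx | hx) y (hy | hy) hne
  · exact h₁ hx hy hne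
  · exact h x hx y hy
  · exact (h y hy x hx).symm
  · exact h₂ hx hy hne

/-- The complement of a minimally imperfect graph is connected. -/
lemma anticonnected [Finite V] (hH : MinImp G H k) {X : Set V} (hX : X ⊆ H) (hne : X.Nonempty)
    (ha : ∀ x ∈ X, ∀ y ∈ H, y ∉ X → G.Adj x y) : X = H := by
  classical
  by_contra hXH
  obtain ⟨x0, hx0⟩ := hne
  obtain ⟨t, t1, t2, t3⟩ := exists_max_clique G X
  obtain ⟨r, r1, r2, r3⟩ := exists_max_clique G (H \ X)
  have hc := hH.perf X hX hXH _ t3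
  refine hH.partition (A := X) (B := H \ X) ?_ Set.sdiff_subset
    (fun h => by have := hX hx0; rw [← h] at this; exact this.2 hx0) hc r3 ?_
  · simp
  · have hd : Disjoint t r := Finset.disjoint_left.2 fun x hx hx' => (r1 hx').2 (t1 hx)
    rw [← Finset.card_union_of_disjoint hd]
    apply hH.bound
    · rw [Finset.coe_union]
      exact Set.union_subset (t1.trans hX) (r1.trans Set.sdiff_subset)
    · rw [Finset.coe_union]
      exact isClique_union t2 r2 fun x hx y hy => ha x (t1 hx) y (r1 hy).1 (r1 hy).2

/-- The counting step shared by `no_antistar` and `no_homog`: two cliques in the neighbourhood of `p`,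
complete to each other, cannot have `k` vertices in total. -/
lemma two_cliques (hH : MinImp G H k) {p : V} (hp : p ∈ H) {t₁ t₂ : Finset V}
    (h₁ : ∀ x ∈ t₁, x ∈ H ∧ G.Adj p x) (h₂ : ∀ x ∈ t₂, x ∈ H ∧ G.Adj p x)
    (c₁ : G.IsClique (t₁ : Set V)) (c₂ : G.IsClique (t₂ : Set V))
    (h : ∀ x ∈ t₁, ∀ y ∈ t₂, G.Adj x y) (hk : k ≤ t₁.card + t₂.card) : False := by
  classical
  have hd : Disjoint t₁ t₂ := Finset.disjoint_left.2 fun x hx hx' => (h x hx x hx').ne rfl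
  have hpn : p ∉ t₁ ∪ t₂ := by
    intro hpt
    rcases Finset.mem_union.1 hpt with hh | hh
    · exact (h₁ p hh).2.ne rfl
    · exact (h₂ p hh).2.ne rfl
  have := hH.bound (insert p (t₁ ∪ t₂)) (by
    intro x hx
    rcases Finset.mem_insert.1 hx with rfl | hx
    · exact hp
    · rcases Finset.mem_union.1 hx with hh | hh
      · exact (h₁ x hh).1
      · exact (h₂ x hh).1) (by
    rw [Finset.coe_insert, Finset.coe_union]
    apply (isClique_union c₁ c₂ h).insert
    rintro x (hh | hh) -
    · exact (h₁ x hh).2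
    · exact (h₂ x hh).2)
  rw [Finset.card_insert_of_notMem hpn, Finset.card_union_of_disjoint hd] at this
  omega

/-- In a minimally imperfect graph every neighbourhood is anticonnected: it is not the join of
two nonempty parts `X` and `N(p) \ X`. -/
lemma no_antistar (hH : MinImp G H k) {p : V} (hp : p ∈ H) {X : Set V}
    (hX : ∀ x ∈ X, x ∈ H ∧ G.Adj p x) {x₀ y₀ : V} (hx₀ : x₀ ∈ X) (hy₀ : y₀ ∈ H)
    (hpy₀ : G.Adj p y₀) (hy₀X : y₀ ∉ X)
    (ha : ∀ x ∈ X, ∀ y ∈ H, G.Adj p y → y ∉ X → G.Adj x y) : False := by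
  classical
  obtain ⟨f, f1, f2⟩ := hH.exists_col_erase hp
  have hm : ∀ x ∈ H, G.Adj p x → x ∈ H \ {p} := fun x hx hpx => ⟨hx, hpx.ne'⟩
  set I : Finset ℕ := (Finset.range k).filter (fun i => ∃ x ∈ X, f x = i) with hIdef
  have hyI : ∀ y ∈ H, G.Adj p y → y ∉ X → f y ∉ I := by
    intro y hy hpy hyX hfy
    obtain ⟨x, hx, he⟩ := (Finset.mem_filter.1 hfy).2
    exact f2 x (hm x (hX x hx).1 (hX x hx).2) y (hm y hy hpy) (ha x hx y hy hpy hyX) he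
  have hxI : ∀ x ∈ X, f x ∈ I := fun x hx =>
    Finset.mem_filter.2 ⟨Finset.mem_range.2 (f1 x (hm x (hX x hx).1 (hX x hx).2)), x, hx, rfl⟩
  obtain ⟨t₁, a₁, b₁, c₁⟩ := hH.exists_clique_of_col hp f1 f2 I (Finset.filter_subset _ _)
    (f1 y₀ (hm y₀ hy₀ hpy₀)) (hyI y₀ hy₀ hpy₀ hy₀X)
  obtain ⟨t₂, a₂, b₂, c₂⟩ := hH.exists_clique_of_col hp f1 f2 (Finset.range k \ I)
    Finset.sdiff_subset (f1 x₀ (hm x₀ (hX x₀ hx₀).1 (hX x₀ hx₀).2))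
    (fun h => (Finset.mem_sdiff.1 h).2 (hxI x₀ hx₀))
  have hcard := Finset.card_sdiff_add_card_eq_card
    (show I ⊆ Finset.range k from Finset.filter_subset _ _)
  rw [Finset.card_range] at hcard
  refine hH.two_cliques hp (fun x hx => ⟨(a₁ x hx).1, (a₁ x hx).2.1⟩)
    (fun x hx => ⟨(a₂ x hx).1, (a₂ x hx).2.1⟩) b₁ b₂ ?_ (by omega)
  intro x hx y hy
  have hxX : x ∈ X := by
    by_contra hh
    exact hyI x (a₁ x hx).1 (a₁ x hx).2.1 hh (a₁ x hx).2.2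
  have hyX : y ∉ X := fun hh => (Finset.mem_sdiff.1 (a₂ y hy).2.2).2 (hxI y hh)
  exact ha x hxX y (a₂ y hy).1 (a₂ y hy).2.1 hyX

/-- A minimally imperfect graph has no homogeneous set. -/
lemma no_homog (hH : MinImp G H k) {X : Set V} (hX : Homog G H X) : False := by
  classical
  obtain ⟨hXH, ⟨p, hpX, x₁, hx₁, hne⟩, ⟨z, hz, hzX⟩, hhom⟩ := hX
  have hp := hXH hpX
  obtain ⟨y₀, hy₀, hy₀X, hpy₀⟩ : ∃ y ∈ H, y ∉ X ∧ G.Adj p y := by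
    by_contra hno
    push Not at hno
    have := hH.connected hXH ⟨p, hpX⟩ (fun x hx y hy hyX hxy =>
      hno y hy hyX (hhom y hy hyX x hx p hpX hxy.symm).symm)
    exact hzX (this ▸ hz)
  obtain ⟨f, f1, f2⟩ := hH.exists_col_erase hp
  have hm : ∀ x ∈ H, G.Adj p x → x ∈ H \ {p} := fun x hx hpx => ⟨hx, hpx.ne'⟩
  set I : Finset ℕ := (Finset.range k).filter (fun i => ∃ x ∈ X, x ≠ p ∧ f x = i) with hIdef
  have hyI : ∀ y ∈ H, G.Adj p y → y ∉ X → f y ∉ I := by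
    intro y hy hpy hyX hfy
    obtain ⟨x, hx, hxp, he⟩ := (Finset.mem_filter.1 hfy).2
    exact f2 x ⟨hXH hx, hxp⟩ y (hm y hy hpy) (hhom y hy hyX p hpX x hx hpy.symm).symm he
  have hxI : ∀ x ∈ X, x ≠ p → f x ∈ I := fun x hx hxp =>
    Finset.mem_filter.2 ⟨Finset.mem_range.2 (f1 x ⟨hXH hx, hxp⟩), x, hx, hxp, rfl⟩
  obtain ⟨t₁, a₁, b₁, c₁⟩ := hH.exists_clique_of_col hp f1 f2 I (Finset.filter_subset _ _)
    (f1 y₀ (hm y₀ hy₀ hpy₀)) (hyI y₀ hy₀ hpy₀ hy₀X)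
  obtain ⟨t₂, a₂, b₂, c₂⟩ := hH.exists_clique_of_col hp f1 f2 (Finset.range k \ I)
    Finset.sdiff_subset (f1 x₁ ⟨hXH hx₁, hne.symm⟩)
    (fun h => (Finset.mem_sdiff.1 h).2 (hxI x₁ hx₁ hne.symm))
  have hcard := Finset.card_sdiff_add_card_eq_card
    (show I ⊆ Finset.range k from Finset.filter_subset _ _)
  rw [Finset.card_range] at hcard
  refine hH.two_cliques hp (fun x hx => ⟨(a₁ x hx).1, (a₁ x hx).2.1⟩)
    (fun x hx => ⟨(a₂ x hx).1, (a₂ x hx).2.1⟩) b₁ b₂ ?_ (by omega)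
  intro x hx y hy
  have hxX : x ∈ X := by
    by_contra hh
    exact hyI x (a₁ x hx).1 (a₁ x hx).2.1 hh (a₁ x hx).2.2
  have hyX : y ∉ X := fun hh =>
    (Finset.mem_sdiff.1 (a₂ y hy).2.2).2 (hxI y hh (a₂ y hy).2.1.ne')
  exact (hhom y (a₂ y hy).1 hyX p hpX x hxX (a₂ y hy).2.1.symm).symm

end MinImp

/-! ### Attachments to a minimally imperfect graph in a bull-free graph -/

namespace MinImp

variable {G : SimpleGraph V} {H : Set V} {k : ℕ}

/-- If `u` has a neighbour `v` anticomplete to `H` and sees an edge of `H`, then `u` is complete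
to `H`. The vertices of `N(u) ∩ H` that are not isolated in it have, by bull-freeness and
`no_antistar`, no neighbour in `H \ N(u)`, so they form a component of `H`. -/
lemma complete_of_edge (hb : NoBull G) (hH : MinImp G H k) {u v : V} (huv : G.Adj u v)
    (hv : ∀ x ∈ H, ¬ G.Adj v x) {p₀ q₀ : V} (hp₀ : p₀ ∈ H) (hq₀ : q₀ ∈ H) (hup₀ : G.Adj u p₀)
    (huq₀ : G.Adj u q₀) (hpq₀ : G.Adj p₀ q₀) : ∀ x ∈ H, G.Adj u x := by
  have hS : {p | p ∈ H ∧ G.Adj u p ∧ ∃ q ∈ H, G.Adj u q ∧ G.Adj p q} = H := by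
    refine hH.connected (X := {p | p ∈ H ∧ G.Adj u p ∧ ∃ q ∈ H, G.Adj u q ∧ G.Adj p q})
      (fun p hp => hp.1) ⟨p₀, hp₀, hup₀, q₀, hq₀, huq₀, hpq₀⟩ ?_
    rintro p ⟨hp, hup, q, hq, huq, hpq⟩ y hy hyS hpy
    have huy : ¬ G.Adj u y := fun huy => hyS ⟨hy, huy, p, hp, hup, hpy.symm⟩
    refine hH.no_antistar hp (X := {x | x ∈ H ∧ G.Adj p x ∧ G.Adj u x})
      (fun x hx => ⟨hx.1, hx.2.1⟩) ⟨hq, hpq, huq⟩ hy hpy (fun h => huy h.2.2) ?_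
    rintro x ⟨hx, hpx, hux⟩ z hz hpz hzX
    have huz : ¬ G.Adj u z := fun h => hzX ⟨hz, hpz, h⟩
    by_contra hxz
    exact hb u p x v z hup hux hpx huv hpz huz (fun h => hv p hp h.symm)
      (fun h => hv x hx h.symm) hxz (hv z hz)
  intro x hx
  rw [← hS] at hx
  exact hx.2.1

/-- If `u` is a centre and `z` an anticentre of `H`, then a vertex adjacent to `z` and not to `u`
is not mixed on `H`: its neighbours in `H` are stable, and bull-freeness makes nonadjacent
non-neighbours twins with respect to them, which yields a `k`-colouring. -/
lemma not_mixed (hb : NoBull G) (hH : MinImp G H k) {u z w : V} (hu : ∀ x ∈ H, G.Adj u x)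
    (hz : ∀ x ∈ H, ¬ G.Adj z x) (hwu : ¬ G.Adj w u) (hwz : G.Adj w z) {a₀ b₀ : V}
    (ha₀ : a₀ ∈ H) (hb₀ : b₀ ∈ H) (hwa₀ : G.Adj w a₀) (hwb₀ : ¬ G.Adj w b₀) : False := by
  classical
  have hst : ∀ a ∈ H, G.Adj w a → ∀ a' ∈ H, G.Adj w a' → ¬ G.Adj a a' :=
    fun a ha hwa a' ha' hwa' haa' =>
      hwb₀ (hH.complete_of_edge hb hwz hz ha ha' hwa hwa' haa' b₀ hb₀)
  have htw : ∀ b ∈ H, ¬ G.Adj w b → ∀ b' ∈ H, ¬ G.Adj w b' → ¬ G.Adj b b' →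
      ∀ a ∈ H, G.Adj w a → G.Adj a b → G.Adj a b' := by
    intro b hbH hwb b' hb' hwb' hbb' a ha hwa hab
    by_contra hab'
    exact hb u a b b' w (hu a ha) (hu b hbH) hab (hu b' hb') hwa.symm (fun h => hwu h.symm)
      hab' hbb' (fun h => hwb h.symm) (fun h => hwb' h.symm)
  by_cases hall : ∃ p ∈ H, G.Adj w p ∧ ∀ b ∈ H, ¬ G.Adj w b → G.Adj p b
  · obtain ⟨p, hp, hwp, hpB⟩ := hall
    have hk : 1 ≤ k := by simpa using hH.bound {p} (by simpa using hp) (by simp)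
    refine hH.partition (A := {a | a ∈ H ∧ G.Adj w a}) (B := {b | b ∈ H ∧ ¬ G.Adj w b})
      (c := 1) (m := k - 1) ?_ (fun x hx => hx.1) ?_ ?_ ?_ (by omega)
    · intro x hx
      by_cases h : G.Adj w x
      · exact Or.inl ⟨hx, h⟩
      · exact Or.inr ⟨hx, h⟩
    · intro h
      rw [← h] at ha₀
      exact ha₀.2 hwa₀
    · exact ⟨fun _ => 0, fun _ _ => one_pos, fun x hx y hy hxy =>
        absurd hxy (hst x hx.1 hx.2 y hy.1 hy.2)⟩
    · intro t ht hcl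
      have hpt : p ∉ t := fun h => (ht h).2 hwp
      have := hH.bound (insert p t) (by
        intro x hx
        rcases Finset.mem_insert.1 hx with rfl | hx
        · exact hp
        · exact (ht hx).1) (by
        rw [Finset.coe_insert]
        exact hcl.insert fun x hx _ => hpB x (ht hx).1 (ht hx).2)
      rw [Finset.card_insert_of_notMem hpt] at this
      omega
  · push Not at hall
    choose! g g1 g2 g3 using hall
    obtain ⟨f, f1, f2⟩ := hH.exists_col_erase ha₀
    have hm : ∀ x ∈ H, ¬ G.Adj w x → x ∈ H \ {a₀} := by
      intro x hx hwx
      refine ⟨hx, ?_⟩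
      rintro rfl
      exact hwx hwa₀
    -- a neighbour `a` of `w` takes the colour of a vertex `g a` of `H \ N(w)` not adjacent to it
    have key : ∀ a ∈ H, G.Adj w a → ∀ y ∈ H, ¬ G.Adj w y → G.Adj a y → f (g a) ≠ f y := by
      intro a ha hwa y hy hwy hay
      have h1 := g1 a ha hwa
      have h2 := g2 a ha hwa
      refine f2 _ (hm _ h1 h2) y (hm y hy hwy) ?_
      by_contra hgy
      exact g3 a ha hwa (htw y hy hwy _ h1 h2 (fun h => hgy h.symm) a ha hwa hay)
    apply hH.not_col
    refine ⟨fun x => if G.Adj w x then f (g x) else f x, ?_, ?_⟩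
    · intro x hx
      by_cases h : G.Adj w x
      · simpa [h] using f1 _ (hm _ (g1 x hx h) (g2 x hx h))
      · simpa [h] using f1 _ (hm x hx h)
    · intro x hx y hy hxy
      by_cases h : G.Adj w x <;> by_cases h' : G.Adj w y <;> simp only [h, h', if_true, if_false]
      · exact absurd hxy (hst x hx h y hy h')
      · exact key x hx h y hy h' hxy
      · exact (key y hy h' x hx h hxy.symm).symm
      · exact f2 x (hm x hx h) y (hm y hy h') hxy

/-- A set with a centre `u` and an anticentre `z` that is minimally imperfect lies in a homogeneous
set. Either every vertex mixed on `H` is complete to all centres, or every such vertex is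
anticomplete to all anticentres. In the first case the homogeneous set consists of `H`, the mixed
vertices and the anticentres reachable from them; in the second, of `H`, the mixed vertices and the
centres reachable from them in the complement. -/
lemma exists_homog [Finite V] (hb : NoBull G) (hH : MinImp G H k) {s : Set V} (hHs : H ⊆ s)
    {u₀ z₀ : V} (hu₀s : u₀ ∈ s) (hz₀s : z₀ ∈ s) (hu₀ : ∀ x ∈ H, G.Adj u₀ x)
    (hz₀H : z₀ ∉ H) (hz₀ : ∀ x ∈ H, ¬ G.Adj z₀ x) : ∃ X, Homog G s X := by
  classical
  obtain ⟨h₀, hh₀⟩ := hH.nonempty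
  obtain ⟨h₁, hh₁, hadj⟩ := hH.exists_adj hh₀
  set U : Set V := {u | u ∈ s ∧ ∀ x ∈ H, G.Adj u x} with hU
  set Z : Set V := {z | z ∈ s ∧ z ∉ H ∧ ∀ x ∈ H, ¬ G.Adj z x} with hZ
  set M : Set V := {w | w ∈ s ∧ w ∉ H ∧ (∃ a ∈ H, G.Adj w a) ∧ ∃ b ∈ H, ¬ G.Adj w b} with hM
  have hUH : ∀ u ∈ U, u ∉ H := fun u hu h => (hu.2 u h).ne rfl
  have hnm : ∀ w ∈ M, ∀ u ∈ U, ∀ z ∈ Z, ¬ G.Adj w u → ¬ G.Adj w z := by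
    rintro w ⟨-, -, ⟨a, ha, hwa⟩, b, hbH, hwb⟩ u hu z hz hwu hwz
    exact hH.not_mixed hb hu.2 hz.2.2 hwu hwz ha hbH hwa hwb
  have hcov : ∀ y ∈ s, y ∈ H ∨ y ∈ U ∨ y ∈ Z ∨ y ∈ M := by
    intro y hy
    by_cases h1 : y ∈ H
    · exact Or.inl h1
    by_cases h2 : ∃ a ∈ H, G.Adj y a
    · by_cases h3 : ∃ b ∈ H, ¬ G.Adj y b
      · exact Or.inr (Or.inr (Or.inr ⟨hy, h1, h2, h3⟩))
      · push Not at h3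
        exact Or.inr (Or.inl ⟨hy, h3⟩)
    · push Not at h2
      exact Or.inr (Or.inr (Or.inl ⟨hy, h1, h2⟩))
  -- a mixed vertex with a neighbour `z ∈ Z` forces `z` to be complete to `U`
  have hF : ∀ w ∈ M, ∀ z ∈ Z, G.Adj w z → ∀ u ∈ U, G.Adj z u := by
    intro w hw z hz hwz u hu
    have hwu : G.Adj w u := by
      by_contra h
      exact hnm w hw u hu z hz h hwz
    obtain ⟨-, -, ⟨a₀, ha₀, hwa₀⟩, b₀, hb₀, hwb₀⟩ := hw
    by_contra hzu
    obtain ⟨a, ha, hwa, b, hbH, hwb, hab⟩ :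
        ∃ a ∈ H, G.Adj w a ∧ ∃ b ∈ H, ¬ G.Adj w b ∧ ¬ G.Adj a b := by
      by_contra hno
      push Not at hno
      have := hH.anticonnected (X := {a | a ∈ H ∧ G.Adj w a}) (fun x hx => hx.1)
        ⟨a₀, ha₀, hwa₀⟩ (fun x hx y hy hyX => hno x hx.1 hx.2 y hy (fun h => hyX ⟨hy, h⟩))
      rw [← this] at hb₀
      exact hwb₀ hb₀.2
    exact hb w u a z b hwu hwa (hu.2 a ha) hwz (hu.2 b hbH) hwb (fun h => hzu h.symm)
      (fun h => hz.2.2 a ha h.symm) hab (hz.2.2 b hbH)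
  -- dually, a mixed vertex with a non-neighbour `u ∈ U` forces `u` to be anticomplete to `Z`
  have hF' : ∀ w ∈ M, ∀ u ∈ U, ¬ G.Adj w u → ∀ z ∈ Z, ¬ G.Adj u z := by
    intro w hw u hu hwu z hz huz
    have hwz : ¬ G.Adj w z := hnm w hw u hu z hz hwu
    obtain ⟨-, -, ⟨a₀, ha₀, hwa₀⟩, b₀, hb₀, hwb₀⟩ := hw
    obtain ⟨a, ha, hwa, b, hbH, hwb, hab⟩ :
        ∃ a ∈ H, G.Adj w a ∧ ∃ b ∈ H, ¬ G.Adj w b ∧ G.Adj a b := by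
      by_contra hno
      push Not at hno
      have := hH.connected (X := {a | a ∈ H ∧ G.Adj w a}) (fun x hx => hx.1)
        ⟨a₀, ha₀, hwa₀⟩ (fun x hx y hy hyX => hno x hx.1 hx.2 y hy (fun h => hyX ⟨hy, h⟩))
      rw [← this] at hb₀
      exact hwb₀ hb₀.2
    exact hb u a b z w (hu.2 a ha) (hu.2 b hbH) hab huz hwa.symm (fun h => hwu h.symm)
      (fun h => hz.2.2 a ha h.symm) (fun h => hz.2.2 b hbH h.symm) (fun h => hwb h.symm)
      (fun h => hwz h.symm)
  by_cases hcase : ∀ w ∈ M, ∀ u ∈ U, G.Adj w u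
  · -- `R y` is the set of members of `Z` reachable from a mixed vertex
    let step : V → V → Prop := fun x z => G.Adj x z ∧ z ∈ Z
    let R : V → Prop := fun y => ∃ w ∈ M, Relation.ReflTransGen step w y
    have hR : ∀ y, R y → (y ∈ M ∨ y ∈ Z) ∧ (∀ u ∈ U, G.Adj y u) ∧
        ∀ z ∈ Z, G.Adj y z → ∀ u ∈ U, G.Adj z u := by
      rintro y ⟨w, hw, hwy⟩
      induction hwy with
      | refl => exact ⟨Or.inl hw, hcase w hw, hF w hw⟩
      | @tail y z _ hyz ih =>
        obtain ⟨hyM, hyU, hyZ⟩ := ih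
        refine ⟨Or.inr hyz.2, hyZ z hyz.2 hyz.1, ?_⟩
        intro z' hz' hzz' u hu
        by_cases hyz' : G.Adj y z'
        · exact hyZ z' hz' hyz' u hu
        obtain ⟨b, hbH, hyb⟩ : ∃ b ∈ H, ¬ G.Adj y b := by
          rcases hyM with h | h
          · exact h.2.2.2
          · exact ⟨h₀, hh₀, h.2.2 h₀ hh₀⟩
        by_contra hzu
        exact hb z u y z' b (hyZ z hyz.2 hyz.1 u hu) hyz.1.symm (hyU u hu).symm hzz'
          (hu.2 b hbH) (hyz.2.2.2 b hbH) (fun h => hzu h.symm) hyz' hyb (hz'.2.2 b hbH)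
    refine ⟨H ∪ {y | R y}, ?_, ⟨h₀, Or.inl hh₀, h₁, Or.inl hh₁, hadj.ne⟩, ⟨u₀, hu₀s, ?_⟩, ?_⟩
    · rintro y (hy | hy)
      · exact hHs hy
      · rcases (hR y hy).1 with h | h
        · exact h.1
        · exact h.1
    · rintro (hy | hy)
      · exact hUH u₀ ⟨hu₀s, hu₀⟩ hy
      · exact ((hR u₀ hy).2.1 u₀ ⟨hu₀s, hu₀⟩).ne rfl
    · intro y hy hyX x hx x' hx' hyx
      have hyR : ¬ R y := fun h => hyX (Or.inr h)
      rcases hcov y hy with h | h | h | h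
      · exact absurd (Or.inl h) hyX
      · rcases hx' with hx' | hx'
        · exact h.2 x' hx'
        · exact ((hR x' hx').2.1 y h).symm
      · exfalso
        rcases hx with hx | ⟨w, hw, hwx⟩
        · exact h.2.2 x hx hyx
        · exact hyR ⟨w, hw, hwx.tail ⟨hyx.symm, h⟩⟩
      · exact absurd ⟨y, h, .refl⟩ hyR
  · push Not at hcase
    obtain ⟨w₁, hw₁, u₁, hu₁, hwu₁⟩ := hcase
    have hcase' : ∀ w ∈ M, ∀ z ∈ Z, ¬ G.Adj w z := fun w hw z hz hwz =>
      hF' w₁ hw₁ u₁ hu₁ hwu₁ z hz (hF w hw z hz hwz u₁ hu₁).symm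
    let step : V → V → Prop := fun x u => ¬ G.Adj x u ∧ u ∈ U
    let R : V → Prop := fun y => ∃ w ∈ M, Relation.ReflTransGen step w y
    have hR : ∀ y, R y → (y ∈ M ∨ y ∈ U) ∧ (∀ z ∈ Z, ¬ G.Adj y z) ∧
        ∀ u ∈ U, ¬ G.Adj y u → ∀ z ∈ Z, ¬ G.Adj u z := by
      rintro y ⟨w, hw, hwy⟩
      induction hwy with
      | refl => exact ⟨Or.inl hw, hcase' w hw, hF' w hw⟩
      | @tail y u _ hyu ih =>
        obtain ⟨hyM, hyZ, hyU⟩ := ih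
        refine ⟨Or.inr hyu.2, hyU u hyu.2 hyu.1, ?_⟩
        intro u' hu' huu' z hz hu'z
        by_cases hyu' : G.Adj y u'
        · obtain ⟨a, ha, hya⟩ : ∃ a ∈ H, G.Adj y a := by
            rcases hyM with h | h
            · exact h.2.2.1
            · exact ⟨h₀, hh₀, h.2 h₀ hh₀⟩
          exact hb u' a y z u (hu'.2 a ha) hyu'.symm hya.symm hu'z (hyu.2.2 a ha).symm
            (fun h => huu' h.symm) (fun h => hz.2.2 a ha h.symm) (hyZ z hz) hyu.1
            (fun h => hyU u hyu.2 hyu.1 z hz h.symm)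
        · exact hyU u' hu' hyu' z hz hu'z
    refine ⟨H ∪ {y | R y}, ?_, ⟨h₀, Or.inl hh₀, h₁, Or.inl hh₁, hadj.ne⟩, ⟨z₀, hz₀s, ?_⟩, ?_⟩
    · rintro y (hy | hy)
      · exact hHs hy
      · rcases (hR y hy).1 with h | h
        · exact h.1
        · exact h.1
    · rintro (hy | hy)
      · exact hz₀H hy
      · rcases (hR z₀ hy).1 with h | h
        · obtain ⟨a, ha, hza⟩ := h.2.2.1
          exact hz₀ a ha hza
        · exact hz₀ h₀ hh₀ (h.2 h₀ hh₀)
    · intro y hy hyX x hx x' hx' hyx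
      have hyR : ¬ R y := fun h => hyX (Or.inr h)
      rcases hcov y hy with h | h | h | h
      · exact absurd (Or.inl h) hyX
      · rcases hx' with hx' | ⟨w, hw, hwx⟩
        · exact h.2 x' hx'
        · by_contra hyx'
          exact hyR ⟨w, hw, hwx.tail ⟨fun hh => hyx' hh.symm, h⟩⟩
      · exfalso
        rcases hx with hx | hx
        · exact h.2.2 x hx hyx
        · exact (hR x hx).2.1 y h hyx.symm
      · exact absurd ⟨y, h, .refl⟩ hyR

/-- A vertex `u` cannot attach to a minimally imperfect graph of clique number at least three in a
nonempty stable set. For an attachment `a`, pick a vertex `p` that is not isolated in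
`N(a) ∩ H` and has as few neighbours as possible in `N(u) ∩ H`; bull-freeness then makes
`N(a) ∩ N(p)` complete to the rest of `N(p)`, against `no_antistar`. -/
lemma not_stable_attachment [Finite V] (hb : NoBull G) (hH : MinImp G H k) (hk : 3 ≤ k) {u a : V}
    (ha : a ∈ H) (hua : G.Adj u a)
    (hst : ∀ x ∈ H, G.Adj u x → ∀ y ∈ H, G.Adj u y → ¬ G.Adj x y) : False := by
  classical
  obtain ⟨f, f1, f2⟩ := hH.exists_col_erase ha
  obtain ⟨t, t1, t2, t3⟩ := hH.exists_clique_of_col ha f1 f2 (Finset.range 2)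
    (Finset.range_subset_range.2 (by omega)) (c := 2) (by omega) (by simp)
  rw [Finset.card_range] at t3
  obtain ⟨x, hx, y, hy, hxy⟩ := Finset.one_lt_card.1 t3
  have hne : {p | p ∈ H ∧ G.Adj a p ∧ ∃ q ∈ H, G.Adj a q ∧ G.Adj p q}.Nonempty :=
    ⟨x, (t1 x hx).1, (t1 x hx).2.1, y, (t1 y hy).1, (t1 y hy).2.1, t2 hx hy hxy⟩
  obtain ⟨p, ⟨hp, hap, q, hq, haq, hpq⟩, hmin⟩ := Set.exists_min_image _
    (fun p => {y | y ∈ H ∧ G.Adj u y ∧ G.Adj p y}.ncard) (Set.toFinite _) hne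
  have hnu : ∀ y ∈ H, G.Adj a y → ¬ G.Adj u y := fun y hy hay huy => hst a ha hua y hy huy hay
  refine hH.no_antistar hp (X := {x | x ∈ H ∧ G.Adj p x ∧ G.Adj a x})
    (fun x hx => ⟨hx.1, hx.2.1⟩) ⟨hq, hpq, haq⟩ ha hap.symm (fun h => h.2.2.ne rfl) ?_
  rintro x ⟨hx, hpx, hax⟩ y hy hpy hyX
  by_contra hxy
  have hya : y ≠ a := by rintro rfl; exact hxy hax.symm
  have hay : ¬ G.Adj a y := fun h => hyX ⟨hy, hpy, h⟩
  by_cases huy : G.Adj u y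
  · -- by the choice of `p`, some neighbour of `u` is adjacent to `x` and not to `p`
    obtain ⟨y', ⟨hy', huy', hxy'⟩, hpy'⟩ : ∃ y' ∈ {y | y ∈ H ∧ G.Adj u y ∧ G.Adj x y},
        y' ∉ {y | y ∈ H ∧ G.Adj u y ∧ G.Adj p y} := by
      by_contra hno
      push Not at hno
      have hlt := Set.ncard_lt_ncard (s := {y | y ∈ H ∧ G.Adj u y ∧ G.Adj x y})
        (t := {y | y ∈ H ∧ G.Adj u y ∧ G.Adj p y})
        ⟨hno, fun h => hxy (h ⟨hy, huy, hpy⟩).2.2⟩ (Set.toFinite _)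
      exact absurd (hmin x ⟨hx, hax, p, hp, hap, hpx.symm⟩) (not_le.2 hlt)
    have hpy'' : ¬ G.Adj p y' := fun h => hpy' ⟨hy', huy', h⟩
    exact hb p x a y y' hpx hap.symm hax.symm hpy hxy' hpy'' hxy hay
      (hst a ha hua y' hy' huy') (hst y hy huy y' hy' huy')
  · exact hb a p x u y hap hax hpx hua.symm hpy hay (fun h => hnu p hp hap h.symm)
      (fun h => hnu x hx hax h.symm) hxy huy

end MinImp

/-! ### Odd holes and odd torches -/

lemma cycleGraph_adj_of_lt {n : ℕ} {i j : Fin n} (h : i < j) :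
    (cycleGraph n).Adj i j ↔ (j : ℕ) = i + 1 ∨ ((i : ℕ) = 0 ∧ (j : ℕ) + 1 = n) := by
  have h1 : ((j - i : Fin n) : ℕ) = j - i := Fin.sub_val_of_le h.le
  have h2 : ((i - j : Fin n) : ℕ) = n + i - j := Fin.coe_sub_iff_lt.2 h
  have h3 : (i : ℕ) < j := h
  have h4 := j.2
  rw [cycleGraph_adj', h1, h2]
  omega

/-- An odd hole together with an edge `u v`, where `u` sees a nonempty stable part of the hole and
`v` nothing of it, is an odd torch. -/
lemma not_oddTorchFree {G : SimpleGraph V} {m : ℕ} (hm : 5 ≤ m) (hodd : Odd m) (c : ℕ → V)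
    (hinj : ∀ i j, i < j → j < m → c i ≠ c j)
    (hadj : ∀ i j, i < j → j < m → (G.Adj (c i) (c j) ↔ j = i + 1 ∨ (i = 0 ∧ j + 1 = m)))
    {u v : V} (huv : G.Adj u v) (hu : ∀ i < m, u ≠ c i) (hv : ∀ i < m, v ≠ c i)
    (hvc : ∀ i < m, ¬ G.Adj v (c i)) (hne : ∃ i < m, G.Adj u (c i))
    (hst : ∀ i < m, ∀ j < m, G.Adj u (c i) → G.Adj u (c j) → ¬ G.Adj (c i) (c j)) :
    ¬ OddTorchFree G := by
  intro hfree
  have hc : ∀ i j : Fin m, G.Adj (c i) (c j) ↔ (cycleGraph m).Adj i j := by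
    intro i j
    rcases lt_trichotomy i j with h | h | h
    · rw [hadj i j h j.2, cycleGraph_adj_of_lt h]
    · simp [h]
    · rw [G.adj_comm, (cycleGraph m).adj_comm, hadj j i h i.2, cycleGraph_adj_of_lt h]
  have hci : ∀ i j : Fin m, c i = c j → i = j := by
    intro i j hij
    rcases lt_trichotomy i j with h | h | h
    · exact absurd hij (hinj i j h j.2)
    · exact h
    · exact absurd hij.symm (hinj j i h i.2)
  refine hfree m {i | G.Adj u (c i)} hm hodd ?_ ?_ ?_
  · obtain ⟨i, hi, hui⟩ := hne
    exact ⟨⟨i, hi⟩, hui⟩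
  · intro i hi j hj hij
    exact hst i i.2 j j.2 hi hj ((hc i j).2 hij)
  · obtain ⟨e, he, he0, he1⟩ : ∃ e : Fin m ⊕ Fin 2 → V,
        (∀ i : Fin m, e (Sum.inl i) = c i) ∧ e (Sum.inr 0) = u ∧ e (Sum.inr 1) = v :=
      ⟨Sum.elim (fun i => c i) ![u, v], fun _ => rfl, rfl, rfl⟩
    refine ⟨⟨e, ?_⟩, fun x y => ?_⟩
    · rintro (i | i) (j | j) h
      · rw [he, he] at h
        exact congrArg _ (hci i j h)
      · fin_cases j
        · exact absurd ((he i).symm.trans (h.trans he0)).symm (hu i i.2)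
        · exact absurd ((he i).symm.trans (h.trans he1)).symm (hv i i.2)
      · fin_cases i
        · exact absurd (he0.symm.trans (h.trans (he j))) (hu j j.2)
        · exact absurd (he1.symm.trans (h.trans (he j))) (hv j j.2)
      · fin_cases i <;> fin_cases j
        · rfl
        · exact absurd (he0.symm.trans (h.trans he1)) huv.ne
        · exact absurd (he1.symm.trans (h.trans he0)) huv.ne'
        · rfl
    · change G.Adj (e x) (e y) ↔ _
      rcases x with i | i <;> rcases y with j | j
      · rw [he, he, hc]
        simp only [oddTorch, fromRel_adj]
        constructor
        · exact fun h => ⟨fun e => h.ne (Sum.inl_injective e), Or.inl h⟩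
        · rintro ⟨-, h | h⟩
          · exact h
          · exact h.symm
      · fin_cases j
        · simp [oddTorch, he, he0, G.adj_comm]
        · have := hvc i i.2
          rw [G.adj_comm] at this
          simp [oddTorch, he, he1, this]
      · fin_cases i
        · simp [oddTorch, he, he0]
        · have := hvc j j.2
          simp [oddTorch, he, he1, this]
      · fin_cases i <;> fin_cases j <;> simp [oddTorch, he0, he1, huv, huv.symm]

namespace MinImp

variable {G : SimpleGraph V} {H : Set V} {k : ℕ}

/-- In a minimally imperfect graph with clique number at most two, every vertex `a` closes an odd
hole: a shortest path of `H \ {a}` joining differently coloured neighbours of `a` exists because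
otherwise the components of `H \ {a}` could be recoloured, and together with `a` it is an induced
cycle. -/
lemma exists_odd_hole (hH : MinImp G H k) (hk : k ≤ 2) {a : V} (ha : a ∈ H) :
    ∃ (m : ℕ) (c : ℕ → V), 5 ≤ m ∧ Odd m ∧ (∀ i < m, c i ∈ H) ∧ (∃ i < m, c i = a) ∧
      (∀ i j, i < j → j < m → c i ≠ c j) ∧
      ∀ i j, i < j → j < m → (G.Adj (c i) (c j) ↔ j = i + 1 ∨ (i = 0 ∧ j + 1 = m)) := by
  classical
  have hH2 : MinImp G H 2 := by
    obtain ⟨q, hq, haq⟩ := hH.exists_adj ha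
    have := hH.bound {a, q} (by
      intro x hx
      simp only [Finset.coe_insert, Finset.coe_singleton, Set.mem_insert_iff,
        Set.mem_singleton_iff] at hx
      rcases hx with rfl | rfl <;> assumption) (by
      simpa [isClique_insert] using fun _ => haq)
    rw [Finset.card_pair haq.ne] at this
    obtain rfl : k = 2 := le_antisymm hk this
    exact hH
  obtain ⟨f, f1, f2⟩ := hH2.exists_col_erase ha
  let Path : ℕ → (ℕ → V) → Prop := fun n p =>
    (∀ i ≤ n, p i ∈ H \ {a}) ∧ (∀ i < n, G.Adj (p i) (p (i + 1))) ∧ G.Adj a (p 0)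
  let Good : ℕ → (ℕ → V) → Prop := fun n p =>
    Path n p ∧ G.Adj a (p n) ∧ f (p 0) ≠ f (p n)
  have hex : ∃ n p, Good n p := by
    by_contra hno
    push Not at hno
    -- the components of `H \ {a}` containing a neighbour of `a` of colour `0` swap their colours
    let R : V → Prop := fun z => ∃ n p, Path n p ∧ f (p 0) = 0 ∧ p n = z
    have hR : ∀ x y, R x → y ∈ H \ {a} → G.Adj x y → R y := by
      rintro x y ⟨n, p, ⟨h1, h2, h3⟩, h4, rfl⟩ hy hxy
      refine ⟨n + 1, fun t => if t ≤ n then p t else y, ⟨?_, ?_, by simpa using h3⟩,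
        by simpa using h4, by simp⟩
      · intro i _
        by_cases hi : i ≤ n
        · simpa [hi] using h1 i hi
        · simpa [hi] using hy
      · intro i hi
        by_cases hi' : i + 1 ≤ n
        · simpa [hi', Nat.le_of_succ_le hi'] using h2 i hi'
        · obtain rfl : i = n := by omega
          simpa using hxy
    have ha0 : ∀ y ∈ H \ {a}, G.Adj a y → (if R y then 1 - f y else f y) = 1 := by
      intro y hy hay
      by_cases hRy : R y
      · obtain ⟨n, p, hp, h0, rfl⟩ := hRy
        have : f (p n) = 0 := by
          by_contra hf
          exact hno n p ⟨hp, hay, by omega⟩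
        rw [if_pos ⟨n, p, hp, h0, rfl⟩, this]
      · rw [if_neg hRy]
        have h1 := f1 y hy
        have h2 : f y ≠ 0 := fun h =>
          hRy ⟨0, fun _ => y, ⟨fun _ _ => hy, fun i hi => absurd hi (by omega), hay⟩, h, rfl⟩
        omega
    apply hH2.not_col
    refine ⟨fun x => if x = a then 0 else if R x then 1 - f x else f x, ?_, ?_⟩
    · intro x hx
      by_cases hxa : x = a
      · simp [hxa]
      · have := f1 x ⟨hx, hxa⟩
        simp only [hxa, if_false]
        split_ifs <;> omega
    · intro x hx y hy hxy
      by_cases hxa : x = a <;> by_cases hya : y = a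
      · exact absurd (hxa.trans hya.symm) hxy.ne
      · subst hxa
        simp only [if_true, hya, if_false, ha0 y ⟨hy, hya⟩ hxy]
        decide
      · subst hya
        simp only [if_true, hxa, if_false, ha0 x ⟨hx, hxa⟩ hxy.symm]
        decide
      · have h1 := f1 x ⟨hx, hxa⟩
        have h2 := f1 y ⟨hy, hya⟩
        have h3 := f2 x ⟨hx, hxa⟩ y ⟨hy, hya⟩ hxy
        have h4 : R x ↔ R y := ⟨fun h => hR x y h ⟨hy, hya⟩ hxy,
          fun h => hR y x h ⟨hx, hxa⟩ hxy.symm⟩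
        simp only [hxa, hya, if_false, h4]
        split_ifs <;> omega
  obtain ⟨p, ⟨p1, p2, p3⟩, p4, p5⟩ := Nat.find_spec hex
  have hmin : ∀ m < Nat.find hex, ∀ q, ¬ Good m q := by
    intro m hm q hq
    exact Nat.find_min hex hm ⟨q, hq⟩
  generalize Nat.find hex = n at *
  have hpar : ∀ i ≤ n, f (p i) = f (p 0) ↔ Even i := by
    intro i
    induction i with
    | zero => simp
    | succ i ih =>
      intro hi
      have h1 := ih (by omega)
      have h2 := f1 _ (p1 i (by omega))
      have h3 := f1 _ (p1 (i + 1) hi)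
      have h4 := f1 _ (p1 0 (by omega))
      have h5 := f2 _ (p1 i (by omega)) _ (p1 (i + 1) hi) (p2 i (by omega))
      rw [Nat.even_add_one, ← h1]
      omega
  have hnodd : Odd n := by
    rw [← Nat.not_even_iff_odd, ← hpar n le_rfl]
    exact fun h => p5 h.symm
  have hn1 : n ≠ 1 := by
    rintro rfl
    have h01 := p2 0 one_pos
    have := hH2.bound {a, p 0, p 1} (by
      intro x hx
      simp only [Finset.coe_insert, Finset.coe_singleton, Set.mem_insert_iff,
        Set.mem_singleton_iff] at hx
      rcases hx with rfl | rfl | rfl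
      · exact ha
      · exact (p1 0 (by omega)).1
      · exact (p1 1 le_rfl).1) (by
      rw [Finset.coe_insert, Finset.coe_insert, Finset.coe_singleton]
      simp [isClique_insert, p3, p4, h01])
    rw [Finset.card_eq_three.2 ⟨a, p 0, p 1, p3.ne, p4.ne, h01.ne, rfl⟩] at this
    omega
  -- replacing a segment of a shortest path by a shortcut would give a shorter one
  have hshort : ∀ i d, 0 < d → i + d ≤ n → (i + d < n → G.Adj (p i) (p (i + d + 1))) →
      (i + d = n → p i = p n) → False := by
    intro i d hd hid h1 h2
    have hend : (if n - d ≤ i then p (n - d) else p (n - d + d)) = p n := by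
      split_ifs with h
      · rw [← h2 (by omega)]
        congr 1
        omega
      · congr 1
        omega
    refine hmin (n - d) (by omega) (fun t => if t ≤ i then p t else p (t + d))
      ⟨⟨?_, ?_, by simpa using p3⟩, ?_, ?_⟩
    · intro t ht
      dsimp only
      split_ifs
      · exact p1 t (by omega)
      · exact p1 (t + d) (by omega)
    · intro t ht
      rcases lt_trichotomy t i with h | h | h
      · simpa [h.le, Nat.succ_le_of_lt h] using p2 t (by omega)
      · subst h
        have := h1 (by omega)
        simpa [show t + 1 + d = t + d + 1 by omega] using this
      · have := p2 (t + d) (by omega)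
        simpa [show ¬ t ≤ i by omega, show ¬ t + 1 ≤ i by omega,
          show t + 1 + d = t + d + 1 by omega] using this
    · simpa only [hend] using p4
    · simpa only [hend, Nat.zero_le, if_true] using p5
  have hchord : ∀ i j, i < j → j ≤ n → G.Adj (p i) (p j) → j = i + 1 := by
    intro i j hij hj hadj
    by_contra hne
    refine hshort i (j - i - 1) (by omega) (by omega) (fun _ => ?_) (fun h => by omega)
    rwa [show i + (j - i - 1) + 1 = j by omega]
  have hinj : ∀ i j, i < j → j ≤ n → p i ≠ p j := by
    intro i j hij hj he
    refine hshort i (j - i) (by omega) (by omega) (fun h => ?_) (fun h => ?_)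
    · rw [show i + (j - i) = j by omega, he]
      exact p2 j (by omega)
    · rw [he]
      congr 1
      omega
  have hinner : ∀ i, 0 < i → i < n → ¬ G.Adj a (p i) := by
    intro i h0 hi hai
    by_cases hf : f (p 0) = f (p i)
    · refine hmin (n - i) (by omega) (fun t => p (t + i)) ⟨⟨?_, ?_, ?_⟩, ?_, ?_⟩
      · exact fun t ht => p1 (t + i) (by omega)
      · intro t ht
        have := p2 (t + i) (by omega)
        rwa [show t + i + 1 = t + 1 + i by omega] at this
      · simpa using hai
      · simpa [hi.le] using p4
      · simpa [hi.le, ← hf] using p5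
    · exact hmin i hi p ⟨⟨fun t ht => p1 t (by omega), fun t ht => p2 t (by omega), p3⟩, hai, hf⟩
  obtain ⟨r, hr⟩ := hnodd
  refine ⟨n + 2, fun i => if i ≤ n then p i else a, by omega, ⟨r + 1, by omega⟩, ?_,
    ⟨n + 1, by omega, by simp⟩, ?_, ?_⟩
  · intro i _
    dsimp only
    split_ifs with h
    · exact (p1 i h).1
    · exact ha
  · intro i j hij hj
    by_cases h : j ≤ n
    · simpa [h, show i ≤ n by omega] using hinj i j hij h
    · simpa [h, show i ≤ n by omega] using (p1 i (by omega)).2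
  · intro i j hij hj
    by_cases h : j ≤ n
    · simp only [h, show i ≤ n by omega, if_true]
      constructor
      · exact fun hadj => Or.inl (hchord i j hij h hadj)
      · rintro (rfl | h')
        · exact p2 i (by omega)
        · omega
    · obtain rfl : j = n + 1 := by omega
      simp only [h, show i ≤ n by omega, if_true, if_false]
      constructor
      · intro hadj
        by_contra hno
        simp only [and_true] at hno
        exact hinner i (by omega) (by omega) hadj.symm
      · rintro (h' | ⟨rfl, -⟩)
        · obtain rfl : i = n := by omega
          exact p4.symm
        · exact p3.symm

/-- A stable attachment `u` of a minimally imperfect graph of clique number two, with a further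
neighbour `v` anticomplete to the graph, creates an odd torch. -/
lemma not_oddTorchFree_of_attachment (hH : MinImp G H k) (hk : k ≤ 2) {u v a : V} (ha : a ∈ H)
    (hua : G.Adj u a) (hst : ∀ x ∈ H, G.Adj u x → ∀ y ∈ H, G.Adj u y → ¬ G.Adj x y)
    (huv : G.Adj u v) (hv : ∀ x ∈ H, ¬ G.Adj v x) : ¬ OddTorchFree G := by
  obtain ⟨m, c, h5, hodd, hcH, ⟨i, hi, rfl⟩, hinj, hadj⟩ := hH.exists_odd_hole hk ha
  have huH : u ∉ H := fun h => hv u h huv.symm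
  have hvH : v ∉ H := fun h => by
    obtain ⟨q, hq, hvq⟩ := hH.exists_adj h
    exact hv q hq hvq
  refine not_oddTorchFree h5 hodd c hinj hadj huv ?_ ?_ (fun i hi => hv _ (hcH i hi))
    ⟨i, hi, hua⟩ (fun i hi j hj h h' => hst _ (hcH i hi) h _ (hcH j hj) h')
  · rintro i hi rfl
    exact huH (hcH i hi)
  · rintro i hi rfl
    exact hvH (hcH i hi)

end MinImp

/-! ### Homogeneous sets and the weighted partition -/

/-- Substituting a perfect graph for a vertex of a perfect graph gives a perfect graph: a minimally
imperfect `H` has no homogeneous set, so it lies inside `P₂` or meets `X` at most once. -/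
lemma perf_subst [Finite V] {G : SimpleGraph V} {s X P₁ P₂ : Set V} (hX : Homog G s X) {x₀ : V}
    (hx₀ : x₀ ∈ X) (h₁ : ∀ y ∈ P₁, (y ∈ s ∧ y ∉ X) ∨ y = x₀) (hx₁ : x₀ ∈ P₁) (hp₁ : Perf G P₁)
    (h₂ : P₂ ⊆ X) (hp₂ : Perf G P₂) : Perf G ((P₁ \ {x₀}) ∪ P₂) := by
  classical
  by_contra hno
  obtain ⟨H, hHP, k, hH⟩ := exists_minImp hno
  obtain ⟨hXs, -, -, hhom⟩ := hX
  have hin : ∀ y ∈ H, y ∈ X → y ∈ P₂ := by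
    intro y hy hyX
    rcases hHP hy with h | h
    · rcases h₁ y h.1 with h' | h'
      · exact absurd hyX h'.2
      · exact absurd h' h.2
    · exact h
  have hout : ∀ y ∈ H, y ∉ X → y ∈ P₁ ∧ y ∈ s := by
    intro y hy hyX
    rcases hHP hy with h | h
    · rcases h₁ y h.1 with h' | h'
      · exact ⟨h.1, h'.1⟩
      · exact absurd h' h.2
    · exact absurd (h₂ h) hyX
  by_cases hA : ∃ y ∈ H, y ∉ X
  swap
  · push Not at hA
    exact hH.not_col (hp₂ H (fun y hy => hin y hy (hA y hy)) k hH.bound)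
  by_cases hB : ∃ x ∈ H ∩ X, ∃ y ∈ H ∩ X, x ≠ y
  · obtain ⟨y, hy, hyX⟩ := hA
    refine hH.no_homog (X := H ∩ X) ⟨Set.inter_subset_left, hB, ⟨y, hy, fun h => hyX h.2⟩, ?_⟩
    intro z hz hzX x hx x' hx' hadj
    have hzX' : z ∉ X := fun h => hzX ⟨hz, h⟩
    exact hhom z (hout z hz hzX').2 hzX' x hx.2 x' hx'.2 hadj
  push Not at hB
  let φ : V → V := fun y => if y ∈ X then x₀ else y
  have hφ : ∀ x ∈ H, ∀ y ∈ H, x ≠ y → φ x ≠ φ y ∧ (G.Adj (φ x) (φ y) ↔ G.Adj x y) := by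
    intro x hx y hy hxy
    by_cases hxX : x ∈ X <;> by_cases hyX : y ∈ X
    · exact absurd (hB x ⟨hx, hxX⟩ y ⟨hy, hyX⟩) hxy
    · simp only [φ, hxX, hyX, if_true, if_false]
      have hys := (hout y hy hyX).2
      refine ⟨fun h => hyX (h ▸ hx₀), fun h => ?_, fun h => ?_⟩
      · exact (hhom y hys hyX x₀ hx₀ x hxX h.symm).symm
      · exact (hhom y hys hyX x hxX x₀ hx₀ h.symm).symm
    · simp only [φ, hxX, hyX, if_true, if_false]
      have hxs := (hout x hx hxX).2
      refine ⟨fun h => hxX (h ▸ hx₀), fun h => ?_, fun h => ?_⟩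
      · exact hhom x hxs hxX x₀ hx₀ y hyX h
      · exact hhom x hxs hxX y hyX x₀ hx₀ h
    · simp only [φ, hxX, hyX, if_false]
      exact ⟨hxy, trivial⟩
  obtain ⟨f, f1, f2⟩ := hp₁ (φ '' H) (by
    rintro _ ⟨y, hy, rfl⟩
    by_cases hyX : y ∈ X
    · simpa [φ, hyX] using hx₁
    · simpa [φ, hyX] using (hout y hy hyX).1) k (by
    intro t ht hcl
    obtain ⟨r, hr, rfl⟩ := Finset.subset_set_image_iff.1 ht
    refine Finset.card_image_le.trans (hH.bound r hr fun x hx y hy hxy => ?_)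
    have h := hφ x (hr hx) y (hr hy) hxy
    exact h.2.1 (hcl (Finset.mem_coe.2 (Finset.mem_image_of_mem φ hx))
      (Finset.mem_coe.2 (Finset.mem_image_of_mem φ hy)) h.1))
  exact hH.not_col ⟨fun x => f (φ x), fun x hx => f1 _ ⟨x, hx, rfl⟩, fun x hx y hy hxy =>
    f2 _ ⟨x, hx, rfl⟩ _ ⟨y, hy, rfl⟩ ((hφ x hx y hy hxy.ne).2.2 hxy)⟩

/-- Without homogeneous sets, a vertex together with its non-neighbours induces a perfect graph. -/
lemma perf_nonNbrs [Finite V] {G : SimpleGraph V} (hb : NoBull G) (htorch : OddTorchFree G)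
    {s : Set V} (hs : ¬ ∃ X, Homog G s X) {v : V} (hv : v ∈ s) :
    Perf G {x | x ∈ s ∧ ¬ G.Adj v x} := by
  by_contra hno
  obtain ⟨H, hHP, k, hH⟩ := exists_minImp hno
  obtain ⟨h₀, hh₀⟩ := hH.nonempty
  obtain ⟨h₁, hh₁, hadj⟩ := hH.exists_adj hh₀
  have hHs : H ⊆ s := fun x hx => (hHP hx).1
  have hvH : v ∉ H := fun h => by
    obtain ⟨q, hq, hvq⟩ := hH.exists_adj h
    exact (hHP hq).2 hvq
  let D : Set V := {d | d ∈ s ∧ d ∉ H ∧ ∀ x ∈ H, ¬ G.Adj d x}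
  have hvD : v ∈ D := ⟨hv, hvH, fun x hx => (hHP hx).2⟩
  have hHD : ∀ x ∈ H, x ∉ D := fun x hx h => h.2.1 hx
  by_cases hcut : ∀ d ∈ D, ∀ u ∈ s, u ∉ D → ¬ G.Adj d u
  · -- `s \ D` contains `H` and has no edge to `D`
    refine hs ⟨s \ D, Set.sdiff_subset, ⟨h₀, ⟨hHs hh₀, hHD h₀ hh₀⟩, h₁, ⟨hHs hh₁, hHD h₁ hh₁⟩,
      hadj.ne⟩, ⟨v, hv, fun h => h.2 hvD⟩, ?_⟩
    intro y hy hyX x hx x' hx' hyx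
    have hyD : y ∈ D := by
      by_contra h
      exact hyX ⟨hy, h⟩
    exact absurd hyx (hcut y hyD x hx.1 hx.2)
  push Not at hcut
  obtain ⟨d, hd, u, hus, huD, hdu⟩ := hcut
  have huH : u ∉ H := fun h => hd.2.2 u h hdu
  obtain ⟨a, ha, hua⟩ : ∃ a ∈ H, G.Adj u a := by
    by_contra h
    push Not at h
    exact huD ⟨hus, huH, h⟩
  by_cases hedge : ∃ p ∈ H, G.Adj u p ∧ ∃ q ∈ H, G.Adj u q ∧ G.Adj p q
  · obtain ⟨p, hp, hup, q, hq, huq, hpq⟩ := hedge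
    exact hs (hH.exists_homog hb hHs hus hd.1
      (hH.complete_of_edge hb hdu.symm hd.2.2 hp hq hup huq hpq) hd.2.1 hd.2.2)
  · push Not at hedge
    rcases le_or_gt 3 k with hk | hk
    · exact hH.not_stable_attachment hb hk ha hua hedge
    · exact hH.not_oddTorchFree_of_attachment (by omega) ha hua hedge hdu.symm hd.2.2 htorch

lemma exists_max_weight_clique [Finite V] (G : SimpleGraph V) (w : V → ℕ) (s : Set V) :
    ∃ t : Finset V, (t : Set V) ⊆ s ∧ G.IsClique (t : Set V) ∧
      ∀ r : Finset V, (r : Set V) ⊆ s → G.IsClique (r : Set V) → ∑ x ∈ r, w x ≤ ∑ x ∈ t, w x := by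
  classical
  have := Fintype.ofFinite V
  obtain ⟨t, ht, hm⟩ := Finset.exists_max_image
    (Finset.univ.filter fun t : Finset V => (t : Set V) ⊆ s ∧ G.IsClique (t : Set V))
    (fun t => ∑ x ∈ t, w x) ⟨∅, by simp⟩
  have ht' := (Finset.mem_filter.1 ht).2
  exact ⟨t, ht'.1, ht'.2, fun r hr hc => hm r (by simp [hr, hc])⟩

set_option maxHeartbeats 1000000 in
/-- The weighted partition, by induction on `|s|`. A homogeneous set `X` is contracted to a vertex
`x₀` whose weight is the maximum weight of a clique of `X`; if `x₀` lands in the perfect part, it is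
replaced by the perfect part of a partition of `X`, otherwise all of `X` replaces it. -/
lemma exists_partition [Finite V] {G : SimpleGraph V} (hb : NoBull G) (htorch : OddTorchFree G)
    (n : ℕ) : ∀ s : Set V, s.ncard = n → s.Nonempty → ∀ w : V → ℕ, (∀ v, 0 < w v) →
      ∃ P W : Set V, P ∪ W = s ∧ P ∩ W = ∅ ∧ Perf G P ∧
        ∀ t : Finset V, (t : Set V) ⊆ W → G.IsClique (t : Set V) →
          ∃ r : Finset V, (r : Set V) ⊆ s ∧ G.IsClique (r : Set V) ∧
            ∑ x ∈ t, w x < ∑ x ∈ r, w x := by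
  classical
  induction n using Nat.strong_induction_on with
  | _ n ih =>
  rintro s rfl hsne w hw
  by_cases hhom : ∃ X, Homog G s X
  swap
  · obtain ⟨v, hv⟩ := hsne
    refine ⟨{x | x ∈ s ∧ ¬ G.Adj v x}, {x | x ∈ s ∧ G.Adj v x}, ?_, ?_,
      perf_nonNbrs hb htorch hhom hv, ?_⟩
    · ext x
      simp only [Set.mem_union, Set.mem_ofPred_eq]
      tauto
    · ext x
      simp only [Set.mem_inter_iff, Set.mem_ofPred_eq, Set.mem_empty_iff_false]
      tauto
    · intro t ht hcl
      have hvt : v ∉ t := fun h => (ht h).2.ne rfl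
      refine ⟨insert v t, ?_, ?_, ?_⟩
      · rw [Finset.coe_insert]
        exact Set.insert_subset hv fun x hx => (ht hx).1
      · rw [Finset.coe_insert]
        exact hcl.insert fun x hx _ => (ht hx).2
      · rw [Finset.sum_insert hvt]
        have := hw v
        omega
  obtain ⟨X, hX⟩ := hhom
  obtain ⟨hXs, ⟨x₀, hx₀, x₁, hx₁, hne⟩, ⟨z, hz, hzX⟩, hm⟩ := id hX
  obtain ⟨T, hT, hTc, hTmax⟩ := exists_max_weight_clique G w X
  set c := ∑ x ∈ T, w x with hc
  have hcpos : 0 < c := by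
    have := hTmax {x₀} (by simpa using hx₀) (by simp)
    have := hw x₀
    simp only [Finset.sum_singleton] at *
    omega
  let w₁ : V → ℕ := Function.update w x₀ c
  have hw₁ : ∀ v, 0 < w₁ v := by
    intro v
    by_cases h : v = x₀
    · simpa [w₁, h] using hcpos
    · simpa [w₁, h] using hw v
  have hsum : ∀ t : Finset V, x₀ ∉ t → ∑ x ∈ t, w₁ x = ∑ x ∈ t, w x := fun t ht =>
    Finset.sum_congr rfl fun x hx => Function.update_of_ne (fun h => ht (by rwa [← h])) _ _
  obtain ⟨P₁, W₁, hu₁, hi₁, hp₁, ht₁⟩ := ih (insert x₀ (s \ X)).ncard (by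
    refine Set.ncard_lt_ncard ⟨Set.insert_subset (hXs hx₀) Set.sdiff_subset, fun h => ?_⟩
      (Set.toFinite _)
    rcases h (hXs hx₁) with h' | h'
    · exact hne h'.symm
    · exact h'.2 hx₁) _ rfl ⟨x₀, Set.mem_insert _ _⟩ w₁ hw₁
  have hmem : ∀ y, y ∈ P₁ ∨ y ∈ W₁ ↔ (y ∈ s ∧ y ∉ X) ∨ y = x₀ := by
    intro y
    have := Set.ext_iff.1 hu₁ y
    simp only [Set.mem_union, Set.mem_insert_iff, Set.mem_sdiff] at this
    tauto
  have hdis : ∀ y, y ∈ P₁ → y ∉ W₁ := fun y h h' => (Set.ext_iff.1 hi₁ y).1 ⟨h, h'⟩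
  have hlift : ∀ r : Finset V, (r : Set V) ⊆ insert x₀ (s \ X) → G.IsClique (r : Set V) →
      ∃ r' : Finset V, (r' : Set V) ⊆ s ∧ G.IsClique (r' : Set V) ∧
        ∑ x ∈ r', w x = ∑ x ∈ r, w₁ x := by
    intro r hr hrc
    by_cases hxr : x₀ ∈ r
    · have hr' : ∀ y ∈ r.erase x₀, y ∈ s ∧ y ∉ X ∧ ∀ x ∈ X, G.Adj y x := by
        intro y hy
        have hy' := Finset.mem_erase.1 hy
        rcases hr hy'.2 with h | h
        · exact absurd h hy'.1
        · exact ⟨h.1, h.2, fun x hx => hm y h.1 h.2 x₀ hx₀ x hx (hrc hy'.2 hxr hy'.1)⟩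
      refine ⟨r.erase x₀ ∪ T, ?_, ?_, ?_⟩
      · intro y hy
        rcases Finset.mem_union.1 hy with h | h
        · exact (hr' y h).1
        · exact hXs (hT h)
      · rw [Finset.coe_union]
        exact MinImp.isClique_union (hrc.subset (Finset.coe_subset.2 (Finset.erase_subset _ _)))
          hTc fun x hx y hy => (hr' x hx).2.2 y (hT hy)
      · rw [Finset.sum_union (Finset.disjoint_left.2 fun y hy hyT => (hr' y hy).2.1 (hT hyT)),
          ← Finset.sum_erase_add _ _ hxr, hsum _ (Finset.notMem_erase _ _)]
        simp [w₁, hc]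
    · refine ⟨r, fun y hy => ?_, hrc, (hsum r hxr).symm⟩
      rcases hr hy with h | h
      · exact absurd (h ▸ hy) hxr
      · exact h.1
  have hcol : ∀ t : Finset V, (t : Set V) ⊆ s → G.IsClique (t : Set V) → (∃ x ∈ t, x ∈ X) →
      G.IsClique ((insert x₀ (t.filter (· ∉ X)) : Finset V) : Set V) ∧
        ∑ x ∈ insert x₀ (t.filter (· ∉ X)), w₁ x = c + ∑ x ∈ t.filter (· ∉ X), w x := by
    rintro t hts htc ⟨x, hxt, hxX⟩
    have hn : x₀ ∉ t.filter (· ∉ X) := fun h => (Finset.mem_filter.1 h).2 hx₀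
    constructor
    · rw [Finset.coe_insert]
      refine (htc.subset (Finset.coe_subset.2 (Finset.filter_subset _ _))).insert fun y hy _ => ?_
      have hy' := Finset.mem_filter.1 (Finset.mem_coe.1 hy)
      exact (hm y (hts hy'.1) hy'.2 x hxX x₀ hx₀
        (htc hy'.1 hxt (fun h => hy'.2 (h ▸ hxX)))).symm
    · rw [Finset.sum_insert hn, hsum _ hn]
      simp [w₁]
  have hsplit : ∀ t : Finset V, ∑ x ∈ t, w x =
      ∑ x ∈ t.filter (· ∈ X), w x + ∑ x ∈ t.filter (· ∉ X), w x := fun t =>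
    (Finset.sum_filter_add_sum_filter_not _ _ _).symm
  have hW₁s : W₁ ⊆ insert x₀ (s \ X) := hu₁ ▸ Set.subset_union_right
  by_cases hxW : x₀ ∈ W₁
  · refine ⟨P₁, (W₁ \ {x₀}) ∪ X, ?_, ?_, hp₁, ?_⟩
    · ext y
      have h1 := hmem y
      have h2 := hdis y
      have h3 := @hXs y
      simp only [Set.mem_union, Set.mem_sdiff, Set.mem_singleton_iff]
      by_cases hy : y = x₀
      · subst hy; tauto
      · tauto
    · ext y
      have h1 := hmem y
      have h2 := hdis y
      simp only [Set.mem_inter_iff, Set.mem_union, Set.mem_sdiff, Set.mem_singleton_iff,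
        Set.mem_empty_iff_false]
      by_cases hy : y = x₀
      · subst hy; tauto
      · tauto
    · intro t ht htc
      have hts : (t : Set V) ⊆ s := by
        intro y hy
        rcases ht hy with h | h
        · rcases hW₁s h.1 with h' | h'
          · exact absurd h' h.2
          · exact h'.1
        · exact hXs h
      by_cases htX : ∃ x ∈ t, x ∈ X
      · obtain ⟨h1, h2⟩ := hcol t hts htc htX
        obtain ⟨r, hr, hrc, hlt⟩ := ht₁ (insert x₀ (t.filter (· ∉ X))) (by
          intro y hy
          rcases Finset.mem_insert.1 (Finset.mem_coe.1 hy) with rfl | hy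
          · exact hxW
          · have hy' := Finset.mem_filter.1 hy
            rcases ht hy'.1 with h | h
            · exact h.1
            · exact absurd h hy'.2) h1
        obtain ⟨r', hr', hrc', he⟩ := hlift r hr hrc
        refine ⟨r', hr', hrc', ?_⟩
        have h3 := hTmax (t.filter (· ∈ X)) (fun y hy => (Finset.mem_filter.1 hy).2)
          (htc.subset (Finset.coe_subset.2 (Finset.filter_subset _ _)))
        rw [he, hsplit]
        omega
      · push Not at htX
        obtain ⟨r, hr, hrc, hlt⟩ := ht₁ t (fun y hy => by
          rcases ht hy with h | h
          · exact h.1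
          · exact absurd h (htX y hy)) htc
        obtain ⟨r', hr', hrc', he⟩ := hlift r hr hrc
        refine ⟨r', hr', hrc', ?_⟩
        rw [he, ← hsum t fun h => htX _ h hx₀]
        exact hlt
  · have hxP : x₀ ∈ P₁ := ((hmem x₀).2 (Or.inr rfl)).resolve_right hxW
    obtain ⟨P₂, W₂, hu₂, hi₂, hp₂, ht₂⟩ := ih X.ncard
      (Set.ncard_lt_ncard ⟨hXs, fun h => hzX (h hz)⟩ (Set.toFinite _)) X rfl ⟨x₀, hx₀⟩ w hw
    have hmem₂ : ∀ y, y ∈ P₂ ∨ y ∈ W₂ ↔ y ∈ X := fun y => Set.ext_iff.1 hu₂ y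
    have hdis₂ : ∀ y, y ∈ P₂ → y ∉ W₂ := fun y h h' => (Set.ext_iff.1 hi₂ y).1 ⟨h, h'⟩
    refine ⟨(P₁ \ {x₀}) ∪ P₂, W₁ ∪ W₂, ?_, ?_,
      perf_subst hX hx₀ (fun y hy => (hmem y).1 (Or.inl hy)) hxP hp₁
        (fun y hy => (hmem₂ y).1 (Or.inl hy)) hp₂, ?_⟩
    · ext y
      have h1 := hmem y
      have h3 := @hXs y
      have h4 := hmem₂ y
      simp only [Set.mem_union, Set.mem_sdiff, Set.mem_singleton_iff]
      by_cases hy : y = x₀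
      · subst hy; tauto
      · tauto
    · ext y
      have h1 := hmem y
      have h2 := hdis y
      have h4 := hmem₂ y
      have h5 := hdis₂ y
      simp only [Set.mem_inter_iff, Set.mem_union, Set.mem_sdiff, Set.mem_singleton_iff,
        Set.mem_empty_iff_false]
      by_cases hy : y = x₀
      · subst hy; tauto
      · tauto
    · intro t ht htc
      have hW₁X : ∀ y ∈ W₁, y ∈ s ∧ y ∉ X := by
        intro y hy
        rcases hW₁s hy with h | h
        · exact absurd (h ▸ hy) hxW
        · exact h
      have hW₂X : ∀ y ∈ W₂, y ∈ X := fun y hy => (hmem₂ y).1 (Or.inr hy)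
      have hts : (t : Set V) ⊆ s := by
        intro y hy
        rcases ht hy with h | h
        · exact (hW₁X y h).1
        · exact hXs (hW₂X y h)
      by_cases htX : ∃ x ∈ t, x ∈ X
      · obtain ⟨h1, h2⟩ := hcol t hts htc htX
        obtain ⟨r', hr', hrc', he⟩ := hlift (insert x₀ (t.filter (· ∉ X))) (by
          intro y hy
          rcases Finset.mem_insert.1 (Finset.mem_coe.1 hy) with rfl | hy
          · exact Set.mem_insert _ _
          · have hy' := Finset.mem_filter.1 hy
            exact Or.inr ⟨hts hy'.1, hy'.2⟩) h1
        refine ⟨r', hr', hrc', ?_⟩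
        obtain ⟨r, hr, hrc, hlt⟩ := ht₂ (t.filter (· ∈ X)) (by
          intro y hy
          have hy' := Finset.mem_filter.1 (Finset.mem_coe.1 hy)
          rcases ht hy'.1 with h | h
          · exact absurd hy'.2 (hW₁X y h).2
          · exact h) (htc.subset (Finset.coe_subset.2 (Finset.filter_subset _ _)))
        have h3 := hTmax r hr hrc
        rw [he, hsplit]
        omega
      · push Not at htX
        obtain ⟨r, hr, hrc, hlt⟩ := ht₁ t (fun y hy => by
          rcases ht hy with h | h
          · exact h
          · exact absurd (hW₂X y h) (htX y hy)) htc
        obtain ⟨r', hr', hrc', he⟩ := hlift r hr hrc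
        refine ⟨r', hr', hrc', ?_⟩
        rw [he, ← hsum t fun h => htX _ h hx₀]
        exact hlt

/-! ### Passage to chromatic and clique numbers -/

lemma bddAbove_clique_card [Finite V] (G : SimpleGraph V) (s : Set V) :
    BddAbove {n | ∃ t : Finset V, ↑t ⊆ s ∧ G.IsNClique n t} := by
  have := Fintype.ofFinite V
  refine ⟨Fintype.card V, ?_⟩
  rintro n ⟨t, -, ht⟩
  exact ht.card_eq ▸ Finset.card_le_univ t

lemma bddAbove_clique_weight [Finite V] (G : SimpleGraph V) (w : V → ℕ) (s : Set V) :
    BddAbove {n | ∃ t : Finset V, ↑t ⊆ s ∧ G.IsClique (↑t : Set V) ∧ ∑ v ∈ t, w v = n} := by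
  have := Fintype.ofFinite V
  refine ⟨∑ v, w v, ?_⟩
  rintro n ⟨t, -, -, rfl⟩
  exact Finset.sum_le_sum_of_subset (Finset.subset_univ t)

lemma exists_isNClique [Finite V] (G : SimpleGraph V) (s : Set V) :
    ∃ t : Finset V, ↑t ⊆ s ∧ G.IsNClique (cliqueNumOn G s) t :=
  Nat.sSup_mem (s := {n | ∃ t : Finset V, (t : Set V) ⊆ s ∧ G.IsNClique n t})
    ⟨0, (∅ : Finset V), by simp, by simp [isNClique_iff]⟩ (bddAbove_clique_card G s)

lemma Perf.isPerfect [Finite V] {G : SimpleGraph V} {s : Set V} (h : Perf G s) :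
    IsPerfect (G.induce s) := by
  classical
  intro A
  apply le_antisymm
  · obtain ⟨f, f1, f2⟩ := h (Subtype.val '' A) (by
      rintro _ ⟨y, -, rfl⟩
      exact y.2) (cliqueNumOn (G.induce s) A) (by
      intro t ht hcl
      obtain ⟨r, hr, rfl⟩ := Finset.subset_set_image_iff.1 ht
      refine le_csSup (bddAbove_clique_card _ _) ⟨r, hr, ?_, ?_⟩
      · intro x hx y hy hxy
        exact hcl (Finset.mem_coe.2 (Finset.mem_image_of_mem _ hx))
          (Finset.mem_coe.2 (Finset.mem_image_of_mem _ hy)) (fun e => hxy (Subtype.ext e))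
      · exact (Finset.card_image_of_injective _ Subtype.val_injective).symm)
    have hcol : ((G.induce s).induce A).Colorable (cliqueNumOn (G.induce s) A) := by
      refine ⟨Coloring.mk (fun x : A => (⟨f x.1.1, f1 x.1.1 ⟨x.1, x.2, rfl⟩⟩ :
        Fin (cliqueNumOn (G.induce s) A))) ?_⟩
      intro x y hxy he
      exact f2 x.1.1 ⟨x.1, x.2, rfl⟩ y.1.1 ⟨y.1, y.2, rfl⟩ hxy (congrArg Fin.val he)
    exact hcol.chromaticNumber_le
  · obtain ⟨t, ht, hc⟩ := exists_isNClique (G.induce s) A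
    have hcl : ((G.induce s).induce A).IsClique (t.subtype (· ∈ A) : Finset A) := by
      intro x hx y hy hxy
      exact hc.isClique (Finset.mem_subtype.1 (Finset.mem_coe.1 hx))
        (Finset.mem_subtype.1 (Finset.mem_coe.1 hy)) (fun e => hxy (Subtype.ext e))
    have := hcl.card_le_chromaticNumber
    rwa [Finset.card_subtype, Finset.filter_true_of_mem fun x hx => ht hx, hc.card_eq] at this

end BullTorch

/-- Every (bull, odd torch)-free graph is perfectly weight divisible, and hence
perfectly divisible. -/
theorem bull_oddTorch_free_perfectlyWeightDivisible {V : Type*} [Fintype V]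
    (G : SimpleGraph V) (hbull : IsFree G bull) (htorch : OddTorchFree G) :
    PerfectlyWeightDivisible G ∧ PerfectlyDivisible G := by
  have hb := BullTorch.noBull_of_isFree hbull
  constructor
  · intro w hw s hs
    obtain ⟨P, W, hu, hi, hP, hlt⟩ := BullTorch.exists_partition hb htorch _ s rfl hs w hw
    refine ⟨P, W, hu, hi, hP.isPerfect, ?_⟩
    obtain ⟨t, ht, htc, hte⟩ := Nat.sSup_mem
      (s := {n | ∃ t : Finset V, ↑t ⊆ W ∧ G.IsClique (↑t : Set V) ∧ ∑ v ∈ t, w v = n})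
      ⟨0, ∅, by simp, by simp, by simp⟩ (BullTorch.bddAbove_clique_weight G w W)
    obtain ⟨r, hr, hrc, hlt⟩ := hlt t ht htc
    rw [hte] at hlt
    exact hlt.trans_le (le_csSup (BullTorch.bddAbove_clique_weight G w s) ⟨r, hr, hrc, rfl⟩)
  · -- unit weights
    intro s hs
    obtain ⟨P, W, hu, hi, hP, hlt⟩ :=
      BullTorch.exists_partition hb htorch _ s rfl hs (fun _ => 1) fun _ => one_pos
    refine ⟨P, W, hu, hi, hP.isPerfect, ?_⟩
    obtain ⟨t, ht, hc⟩ := BullTorch.exists_isNClique G W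
    obtain ⟨r, hr, hrc, hlt⟩ := hlt t ht hc.isClique
    rw [Finset.sum_const, Finset.sum_const, smul_eq_mul, smul_eq_mul, mul_one, mul_one,
      hc.card_eq] at hlt
    exact hlt.trans_le (le_csSup (BullTorch.bddAbove_clique_card G s) ⟨r, hr, hrc, rfl⟩)
end

section
/- Every (bull, even hole)-free graph, i.e., every bull-free graph containing no induced cycle of even length at least 4, is perfectly weight divisible, and hence perfectly divisible. -/
/-!
The theorem follows from the existence of *good* vertices: in a (bull, even hole)-free graph, if some
vertex of `s` is anticomplete to an edge `v₁v₂` of `G[s]`, then `s` has a vertex `z` anticomplete to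
`v₁v₂` whose neighbourhood in `s` contains no stable triple and no induced `P₄` (`exists_good`).

**From good vertices to divisions.** `G[s]` is split, by induction on `s`, into a chordal part `P` and
a part `W` whose cliques are lighter than some clique of `s` (`div_all`). Given a good vertex `z`,
divide `s \ {z}`. If the neighbours of `z` in `P` form a clique, then `P ∪ {z}` is still chordal.
Otherwise `z` has nonadjacent neighbours `a, b` in `P`, and `z` is put into `W`: for a clique of `W`
through `z`, one of `a`, `b` is complete to it, since otherwise the neighbourhood of `z` would contain
a stable triple or an induced `P₄`; adding that vertex gives a heavier clique (`Div.step`). If no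
vertex is good for a trivial reason or by `exists_good`, then some edge of `G[s]` dominates `s`, and
this edge is a suitable part `P` (`div_of_dominating`). Chordal graphs are perfect by greedy colouring
along a perfect elimination order, and unit weights turn weighted into ordinary divisibility.

**Holes and their attachments.** Let `C` be a hole, necessarily odd, and `E` a connected set
anticomplete to `C`. By bull-freeness, a vertex with neighbours in both is complete to `C` or has a
stable set of neighbours on `C`. For two vertices of the latter kind, the absence of even holes fixes
the parities of the gaps between consecutive neighbours on `C`, and a counting argument on the odd
cycle (`parity_false`) shows that they share a neighbour on `C` or attach at the two ends of an edge
of `C`. Together with a Helly property this gives `att_edge`: one edge of `C` meets the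
neighbourhood of every vertex attached to both `C` and `E`.

**Finding a good vertex.** Let `Y` be the set of vertices of `s` anticomplete to `v₁v₂`. If `Y`
contains a hole `C`, let `E` be the component of `v₁v₂` in the part of `s` anticomplete to `C`. By
`att_edge`, a vertex of `s \ E` anticomplete to a suitable edge of `C` has no neighbour in `E`, so
induction applied to `s \ E` and that edge produces a good vertex of `s`. If `Y` has no hole, let `D`
be a component of `Y`. A simplicial vertex of `D` that does not see private neighbours of both `v₁`
and `v₂` is good if its neighbourhood outside `D` is minimal (`good_of_unmixed`). If every simplicial
vertex of `D` sees both kinds, then these vertices are pairwise adjacent by `att_edge`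
(`mixed_clique`), so `D` is a clique by Dirac's theorem, and again a vertex with minimal
neighbourhood outside `D` is good (`good_of_mixed`).
-/

open SimpleGraph

namespace BullEvenHole

variable {V : Type*} {G : SimpleGraph V}

/-! ### Holes and induced paths -/

/-- `c` winds periodically around an induced cycle of length `n ≥ 4` of `G`. Indexing by all of
`ℕ` makes rotation of the cycle a mere shift of the index. -/
structure IsHole (G : SimpleGraph V) (n : ℕ) (c : ℕ → V) : Prop where
  four : 4 ≤ n
  per : ∀ i, c (i + n) = c i
  ne : ∀ i d, 0 < d → d < n → c i ≠ c (i + d)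
  adj : ∀ i d, 0 < d → d < n → (G.Adj (c i) (c (i + d)) ↔ d = 1 ∨ d + 1 = n)

/-- `p 0, …, p l` is an induced path of `G`. -/
def IsIPath (G : SimpleGraph V) (l : ℕ) (p : ℕ → V) : Prop :=
  ∀ i j, i < j → j ≤ l → p i ≠ p j ∧ (G.Adj (p i) (p j) ↔ j = i + 1)

/-- Bulls and even holes excluded pointwise, with the four-cycle listed separately. -/
structure BEFree (G : SimpleGraph V) : Prop where
  bull : ∀ a b c d e, G.Adj a b → G.Adj a c → G.Adj b c → G.Adj a d → G.Adj b e →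
    ¬ G.Adj d b → ¬ G.Adj d c → ¬ G.Adj e a → ¬ G.Adj e c → ¬ G.Adj d e → False
  c4 : ∀ a b c d, G.Adj a b → G.Adj b c → G.Adj c d → G.Adj d a → ¬ G.Adj a c → ¬ G.Adj b d →
    a ≠ c → b ≠ d → False
  even : ∀ n c, IsHole G n c → Even n → False

/-- An induced path of length at least two, closed up by a vertex adjacent to its ends only. -/
theorem hole_of_path {l : ℕ} {p : ℕ → V} {x : V} (hp : IsIPath G l p) (hl : 2 ≤ l)
    (hx : ∀ i, i ≤ l → x ≠ p i) (hax : ∀ i, i ≤ l → (G.Adj x (p i) ↔ i = 0 ∨ i = l)) :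
    IsHole G (l + 2) (fun i => if i % (l + 2) ≤ l then p (i % (l + 2)) else x) := by
  have key : ∀ i d, 0 < d → d < l + 2 →
      ((i + d) % (l+2) = i % (l+2) + d ∨ (i + d) % (l+2) + (l + 2) = i % (l+2) + d) := by
    intro i d h1 h2
    have h3 : i % (l+2) < l + 2 := Nat.mod_lt _ (by omega)
    by_cases h : i % (l+2) + d < l + 2
    · left
      rw [Nat.add_mod, Nat.mod_eq_of_lt h2, Nat.mod_eq_of_lt h]
    · right
      rw [Nat.add_mod, Nat.mod_eq_of_lt h2, Nat.mod_eq_sub_mod (by omega), Nat.mod_eq_of_lt (by omega)]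
      omega
  refine ⟨by omega, fun i => by simp, ?_, ?_⟩
  · intro i d h1 h2
    have h3 : i % (l+2) < l + 2 := Nat.mod_lt _ (by omega)
    have h4 : (i + d) % (l+2) < l + 2 := Nat.mod_lt _ (by omega)
    have := key i d h1 h2
    generalize i % (l+2) = r at *
    generalize (i + d) % (l+2) = r' at *
    split_ifs with h5 h6 h6
    · rcases lt_or_gt_of_ne (show r ≠ r' by omega) with h | h
      · exact (hp r r' h h6).1
      · exact (hp r' r h h5).1.symm
    · exact (hx r h5).symm
    · exact hx r' h6
    · omega
  · intro i d h1 h2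
    have h3 : i % (l+2) < l + 2 := Nat.mod_lt _ (by omega)
    have h4 : (i + d) % (l+2) < l + 2 := Nat.mod_lt _ (by omega)
    have := key i d h1 h2
    generalize i % (l+2) = r at *
    generalize (i + d) % (l+2) = r' at *
    split_ifs with h5 h6 h6
    · rcases lt_or_gt_of_ne (show r ≠ r' by omega) with h | h
      · rw [(hp r r' h h6).2]; omega
      · rw [G.adj_comm, (hp r' r h h5).2]; omega
    · rw [G.adj_comm, hax r h5]; omega
    · rw [hax r' h6]; omega
    · omega

theorem IsIPath.reverse {l : ℕ} {p : ℕ → V} (hp : IsIPath G l p) :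
    IsIPath G l (fun k => p (l - k)) := by
  intro i j hij hj
  have := hp (l - j) (l - i) (by omega) (by omega)
  refine ⟨this.1.symm, ?_⟩
  rw [G.adj_comm, this.2]; omega

namespace IsHole

variable {n : ℕ} {c : ℕ → V}

theorem shift (h : IsHole G n c) (a : ℕ) : IsHole G n (fun i => c (a + i)) where
  four := h.four
  per i := by rw [← add_assoc]; exact h.per _
  ne i d h1 h2 := by rw [← add_assoc]; exact h.ne _ d h1 h2
  adj i d h1 h2 := by rw [← add_assoc]; exact h.adj _ d h1 h2

theorem per_mul (h : IsHole G n c) (i k : ℕ) : c (i + k * n) = c i := by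
  induction k with
  | zero => simp
  | succ k ih => rw [Nat.succ_mul, ← add_assoc, h.per, ih]

/-- Any cycle vertex is reached from any position by moving forward less than a full turn. -/
theorem exists_off (h : IsHole G n c) (i j : ℕ) : ∃ d < n, c j = c (i + d) := by
  have hn := h.four
  refine ⟨(j + i * n - i) % n, Nat.mod_lt _ (by omega), ?_⟩
  have h1 : i ≤ i * n := Nat.le_mul_of_pos_right i (by omega)
  rw [← h.per_mul (i + _) ((j + i * n - i) / n), ← h.per_mul j i]
  congr 1
  have := Nat.mod_add_div' (j + i * n - i) n
  omega

theorem adj_succ (h : IsHole G n c) (i : ℕ) : G.Adj (c i) (c (i + 1)) :=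
  (h.adj i 1 (by omega) (by have := h.four; omega)).2 (Or.inl rfl)

theorem not_adj (h : IsHole G n c) (i d : ℕ) (h1 : 2 ≤ d) (h2 : d + 2 ≤ n) :
    ¬ G.Adj (c i) (c (i + d)) := by
  rw [h.adj i d (by omega) (by omega)]; omega

theorem not_adj_zero (h : IsHole G n c) (i d : ℕ) (h1 : d = 0 ∨ d = n) :
    ¬ G.Adj (c i) (c (i + d)) := by
  rcases h1 with rfl | rfl
  · simp
  · rw [h.per]; simp

/-- A stretch of the cycle missing at least one vertex is an induced path. -/
theorem ipath (h : IsHole G n c) (i l : ℕ) (hl : l + 2 ≤ n) : IsIPath G l (fun k => c (i + k)) := by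
  intro a b hab hb
  obtain ⟨d, rfl⟩ := Nat.exists_eq_add_of_lt hab
  have e : i + (a + d + 1) = (i + a) + (d + 1) := by omega
  dsimp only
  rw [e]
  refine ⟨h.ne _ _ (by omega) (by omega), ?_⟩
  rw [h.adj _ _ (by omega) (by omega)]; omega

/-- No three cycle vertices form a triangle. -/
theorem no_triangle (h : IsHole G n c) (i j k : ℕ) (h1 : G.Adj (c i) (c j)) (h2 : G.Adj (c i) (c k))
    (h3 : G.Adj (c j) (c k)) : False := by
  have hn := h.four
  obtain ⟨d, hd, e⟩ := h.exists_off i j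
  obtain ⟨d', hd', e'⟩ := h.exists_off i k
  rw [e] at h1 h3
  rw [e'] at h2 h3
  have k1 : 0 < d := Nat.pos_of_ne_zero (by rintro rfl; simp at h1)
  have k2 : 0 < d' := Nat.pos_of_ne_zero (by rintro rfl; simp at h2)
  rw [h.adj i d k1 hd] at h1
  rw [h.adj i d' k2 hd'] at h2
  rcases lt_trichotomy d d' with hlt | rfl | hlt
  · rw [show i + d' = (i + d) + (d' - d) by omega, h.adj _ _ (by omega) (by omega)] at h3
    omega
  · simp at h3
  · rw [G.adj_comm, show i + d = (i + d') + (d - d') by omega, h.adj _ _ (by omega) (by omega)] at h3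
    omega

end IsHole

theorem cycle_embed {n : ℕ} {c : ℕ → V} (h : IsHole G n c) :
    ContainsInduced G (SimpleGraph.cycleGraph n) := by
  have hn := h.four
  have key : ∀ a b : Fin n, a < b → c a ≠ c b ∧ (G.Adj (c a) (c b) ↔ (SimpleGraph.cycleGraph n).Adj a b) := by
    intro a b hab
    have hab' : (a : ℕ) < b := hab
    have hb := b.2
    have e : (b : ℕ) = a + (b - a) := by omega
    have h1 := h.ne a (b - a) (by omega) (by omega)
    have h2 := h.adj a (b - a) (by omega) (by omega)
    rw [← e] at h1 h2
    refine ⟨h1, h2.trans ?_⟩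
    rw [SimpleGraph.cycleGraph_adj']
    rw [Fin.sub_val_of_le hab.le, Fin.coe_sub_iff_lt.2 hab]
    omega
  refine ⟨⟨fun i => c i, ?_⟩, ?_⟩
  · intro a b hab
    by_contra hne
    rcases lt_or_gt_of_ne hne with h' | h'
    · exact (key a b h').1 hab
    · exact (key b a h').1 hab.symm
  · intro a b
    rcases lt_trichotomy a b with h' | rfl | h'
    · exact (key a b h').2
    · simp
    · exact (G.adj_comm _ _).trans ((key b a h').2.trans (SimpleGraph.adj_comm _ _ _))

/-- Five vertices arranged in an induced pentagon form a hole. -/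
theorem hole_five {a b x y z : V} (h1 : G.Adj a b) (h2 : G.Adj b x) (h3 : G.Adj x y)
    (h4 : G.Adj y z) (h5 : G.Adj z a) (n1 : ¬ G.Adj a x) (n2 : ¬ G.Adj a y) (n3 : ¬ G.Adj b y)
    (n4 : ¬ G.Adj b z) (n5 : ¬ G.Adj x z) :
    ∃ c, IsHole G 5 c ∧ c 0 = a ∧ c 1 = b ∧ c 2 = x ∧ c 3 = y ∧ c 4 = z := by
  refine ⟨_, hole_of_path (l := 3)
    (p := fun k => if k = 0 then a else if k = 1 then b else if k = 2 then x else y) (x := z)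
    ?_ (by omega) ?_ ?_, by simp⟩
  · intro i j hij hj
    have e1 : a ≠ x := by rintro rfl; exact n2 h3
    have e2 : a ≠ y := by rintro rfl; exact n1 h3.symm
    have e3 : b ≠ y := by rintro rfl; exact n2 h1
    interval_cases j <;> interval_cases i <;> simp [*, h1.ne, h2.ne, h3.ne]
  · intro i hi
    have e1 : z ≠ b := by rintro rfl; exact n3 h4.symm
    have e2 : z ≠ x := by rintro rfl; exact n1 h5.symm
    interval_cases i <;> simp [*, h5.ne, h4.ne']
  · intro i hi
    have n4' := mt G.adj_symm n4
    have n5' := mt G.adj_symm n5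
    interval_cases i <;> simp [*, h4.symm]

/-- There is no induced hexagon; the nine non-adjacencies force the six vertices to be distinct. -/
theorem BEFree.c6 (hG : BEFree G) {a b x y z w : V} (h1 : G.Adj a b) (h2 : G.Adj b x)
    (h3 : G.Adj x y) (h4 : G.Adj y z) (h5 : G.Adj z w) (h6 : G.Adj w a)
    (n1 : ¬ G.Adj a x) (n2 : ¬ G.Adj a y) (n3 : ¬ G.Adj a z) (n4 : ¬ G.Adj b y)
    (n5 : ¬ G.Adj b z) (n6 : ¬ G.Adj b w) (n7 : ¬ G.Adj x z) (n8 : ¬ G.Adj x w)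
    (n9 : ¬ G.Adj y w) : False := by
  refine hG.even _ _ (hole_of_path (l := 4)
    (p := fun k => if k = 0 then a else if k = 1 then b else if k = 2 then x else if k = 3 then y
      else z) (x := w) ?_ (by omega) ?_ ?_) (by decide)
  · intro i j hij hj
    have e1 : a ≠ x := by rintro rfl; exact n2 h3
    have e2 : a ≠ y := by rintro rfl; exact n1 h3.symm
    have e3 : b ≠ y := by rintro rfl; exact n2 h1
    have e4 : a ≠ z := by rintro rfl; exact n2 h4.symm
    have e5 : b ≠ z := by rintro rfl; exact n3 h1
    have e6 : x ≠ z := by rintro rfl; exact n5 h2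
    interval_cases j <;> interval_cases i <;> simp [*, h1.ne, h2.ne, h3.ne, h4.ne]
  · intro i hi
    have e1 : w ≠ b := by rintro rfl; exact n8 h2.symm
    have e2 : w ≠ x := by rintro rfl; exact n1 h6.symm
    have e3 : w ≠ y := by rintro rfl; exact n8 h3
    interval_cases i <;> simp [*, h6.ne, h5.ne']
  · intro i hi
    have n1' := mt G.adj_symm n6
    have n2' := mt G.adj_symm n8
    have n3' := mt G.adj_symm n9
    interval_cases i <;> simp [*, h5.symm]

theorem beFree_of_free (hbull : IsFree G bull)
    (heven : ∀ k : ℕ, 4 ≤ k → Even k → IsFree G (SimpleGraph.cycleGraph k)) : BEFree G where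
  bull := by
    intro a b c d e ab ac bc ad be db dc ea ec de
    apply hbull
    have n1 : a ≠ e := by rintro rfl; exact de ad.symm
    have n2 : b ≠ d := by rintro rfl; exact dc bc
    have n3 : c ≠ d := by rintro rfl; exact db bc.symm
    have n4 : c ≠ e := by rintro rfl; exact ea ac.symm
    have n5 : d ≠ e := by rintro rfl; exact ea ad.symm
    have db' := mt G.adj_symm db
    have dc' := mt G.adj_symm dc
    have ea' := mt G.adj_symm ea
    have ec' := mt G.adj_symm ec
    have de' := mt G.adj_symm de
    refine ⟨⟨![a, b, c, d, e], ?_⟩, fun i j => ?_⟩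
    · intro i j h
      fin_cases i <;> fin_cases j <;> simp_all [ab.ne, ac.ne, bc.ne, ad.ne, be.ne,
        ab.ne', ac.ne', bc.ne', ad.ne', be.ne']
    · change G.Adj (![a, b, c, d, e] i) (![a, b, c, d, e] j) ↔ _
      fin_cases i <;> fin_cases j <;> simp [bull, *, ab.symm, ac.symm, bc.symm, ad.symm, be.symm]
  c4 := by
    intro a b c d ab bc cd da ac bd n1 n2
    have ac' := mt G.adj_symm ac
    have bd' := mt G.adj_symm bd
    refine heven 4 le_rfl (by decide) ⟨⟨![a, b, c, d], ?_⟩, fun i j => ?_⟩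
    · intro i j h
      fin_cases i <;> fin_cases j <;> simp_all [ab.ne, bc.ne, cd.ne, da.ne,
        ab.ne', bc.ne', cd.ne', da.ne']
    · change G.Adj (![a, b, c, d] i) (![a, b, c, d] j) ↔ _
      rw [@SimpleGraph.cycleGraph_adj 2 i j]
      fin_cases i <;> fin_cases j <;> simp [*, ab.symm, bc.symm, cd.symm, da.symm] <;> decide
  even n c h he := heven n h.four he (cycle_embed h)

/-! ### Connected sets and shortest paths -/

/-- `y` can be reached from `x` by a walk inside `M`. -/
def Reach (G : SimpleGraph V) (M : Set V) : V → V → Prop :=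
  Relation.ReflTransGen (fun a b => G.Adj a b ∧ a ∈ M ∧ b ∈ M)

/-- The connected component of `v` in the subgraph induced on `M`. -/
def comp (G : SimpleGraph V) (M : Set V) (v : V) : Set V := {x | x ∈ M ∧ Reach G M v x}

/-- The subgraph induced on `E` is connected (the empty set is allowed). -/
def IsConn (G : SimpleGraph V) (E : Set V) : Prop := ∀ x ∈ E, ∀ y ∈ E, Reach G E x y

theorem Reach.symm {M : Set V} {x y : V} (h : Reach G M x y) : Reach G M y x := by
  induction h with
  | refl => exact .refl
  | tail _ h2 ih => exact .head ⟨h2.1.symm, h2.2.2, h2.2.1⟩ ih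

theorem mem_comp_self {M : Set V} {v : V} (h : v ∈ M) : v ∈ comp G M v := ⟨h, .refl⟩

theorem comp_subset {M : Set V} {v : V} : comp G M v ⊆ M := fun _ h => h.1

theorem comp_adj {M : Set V} {v x y : V} (hx : x ∈ comp G M v) (hy : y ∈ M) (h : G.Adj x y) :
    y ∈ comp G M v := ⟨hy, hx.2.tail ⟨h, hx.1, hy⟩⟩

theorem comp_conn {M : Set V} {v : V} : IsConn G (comp G M v) := by
  have key : ∀ x, Reach G M v x → Reach G (comp G M v) v x := by
    intro x h
    induction h with
    | refl => exact .refl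
    | @tail b c h1 h2 ih =>
      exact ih.tail ⟨h2.1, ⟨h2.2.1, h1⟩, ⟨h2.2.2, h1.tail h2⟩⟩
  intro x hx y hy
  exact Relation.ReflTransGen.trans (key x hx.2).symm (key y hy.2)

/-- A connected set meeting both `F` and its complement has an edge between them. -/
theorem IsConn.cross {E F : Set V} (hE : IsConn G E) {x y : V} (hx : x ∈ E) (hxF : x ∈ F)
    (hy : y ∈ E) (hyF : y ∉ F) : ∃ a ∈ E, a ∈ F ∧ ∃ b ∈ E, b ∉ F ∧ G.Adj a b := by
  have h := hE x hx y hy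
  clear hy
  induction h with
  | refl => exact absurd hxF hyF
  | @tail b c h1 h2 ih =>
    by_cases hb : b ∈ F
    · exact ⟨b, h2.2.1, hb, c, h2.2.2, hyF, h2.1⟩
    · exact ih hb

/-- A walk `p 0, …, p l` from `t` to `t'` whose inner vertices lie in `E`. -/
def IsLink (G : SimpleGraph V) (E : Set V) (t t' : V) (l : ℕ) (p : ℕ → V) : Prop :=
  p 0 = t ∧ p l = t' ∧ (∀ k < l, G.Adj (p k) (p (k + 1))) ∧ ∀ k, 0 < k → k < l → p k ∈ E

theorem exists_link {E : Set V} (hE : IsConn G E) {t t' e e' : V} (he : e ∈ E) (he' : e' ∈ E)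
    (hte : G.Adj t e) (hte' : G.Adj t' e') : ∃ l p, IsLink G E t t' l p := by
  have key : ∃ (l : ℕ) (p : ℕ → V), p 0 = t ∧ p l = e' ∧ (∀ k < l, G.Adj (p k) (p (k + 1))) ∧
      ∀ k, 0 < k → k ≤ l → p k ∈ E := by
    have h := hE e he e' he'
    clear hte'
    induction h with
    | refl =>
      refine ⟨1, fun k => if k = 0 then t else e, by simp, by simp, ?_, ?_⟩
      · intro k hk; obtain rfl : k = 0 := by omega
        simpa using hte
      · intro k hk _; simpa [hk.ne'] using he
    | @tail b c h1 h2 ih =>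
      obtain ⟨l, p, h3, h4, h5, h6⟩ := ih h2.2.1
      refine ⟨l + 1, fun k => if k ≤ l then p k else c, by simpa using h3, by simp, ?_, ?_⟩
      · intro k hk
        rcases Nat.lt_succ_iff_lt_or_eq.1 hk with hk | rfl
        · simpa [hk.le, Nat.succ_le_of_lt hk] using h5 k hk
        · simpa [h4] using h2.1
      · intro k hk _
        by_cases hkl : k ≤ l
        · simpa [hkl] using h6 k hk hkl
        · simpa [hkl] using h2.2.2
  obtain ⟨l, p, h3, h4, h5, h6⟩ := key
  refine ⟨l + 1, fun k => if k ≤ l then p k else t', by simpa using h3, by simp, ?_, ?_⟩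
  · intro k hk
    rcases Nat.lt_succ_iff_lt_or_eq.1 hk with hk | rfl
    · simpa [hk.le, Nat.succ_le_of_lt hk] using h5 k hk
    · simpa [h4] using hte'.symm
  · intro k hk hkl
    have : k ≤ l := by omega
    simpa [this] using h6 k hk this

/-- Two vertices with neighbours in a connected set `E` are joined by an induced path with all
inner vertices in `E`: a shortest link. -/
theorem exists_ipath {E : Set V} (hE : IsConn G E) {t t' e e' : V} (he : e ∈ E) (he' : e' ∈ E)
    (hte : G.Adj t e) (hte' : G.Adj t' e') (hne : t ≠ t') :
    ∃ l p, 1 ≤ l ∧ IsIPath G l p ∧ p 0 = t ∧ p l = t' ∧ ∀ k, 0 < k → k < l → p k ∈ E := by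
  classical
  have hex : ∃ l, ∃ p, IsLink G E t t' l p := exists_link hE he he' hte hte'
  obtain ⟨p, h0, hl, ha, hi⟩ := Nat.find_spec hex
  have hmin := fun m (hm : m < Nat.find hex) => Nat.find_min hex hm
  generalize Nat.find hex = l at *
  have hl1 : 1 ≤ l := by
    by_contra h
    obtain rfl : l = 0 := by omega
    exact hne (h0.symm.trans hl)
  have A : ∀ i j, i < j → j ≤ l → G.Adj (p i) (p j) → j = i + 1 := by
    intro i j hij hjl hadj
    by_contra hne'
    refine hmin (l - (j - i - 1)) (by omega)
      ⟨fun k => if k ≤ i then p k else p (k + (j - i - 1)), ?_, ?_, ?_, ?_⟩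
    · simpa using h0
    · have : ¬ (l - (j - i - 1) ≤ i) := by omega
      simp only [this, if_false]
      rw [← hl]; congr 1; omega
    · intro k hk
      rcases lt_trichotomy k i with h | rfl | h
      · simpa [h.le, Nat.succ_le_of_lt h] using ha k (by omega)
      · have : k + 1 + (j - k - 1) = j := by omega
        simpa [this] using hadj
      · have h1 : ¬ (k ≤ i) := by omega
        have h2 : ¬ (k + 1 ≤ i) := by omega
        simp only [h1, h2, if_false]
        rw [show k + 1 + (j - i - 1) = k + (j - i - 1) + 1 by omega]
        exact ha _ (by omega)
    · intro k hk hkl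
      by_cases h1 : k ≤ i
      · simpa [h1] using hi k hk (by omega)
      · simpa [h1] using hi _ (by omega) (by omega)
  refine ⟨l, p, hl1, ?_, h0, hl, hi⟩
  intro i j hij hjl
  refine ⟨?_, A i j hij hjl, ?_⟩
  · intro heq
    rcases Nat.lt_or_ge j l with hj | hj
    · have := A i (j + 1) (by omega) hj (by rw [heq]; exact ha j hj)
      omega
    · obtain rfl : j = l := by omega
      rcases Nat.eq_zero_or_pos i with rfl | hi0
      · exact hne (by rw [← h0, heq, hl])
      · have h2 := ha (i - 1) (by omega)
        rw [Nat.sub_add_cancel hi0, heq] at h2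
        have := A (i - 1) j (by omega) le_rfl h2
        omega
  · rintro rfl
    exact ha i (by omega)

/-! ### A parity argument on a cycle -/

section Parity

theorem exists_last_before {p : ℕ → Prop} (h0 : p 0) {i : ℕ} (hi : 0 < i) :
    ∃ k < i, p k ∧ ∀ m, k < m → m < i → ¬ p m := by
  induction i with
  | zero => omega
  | succ i ih =>
    by_cases h : p i
    · exact ⟨i, by omega, h, fun m _ _ => by omega⟩
    · have hi' : 0 < i := Nat.pos_of_ne_zero (by rintro rfl; exact h h0)
      obtain ⟨k, h1, h2, h3⟩ := ih hi'
      refine ⟨k, by omega, h2, fun m h4 h5 => ?_⟩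
      rcases Nat.lt_succ_iff_lt_or_eq.1 h5 with h6 | rfl
      · exact h3 m h4 h6
      · exact h

theorem count_eq_of_none {p : ℕ → Prop} [DecidablePred p] {a b : ℕ} (hab : a ≤ b)
    (h : ∀ m, a ≤ m → m < b → ¬ p m) : Nat.count p b = Nat.count p a := by
  induction b, hab using Nat.le_induction with
  | base => rfl
  | succ b hab ih =>
    rw [Nat.count_succ, if_neg (h b hab (by omega)), ih (fun m h1 h2 => h m h1 (by omega)), add_zero]

theorem count_last {p : ℕ → Prop} [DecidablePred p] {k i : ℕ} (hki : k < i) (hk : p k)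
    (h : ∀ m, k < m → m < i → ¬ p m) : Nat.count p i = Nat.count p k + 1 := by
  rw [count_eq_of_none (a := k + 1) hki (fun m h1 h2 => h m h1 h2), Nat.count_succ, if_pos hk]

/-- If consecutive marks have odd distance, the number of marks before a mark has the parity of
its position. -/
theorem count_parity {p : ℕ → Prop} [DecidablePred p] (h0 : p 0)
    (hp : ∀ i d, 0 < d → p i → p (i + d) → (∀ m, i < m → m < i + d → ¬ p m) → Odd d) (i : ℕ)
    (hi : p i) : Nat.count p i % 2 = i % 2 := by
  induction i using Nat.strong_induction_on with
  | _ i ih =>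
    rcases Nat.eq_zero_or_pos i with rfl | hi0
    · simp
    · obtain ⟨k, h1, h2, h3⟩ := exists_last_before h0 hi0
      have h4 := count_last h1 h2 h3
      have h5 := ih k h1 h2
      have h6 := hp k (i - k) (by omega) h2 (by rwa [Nat.add_sub_cancel' h1.le])
        (by rwa [Nat.add_sub_cancel' h1.le])
      rw [Nat.odd_iff] at h6
      omega

/-- On a cycle of odd length `n` carrying marks of two kinds, it is impossible that consecutive
marks of equal kind always have odd distance while neighbouring marks of different kinds always have
distance of one fixed parity: between consecutive marks of the first kind there would be an even
number of marks of the second kind, but their total number is odd. -/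
theorem parity_false {n e : ℕ} (hn : Odd n) {T T' : ℕ → Prop}
    (per' : ∀ i, T' (i + n) ↔ T' i) (h0 : T 0) (h0n : T n)
    {b : ℕ} (hb : T' b) (disj : ∀ i, T i → ¬ T' i)
    (hT : ∀ i d, 0 < d → T i → T (i + d) → (∀ m, i < m → m < i + d → ¬ T m) → Odd d)
    (hT' : ∀ i d, 0 < d → T' i → T' (i + d) → (∀ m, i < m → m < i + d → ¬ T' m) → Odd d)
    (hM : ∀ i d, 0 < d → T i → T' (i + d) → (∀ m, i < m → m < i + d → ¬ T m ∧ ¬ T' m) →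
      Even (d + e))
    (hM' : ∀ i d, 0 < d → T' i → T (i + d) → (∀ m, i < m → m < i + d → ¬ T m ∧ ¬ T' m) →
      Even (d + e)) : False := by
  classical
  have hn0 : 0 < n := hn.pos
  have key : ∀ i, (T i → Nat.count T' i % 2 = 0) ∧
      (T' i → (Nat.count T' i + Nat.count T i + i + e + 1) % 2 = 0) := by
    intro i
    induction i using Nat.strong_induction_on with
    | _ i ih =>
      rcases Nat.eq_zero_or_pos i with rfl | hi0
      · exact ⟨fun _ => by simp, fun h => absurd h (disj 0 h0)⟩
      obtain ⟨k, h1, h2, h3⟩ := exists_last_before (p := fun i => T i ∨ T' i) (Or.inl h0) hi0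
      simp only [not_or] at h3
      have ihk := ih k h1
      have e1 : k + (i - k) = i := by omega
      rcases h2 with h2 | h2
      · have c1 := count_last h1 h2 (fun m a b => (h3 m a b).1)
        have c2 : Nat.count T' i = Nat.count T' k := count_eq_of_none h1.le (by
          intro m a b
          rcases a.eq_or_lt with rfl | a
          · exact disj _ h2
          · exact (h3 m a b).2)
        have c3 := ihk.1 h2
        have c4 := count_parity h0 hT k h2
        refine ⟨fun h => by omega, fun h => ?_⟩
        have := hM k (i - k) (by omega) h2 (by rwa [e1]) (by rwa [e1])
        rw [Nat.even_iff] at this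
        omega
      · have c1 := count_last h1 h2 (fun m a b => (h3 m a b).2)
        have c2 : Nat.count T i = Nat.count T k := count_eq_of_none h1.le (by
          intro m a b
          rcases a.eq_or_lt with rfl | a
          · exact fun h => disj _ h h2
          · exact (h3 m a b).1)
        have c3 := ihk.2 h2
        refine ⟨fun h => ?_, fun h => ?_⟩
        · have := hM' k (i - k) (by omega) h2 (by rwa [e1]) (by rwa [e1])
          rw [Nat.even_iff] at this
          have c4 := count_parity h0 hT i h
          omega
        · have := hT' k (i - k) (by omega) h2 (by rwa [e1])
            (by rw [e1]; exact fun m a b => (h3 m a b).2)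
          rw [Nat.odd_iff] at this
          omega
  have k1 := (key n).1 h0n
  have k2 := count_parity (p := fun k => T' (b + k)) hb (by
    intro i d h1 h2 h3 h4
    refine hT' (b + i) d h1 h2 (by rwa [add_assoc]) ?_
    intro m h5 h6
    have := h4 (m - b) (by omega) (by omega)
    rwa [Nat.add_sub_cancel' (by omega)] at this) n ((per' b).2 hb)
  have k3 := Nat.count_add T' b n
  have k4 := Nat.count_add T' n b
  have k5 : Nat.count (fun k => T' (n + k)) b = Nat.count T' b := by
    congr 1; funext k; rw [add_comm]; exact propext (per' k)
  rw [k5, add_comm n b] at k4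
  rw [Nat.odd_iff] at hn
  omega

end Parity

/-! ### Attachments of a connected set to an odd hole -/

/-- The hole formed by a stretch of the cycle and an induced path avoiding the cycle is odd. -/
theorem mixed_gap (hG : BEFree G) {n : ℕ} {c : ℕ → V} (hC : IsHole G n c) {i d l : ℕ} {q : ℕ → V}
    (hd : 1 ≤ d) (hdn : d + 2 ≤ n) (hl : 1 ≤ l) (hq : IsIPath G l q)
    (hne : ∀ k ≤ l, ∀ j, q k ≠ c j) (hin : ∀ k, 0 < k → k < l → ∀ j, ¬ G.Adj (q k) (c j))
    (h0 : G.Adj (q 0) (c i)) (hlast : G.Adj (q l) (c (i + d)))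
    (n0 : ∀ k, 0 < k → k ≤ d → ¬ G.Adj (q 0) (c (i + k)))
    (n1 : ∀ k, k < d → ¬ G.Adj (q l) (c (i + k))) : ¬ Even (d + l) := by
  intro hev
  have hp := hC.ipath i d hdn
  refine hG.even _ _ (hole_of_path (l := d + l)
    (p := fun k => if k ≤ d then c (i + k) else q (d + l + 1 - k)) (x := q 0) ?_ (by omega) ?_ ?_)
    (by rw [Nat.even_add]; simpa using hev)
  · intro a b hab hb
    by_cases h1 : b ≤ d
    · have h2 : a ≤ d := by omega
      simpa only [h1, h2, if_true] using hp a b hab h1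
    by_cases h2 : a ≤ d
    · simp only [h1, h2, if_true, if_false]
      refine ⟨(hne _ (by omega) _).symm, ?_⟩
      rw [G.adj_comm]
      by_cases h3 : b = d + 1
      · rw [show d + l + 1 - b = l by omega]
        by_cases h4 : a = d
        · subst h4; simp [h3, hlast]
        · have := n1 a (by omega)
          simp only [this, false_iff]; omega
      · have := hin (d + l + 1 - b) (by omega) (by omega) (i + a)
        simp only [this, false_iff]; omega
    · simp only [h1, h2, if_false]
      have := hq (d + l + 1 - b) (d + l + 1 - a) (by omega) (by omega)
      refine ⟨this.1.symm, ?_⟩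
      rw [G.adj_comm, this.2]; omega
  · intro k hk
    split_ifs with h
    · exact hne 0 (by omega) _
    · exact (hq 0 _ (by omega) (by omega)).1
  · intro k hk
    split_ifs with h
    · rcases Nat.eq_zero_or_pos k with rfl | h1
      · simpa using h0
      · have := n0 k h1 h
        simp only [this, false_iff]; omega
    · rw [(hq 0 _ (by omega) (by omega)).2]; omega

/-- Consecutive neighbours on an odd hole of a vertex whose neighbourhood on the hole is stable
have odd distance. -/
theorem same_gap (hG : BEFree G) {n : ℕ} {c : ℕ → V} (hC : IsHole G n c) (hn : Odd n) {t : V}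
    (hne : ∀ j, t ≠ c j) (hst : ∀ j, G.Adj t (c j) → ¬ G.Adj t (c (j + 1))) {i d : ℕ} (hd : 0 < d)
    (h1 : G.Adj t (c i)) (h2 : G.Adj t (c (i + d)))
    (h3 : ∀ m, i < m → m < i + d → ¬ G.Adj t (c m)) : Odd d := by
  by_contra hodd
  rw [Nat.not_odd_iff_even] at hodd
  have hdn : d ≤ n := by
    by_contra h
    exact h3 (i + n) (by have := hn.pos; omega) (by omega) (by rwa [hC.per])
  have hdn' : d ≠ n := by rintro rfl; exact (Nat.not_odd_iff_even.2 hodd) hn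
  by_cases h : d + 1 = n
  · apply hst _ h2
    rw [add_assoc, h, hC.per]; exact h1
  have : d ≠ 1 := by rintro rfl; simp at hodd
  refine hG.even _ _ (hole_of_path (hC.ipath i d (by omega)) (by omega) (fun k _ => hne _) ?_)
    (by rw [Nat.even_add]; simpa using hodd)
  intro k hk
  rcases Nat.eq_zero_or_pos k with rfl | hk0
  · simpa using h1
  · rcases hk.eq_or_lt with rfl | hk'
    · simpa using h2
    · have := h3 (i + k) (by omega) (by omega)
      simp only [this, false_iff]; omega

theorem IsHole.mod {n : ℕ} {c : ℕ → V} (h : IsHole G n c) (i : ℕ) : c (i % n) = c i := by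
  conv_rhs => rw [← Nat.mod_add_div' i n]
  exact (h.per_mul _ _).symm

theorem IsHole.succ_congr {n : ℕ} {c : ℕ → V} (h : IsHole G n c) {i j : ℕ} (hij : c i = c j) :
    c (i + 1) = c (j + 1) := by
  have hn := h.four
  have key : ∀ a b, a % n < b % n → c a ≠ c b := by
    intro a b hab
    have := h.ne (a % n) (b % n - a % n) (by omega) (by have := Nat.mod_lt b (y := n); omega)
    rwa [Nat.add_sub_cancel' hab.le, h.mod, h.mod] at this
  have e : i % n = j % n := by
    rcases lt_trichotomy (i % n) (j % n) with h1 | h1 | h1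
    · exact absurd hij (key _ _ h1)
    · exact h1
    · exact absurd hij.symm (key _ _ h1)
  rw [← h.mod (i + 1), ← h.mod (j + 1), Nat.add_mod, e, ← Nat.add_mod]

theorem IsHole.adj_cases {n : ℕ} {c : ℕ → V} (hC : IsHole G n c) {i j : ℕ}
    (h : G.Adj (c i) (c j)) : c j = c (i + 1) ∨ c i = c (j + 1) := by
  obtain ⟨d, hd, e⟩ := hC.exists_off i j
  have h0 : 0 < d := Nat.pos_of_ne_zero (by rintro rfl; simp [e] at h)
  rw [e, hC.adj i d h0 hd] at h
  rcases h with rfl | h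
  · exact Or.inl e
  · right
    rw [hC.succ_congr e, add_assoc, h, hC.per]

/-- `t` lies outside the hole `c`, is stable on it, and has neighbours both on it and in `E`. -/
structure Att (G : SimpleGraph V) (c : ℕ → V) (E : Set V) (t : V) : Prop where
  inE : ∃ e ∈ E, G.Adj t e
  onC : ∃ i, G.Adj t (c i)
  ne : ∀ i, t ≠ c i
  stable : ∀ i j, G.Adj t (c i) → G.Adj t (c j) → ¬ G.Adj (c i) (c j)

section Attach

variable {n : ℕ} {c : ℕ → V} {E : Set V}

/-- Bull-freeness: an attachment adjacent to two consecutive cycle vertices is adjacent to all. -/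
theorem complete_or_att (hG : BEFree G) (hC : IsHole G n c)
    (hanti : ∀ e ∈ E, ∀ i, e ≠ c i ∧ ¬ G.Adj e (c i)) {t : V} (h1 : ∃ e ∈ E, G.Adj t e)
    (h2 : ∃ i, G.Adj t (c i)) : (∀ i, G.Adj t (c i)) ∨ Att G c E t := by
  have hn : 5 ≤ n := by
    have := hC.four
    rcases this.eq_or_lt with h | h
    · exact (hG.even n c hC (by rw [← h]; decide)).elim
    · exact h
  obtain ⟨e, he, hte⟩ := h1
  have hne : ∀ i, t ≠ c i := by
    rintro i rfl
    exact (hanti e he i).2 hte.symm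
  by_cases hst : ∀ i, G.Adj t (c i) → ¬ G.Adj t (c (i + 1))
  · right
    refine ⟨⟨e, he, hte⟩, h2, hne, ?_⟩
    intro i j hi hj hij
    rcases hC.adj_cases hij with h | h
    · exact hst i hi (h ▸ hj)
    · exact hst j hj (h ▸ hi)
  · left
    push Not at hst
    obtain ⟨i, hi, hi'⟩ := hst
    have key : ∀ m, G.Adj t (c (i + m)) ∧ G.Adj t (c (i + m + 1)) := by
      intro m
      induction m with
      | zero => exact ⟨hi, hi'⟩
      | succ m ih =>
        refine ⟨ih.2, ?_⟩
        by_contra hno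
        have a1 := hC.adj_succ (i + m)
        have a2 := hC.adj_succ (i + m + 1)
        have a3 := hC.not_adj (i + m) 2 le_rfl (by omega)
        exact hG.bull t (c (i + m + 1)) (c (i + m)) e (c (i + (m + 1) + 1)) ih.2 ih.1 a1.symm hte
          a2 (hanti e he _).2 (hanti e he _).2 (fun h => hno h.symm) (fun h => a3 h.symm)
          (hanti e he _).2
    intro j
    obtain ⟨d, -, e⟩ := hC.exists_off i j
    rw [e]; exact (key d).1

/-- The gap between neighbouring marks of two attachments `t = q 0` and `t' = q l` joined by the
induced path `q`: a gap of length `n - 1` would be the exceptional configuration `hexc`, a shorter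
one gives a hole through `q`. -/
theorem att_gap (hG : BEFree G) (hC : IsHole G n c) {l : ℕ} {q : ℕ → V} (hl : 1 ≤ l)
    (hq : IsIPath G l q) (qne : ∀ k ≤ l, ∀ j, q k ≠ c j)
    (qin : ∀ k, 0 < k → k < l → ∀ j, ¬ G.Adj (q k) (c j))
    (hdis : ∀ i, G.Adj (q 0) (c i) → ¬ G.Adj (q l) (c i))
    (hexc : ∀ i j, G.Adj (c i) (c j) → (∀ k, G.Adj (q 0) (c k) → c k = c i) →
      ¬ ∀ k, G.Adj (q l) (c k) → c k = c j) {i d : ℕ} (hd : 0 < d) (h1 : G.Adj (q 0) (c i))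
    (h2 : G.Adj (q l) (c (i + d)))
    (h3 : ∀ m, i < m → m < i + d → ¬ G.Adj (q 0) (c m) ∧ ¬ G.Adj (q l) (c m)) :
    Even (d + (l + 1)) := by
  have hn4 := hC.four
  have hdn : d < n := by
    by_contra h
    rcases (not_lt.1 h).eq_or_lt with h | h
    · rw [← h, hC.per] at h2
      exact hdis _ h1 h2
    · exact (h3 (i + n) (by omega) (by omega)).1 (by rwa [hC.per])
  by_cases hd' : d + 1 = n
  · exfalso
    have key : ∀ k, (G.Adj (q 0) (c k) ∨ G.Adj (q l) (c k)) → c k = c i ∨ c k = c (i + d) := by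
      intro k hk
      obtain ⟨m, hm, em⟩ := hC.exists_off i k
      rcases Nat.eq_zero_or_pos m with rfl | h0
      · exact Or.inl em
      by_cases h4 : m = d
      · right; rw [em, h4]
      · have := h3 (i + m) (by omega) (by omega)
        rw [em] at hk
        tauto
    refine hexc i (i + d) ((hC.adj i d hd hdn).2 (Or.inr hd')) ?_ ?_
    · intro k hk
      rcases key k (Or.inl hk) with h | h
      · exact h
      · rw [h] at hk
        exact absurd h2 (hdis _ hk)
    · intro k hk
      rcases key k (Or.inr hk) with h | h
      · rw [h] at hk
        exact absurd hk (hdis _ h1)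
      · exact h
  have := mixed_gap hG hC (i := i) hd (by omega) hl hq qne qin h1 h2
    (by
      intro k hk hkd h
      rcases hkd.eq_or_lt with rfl | hkd
      · exact hdis _ h h2
      · exact (h3 (i + k) (by omega) (by omega)).1 h)
    (by
      intro k hkd h
      rcases Nat.eq_zero_or_pos k with rfl | hk
      · exact hdis _ h1 h
      · exact (h3 (i + k) (by omega) (by omega)).2 h)
  rw [← add_assoc, Nat.even_add_one]
  exact this

/-- Two attachments share a neighbour on the hole, unless each has a single neighbour there and
these two are adjacent. -/
theorem att_pair (hG : BEFree G) (hC : IsHole G n c) (hE : IsConn G E)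
    (hanti : ∀ e ∈ E, ∀ i, e ≠ c i ∧ ¬ G.Adj e (c i)) {t t' : V} (ht : Att G c E t)
    (ht' : Att G c E t') (hne : t ≠ t') :
    (∃ i, G.Adj t (c i) ∧ G.Adj t' (c i)) ∨ ∃ i j, G.Adj (c i) (c j) ∧
      (∀ k, G.Adj t (c k) → c k = c i) ∧ (∀ k, G.Adj t' (c k) → c k = c j) := by
  have hn : Odd n := Nat.not_even_iff_odd.1 (hG.even n c hC)
  have hn4 := hC.four
  by_contra hcon
  push Not at hcon
  obtain ⟨hdis, hexc⟩ := hcon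
  obtain ⟨e, he, hte⟩ := ht.inE
  obtain ⟨e', he', hte'⟩ := ht'.inE
  obtain ⟨l, q, hl, hq, q0, ql, hqE⟩ := exists_ipath hE he he' hte hte' hne
  obtain ⟨a, ha⟩ := ht.onC
  obtain ⟨b, hb⟩ := ht'.onC
  obtain ⟨b', -, hbb⟩ := hC.exists_off a b
  rw [hbb] at hb
  have hD := hC.shift a
  have qne : ∀ k ≤ l, ∀ j, q k ≠ c j := by
    intro k hk j
    rcases Nat.eq_zero_or_pos k with rfl | h0
    · rw [q0]; exact ht.ne j
    rcases hk.eq_or_lt with rfl | hk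
    · rw [ql]; exact ht'.ne j
    · exact (hanti _ (hqE k h0 hk) j).1
  have qin : ∀ k, 0 < k → k < l → ∀ j, ¬ G.Adj (q k) (c j) :=
    fun k h0 hk j => (hanti _ (hqE k h0 hk) j).2
  refine parity_false (e := l + 1) hn (T := fun k => G.Adj t (c (a + k)))
    (T' := fun k => G.Adj t' (c (a + k))) ?_ ha ?_ hb (fun i h => hdis _ h) ?_ ?_ ?_ ?_
  · intro i
    rw [← add_assoc, hC.per]
  · rw [hC.per]; exact ha
  · intro i d hd h1 h2 h3
    exact same_gap hG hD hn (fun j => ht.ne _)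
      (fun j h h' => ht.stable _ _ h h' (hD.adj_succ j)) hd h1 h2 h3
  · intro i d hd h1 h2 h3
    exact same_gap hG hD hn (fun j => ht'.ne _)
      (fun j h h' => ht'.stable _ _ h h' (hD.adj_succ j)) hd h1 h2 h3
  · intro i d hd h1 h2 h3
    subst q0 ql
    refine att_gap hG hD hl hq (fun k hk j => qne k hk _) (fun k h0 h j => qin k h0 h _)
      (fun i => hdis _) ?_ hd h1 h2 h3
    intro i j hij h4 h5
    obtain ⟨k, hk, hk'⟩ := hexc (a + i) (a + j) hij (fun k hk => by
      obtain ⟨m, -, em⟩ := hC.exists_off a k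
      rw [em] at hk ⊢; exact h4 m hk)
    obtain ⟨m, -, em⟩ := hC.exists_off a k
    rw [em] at hk hk'
    exact hk' (h5 m hk)
  · intro i d hd h1 h2 h3
    subst q0 ql
    have e0 : l - 0 = l := rfl
    refine att_gap hG hD hl hq.reverse (fun k hk j => qne _ (Nat.sub_le _ _) _)
      (fun k h0 h j => qin _ (by omega) (by omega) _)
      (fun i h h' => hdis (a + i) (by simpa using h') (by simpa using h)) ?_ hd (by simpa using h1)
      (by simpa using h2) (fun m a b => by simpa using (h3 m a b).symm)
    simp only [Nat.sub_self, Nat.sub_zero]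
    intro i j hij h4 h5
    obtain ⟨k, hk, hk'⟩ := hexc (a + j) (a + i) hij.symm (fun k hk => by
      obtain ⟨m, -, em⟩ := hC.exists_off a k
      rw [em] at hk ⊢; exact h5 m hk)
    obtain ⟨m, -, em⟩ := hC.exists_off a k
    rw [em] at hk hk'
    exact hk' (h4 m hk)

/-- Adjacent attachments with a common neighbour on the hole have nested neighbourhoods there. -/
theorem att_nested (hG : BEFree G) {t t' : V} (ht : Att G c E t) (ht' : Att G c E t')
    (hadj : G.Adj t t') {i : ℕ} (h1 : G.Adj t (c i)) (h2 : G.Adj t' (c i)) :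
    (∀ k, G.Adj t (c k) → G.Adj t' (c k)) ∨ (∀ k, G.Adj t' (c k) → G.Adj t (c k)) := by
  by_contra hcon
  push Not at hcon
  obtain ⟨⟨k, hk, hk'⟩, m, hm, hm'⟩ := hcon
  by_cases h : G.Adj (c k) (c m)
  · exact hG.c4 t (c k) (c m) t' hk h hm.symm hadj.symm hm' (fun h => hk' h.symm) (ht.ne _)
      (ht'.ne _).symm
  · exact hG.bull t t' (c i) (c k) (c m) hadj h1 h2 hk hm (fun h => hk' h.symm)
      (ht.stable _ _ hk h1) (fun h => hm' h.symm) (ht'.stable _ _ hm h2) h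

/-- Nonadjacent attachments have at most one common neighbour on the hole. -/
theorem att_unique (hG : BEFree G) {t t' : V} (ht : Att G c E t) (hne : t ≠ t')
    (hadj : ¬ G.Adj t t') {i j : ℕ} (h1 : G.Adj t (c i)) (h2 : G.Adj t' (c i)) (h3 : G.Adj t (c j))
    (h4 : G.Adj t' (c j)) : c i = c j := by
  by_contra h
  exact hG.c4 t (c i) t' (c j) h1 h2.symm h4 h3.symm hadj (ht.stable _ _ h1 h3) hne h

/-- Three pairwise intersecting attachments have a common neighbour on the hole. -/
theorem att_triple (hG : BEFree G) {t1 t2 t3 : V} (a1 : Att G c E t1) (a2 : Att G c E t2)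
    (a3 : Att G c E t3) {i j k : ℕ} (h1 : G.Adj t1 (c i)) (h2 : G.Adj t2 (c i))
    (h3 : G.Adj t2 (c j)) (h4 : G.Adj t3 (c j)) (h5 : G.Adj t3 (c k)) (h6 : G.Adj t1 (c k)) :
    ∃ m, G.Adj t1 (c m) ∧ G.Adj t2 (c m) ∧ G.Adj t3 (c m) := by
  by_contra hcon
  push Not at hcon
  have n12 : ¬ G.Adj t1 t2 := fun h => by
    rcases att_nested hG a1 a2 h h1 h2 with h | h
    · exact hcon k h6 (h k h6) h5
    · exact hcon j (h j h3) h3 h4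
  have n23 : ¬ G.Adj t2 t3 := fun h => by
    rcases att_nested hG a2 a3 h h3 h4 with h | h
    · exact hcon i h1 h2 (h i h2)
    · exact hcon k h6 (h k h5) h5
  have n13 : ¬ G.Adj t1 t3 := fun h => by
    rcases att_nested hG a1 a3 h h6 h5 with h | h
    · exact hcon i h1 h2 (h i h1)
    · exact hcon j (h j h4) h3 h4
  have m1 : ¬ G.Adj t1 (c j) := fun h => hcon j h h3 h4
  have m2 : ¬ G.Adj t2 (c k) := fun h => hcon k h6 h h5
  have m3 : ¬ G.Adj t3 (c i) := fun h => hcon i h1 h2 h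
  exact hG.c6 h1 h2.symm h3 h4.symm h5 h6.symm n12 m1 n13 (a2.stable _ _ h2 h3)
    (fun h => m3 h.symm) (a1.stable _ _ h1 h6) n23 m2 (a3.stable _ _ h4 h5)

/-- Pairwise intersecting attachments have a common neighbour on the hole. -/
theorem att_helly [Finite V] (hG : BEFree G) {T : Set V} (hT : T.Nonempty)
    (ha : ∀ t ∈ T, Att G c E t)
    (hpair : ∀ t ∈ T, ∀ t' ∈ T, ∃ i, G.Adj t (c i) ∧ G.Adj t' (c i)) :
    ∃ i, ∀ t ∈ T, G.Adj t (c i) := by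
  let N : V → Set V := fun t => {x | G.Adj t x ∧ ∃ k, x = c k}
  obtain ⟨t0, ht0, hmin⟩ := (InvImage.wf N (wellFounded_lt (α := Set V))).has_min T hT
  have hmin' : ∀ t ∈ T, (∀ k, G.Adj t (c k) → G.Adj t0 (c k)) →
      ∀ k, G.Adj t0 (c k) → G.Adj t (c k) := by
    intro t ht h k hk
    by_contra hno
    refine hmin t ht ⟨?_, fun h' => hno (h' ⟨hk, k, rfl⟩).1⟩
    rintro _ ⟨h1, k, rfl⟩
    exact ⟨h k h1, k, rfl⟩
  by_cases hall : ∀ t ∈ T, ∀ k, G.Adj t0 (c k) → G.Adj t (c k)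
  · obtain ⟨i, hi⟩ := (ha t0 ht0).onC
    exact ⟨i, fun t ht => hall t ht i hi⟩
  push Not at hall
  obtain ⟨t1, ht1, k, hk, hk'⟩ := hall
  obtain ⟨i, hi0, hi1⟩ := hpair t0 ht0 t1 ht1
  have hne : t0 ≠ t1 := by rintro rfl; exact hk' hk
  have hnadj : ¬ G.Adj t0 t1 := fun h => by
    rcases att_nested hG (ha _ ht0) (ha _ ht1) h hi0 hi1 with h | h
    · exact hk' (h k hk)
    · exact hk' (hmin' t1 ht1 h k hk)
  refine ⟨i, fun t ht => ?_⟩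
  obtain ⟨j, hj1, hj⟩ := hpair t1 ht1 t ht
  obtain ⟨m, hm, hm0⟩ := hpair t ht t0 ht0
  obtain ⟨r, r0, r1, r2⟩ := att_triple hG (ha _ ht0) (ha _ ht1) (ha _ ht) hi0 hi1 hj1 hj hm hm0
  rwa [att_unique hG (ha _ ht0) hne hnadj hi0 hi1 r0 r1]

/-- All vertices with neighbours both on an odd hole and in a connected set anticomplete to it
are adjacent to an end of one fixed edge of the hole. -/
theorem att_edge [Finite V] (hG : BEFree G) (hC : IsHole G n c) (hE : IsConn G E)
    (hanti : ∀ e ∈ E, ∀ i, e ≠ c i ∧ ¬ G.Adj e (c i)) {T : Set V}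
    (h1 : ∀ t ∈ T, ∃ e ∈ E, G.Adj t e) (h2 : ∀ t ∈ T, ∃ i, G.Adj t (c i)) :
    ∃ i, ∀ t ∈ T, G.Adj t (c i) ∨ G.Adj t (c (i + 1)) := by
  have hca : ∀ t ∈ T, (∀ i, G.Adj t (c i)) ∨ Att G c E t := fun t ht =>
    complete_or_att hG hC hanti (h1 t ht) (h2 t ht)
  by_cases hexc : ∃ t1 ∈ T, ∃ t2 ∈ T, Att G c E t1 ∧ Att G c E t2 ∧ ∃ i j, G.Adj (c i) (c j) ∧
      (∀ k, G.Adj t1 (c k) → c k = c i) ∧ (∀ k, G.Adj t2 (c k) → c k = c j)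
  · obtain ⟨t1, -, t2, -, a1, a2, i, j, hij, o1, o2⟩ := hexc
    have key : ∀ t ∈ T, G.Adj t (c i) ∨ G.Adj t (c j) := by
      intro t ht
      rcases hca t ht with h | a3
      · exact Or.inl (h i)
      by_contra hcon
      push Not at hcon
      have b1 : ∃ k, (∀ m, G.Adj t (c m) → c m = c k) ∧ G.Adj (c k) (c i) := by
        obtain ⟨p, hp⟩ := a1.onC
        by_cases hne : t = t1
        · subst hne
          rw [o1 p hp] at hp
          exact absurd hp hcon.1
        rcases att_pair hG hC hE hanti a3 a1 hne with ⟨m, h3, h4⟩ | ⟨k, m, h3, h4, h5⟩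
        · rw [o1 m h4] at h3
          exact absurd h3 hcon.1
        · refine ⟨k, h4, ?_⟩
          rwa [← o1 p hp, h5 p hp]
      have b2 : ∃ k, (∀ m, G.Adj t (c m) → c m = c k) ∧ G.Adj (c k) (c j) := by
        obtain ⟨p, hp⟩ := a2.onC
        by_cases hne : t = t2
        · subst hne
          rw [o2 p hp] at hp
          exact absurd hp hcon.2
        rcases att_pair hG hC hE hanti a3 a2 hne with ⟨m, h3, h4⟩ | ⟨k, m, h3, h4, h5⟩
        · rw [o2 m h4] at h3
          exact absurd h3 hcon.2
        · refine ⟨k, h4, ?_⟩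
          rwa [← o2 p hp, h5 p hp]
      obtain ⟨k, hk, hki⟩ := b1
      obtain ⟨k', hk', hkj⟩ := b2
      obtain ⟨p, hp⟩ := a3.onC
      rw [← hk p hp] at hki
      rw [← hk' p hp] at hkj
      exact hC.no_triangle p i j hki hkj hij
    rcases hC.adj_cases hij with h | h
    · exact ⟨i, fun t ht => h ▸ key t ht⟩
    · exact ⟨j, fun t ht => h ▸ (key t ht).symm⟩
  · rcases Set.eq_empty_or_nonempty {t ∈ T | Att G c E t} with hem | hne
    · refine ⟨0, fun t ht => ?_⟩
      rcases hca t ht with h | h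
      · exact Or.inl (h 0)
      · exact absurd (show t ∈ {t ∈ T | Att G c E t} from ⟨ht, h⟩) (by simp [hem])
    · obtain ⟨i, hi⟩ := att_helly hG hne (fun t ht => ht.2) (by
        rintro t ⟨ht, at'⟩ t' ⟨ht', at''⟩
        by_cases hne : t = t'
        · subst hne
          obtain ⟨i, hi⟩ := at'.onC
          exact ⟨i, hi, hi⟩
        rcases att_pair hG hC hE hanti at' at'' hne with h | h
        · exact h
        · exact absurd ⟨t, ht, t', ht', at', at'', h⟩ hexc)
      refine ⟨i, fun t ht => Or.inl ?_⟩
      rcases hca t ht with h | h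
      · exact h i
      · exact hi t ⟨ht, h⟩

end Attach

/-! ### Simplicial vertices in hole-free sets -/

/-- No hole of `G` lies inside `s`. -/
def HoleFree (G : SimpleGraph V) (s : Set V) : Prop := ∀ n c, IsHole G n c → ¬ ∀ i, c i ∈ s

/-- `z` is a simplicial vertex of the subgraph induced on `s`. -/
def Simplicial (G : SimpleGraph V) (s : Set V) (z : V) : Prop :=
  z ∈ s ∧ ∀ x ∈ s, ∀ y ∈ s, G.Adj z x → G.Adj z y → x ≠ y → G.Adj x y

/-- Dirac's theorem: a non-neighbour of `v` exists in a hole-free set only if a simplicial one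
does. -/
theorem dirac [Finite V] (s : Set V) (hs : HoleFree G s) (v : V) (hv : v ∈ s) (u : V) (hu : u ∈ s)
    (huv : u ≠ v) (hvu : ¬ G.Adj v u) : ∃ z, Simplicial G s z ∧ z ≠ v ∧ ¬ G.Adj v z := by
  induction s using WellFoundedLT.induction generalizing v u with
  | _ s ih =>
  set M : Set V := {x | x ∈ s ∧ x ≠ v ∧ ¬ G.Adj v x} with hM
  set D := comp G M u with hD
  set S : Set V := {x | x ∈ s ∧ G.Adj v x ∧ ∃ d ∈ D, G.Adj x d} with hS
  have huD : u ∈ D := mem_comp_self ⟨hu, huv, hvu⟩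
  have hDM : ∀ d ∈ D, d ∈ s ∧ d ≠ v ∧ ¬ G.Adj v d :=
    fun d h => (comp_subset h : d ∈ M)
  have hclique : ∀ x ∈ S, ∀ y ∈ S, x ≠ y → G.Adj x y := by
    rintro x ⟨hxs, hvx, d, hd, hxd⟩ y ⟨hys, hvy, d', hd', hyd⟩ hne
    by_contra hxy
    obtain ⟨l, p, hl, hp, p0, pl, hpD⟩ := exists_ipath comp_conn hd hd' hxd hyd hne
    have hl2 : 2 ≤ l := by
      by_contra h
      obtain rfl : l = 1 := by omega
      have := (hp 0 1 (by omega) le_rfl).2.2 rfl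
      rw [p0, pl] at this
      exact hxy this
    have hmem : ∀ k ≤ l, k = 0 ∨ k = l ∨ p k ∈ D := by
      intro k hk
      by_cases h0 : k = 0
      · exact Or.inl h0
      by_cases h1 : k = l
      · exact Or.inr (Or.inl h1)
      · exact Or.inr (Or.inr (hpD k (by omega) (by omega)))
    refine hs _ _ (hole_of_path (x := v) hp hl2 ?_ ?_) ?_
    · intro k hk
      rcases hmem k hk with rfl | rfl | h
      · rw [p0]; exact hvx.ne
      · rw [pl]; exact hvy.ne
      · exact (hDM _ h).2.1.symm
    · intro k hk
      rcases hmem k hk with rfl | rfl | h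
      · simpa [p0] using hvx
      · simpa [pl] using hvy
      · have h1 : k ≠ 0 := by rintro rfl; rw [p0] at h; exact (hDM _ h).2.2 hvx
        have h2 : k ≠ l := by rintro rfl; rw [pl] at h; exact (hDM _ h).2.2 hvy
        simpa [h1, h2] using (hDM _ h).2.2
    · intro i
      split_ifs with h
      · rcases hmem _ h with h | h | h
        · rw [h, p0]; exact hxs
        · rw [h, pl]; exact hys
        · exact (hDM _ h).1
      · exact hv
  have hsub : D ∪ S ⊆ s := by
    rintro x (h | h)
    · exact (hDM x h).1
    · exact h.1
  have hlt : D ∪ S < s := by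
    refine ⟨hsub, fun h => ?_⟩
    rcases h hv with h | h
    · exact (hDM v h).2.1 rfl
    · exact h.2.1.ne rfl
  have hfree : HoleFree G (D ∪ S) := fun n c hc h => hs n c hc (fun i => hsub (h i))
  obtain ⟨z, hzD, hz⟩ : ∃ z ∈ D, Simplicial G (D ∪ S) z := by
    by_cases h1 : ∃ x ∈ S, ∃ y ∈ D ∪ S, y ≠ x ∧ ¬ G.Adj x y
    · obtain ⟨x, hx, y, hy, hyx, hxy⟩ := h1
      obtain ⟨z, hz, hzx, hxz⟩ := ih _ hlt hfree x (Or.inr hx) y hy hyx hxy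
      rcases hz.1 with h | h
      · exact ⟨z, h, hz⟩
      · exact absurd (hclique x hx z h hzx.symm) hxz
    push Not at h1
    by_cases h2 : ∃ x ∈ D, ∃ y ∈ D ∪ S, y ≠ x ∧ ¬ G.Adj x y
    · obtain ⟨x, hx, y, hy, hyx, hxy⟩ := h2
      obtain ⟨z, hz, hzx, hxz⟩ := ih _ hlt hfree x (Or.inl hx) y hy hyx hxy
      rcases hz.1 with h | h
      · exact ⟨z, h, hz⟩
      · exact absurd (h1 z h x (Or.inl hx) hzx.symm).symm hxz
    push Not at h2
    refine ⟨u, huD, Or.inl huD, fun x hx y hy _ _ hxy => ?_⟩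
    rcases hx with hx | hx
    · exact h2 x hx y hy hxy.symm
    · exact h1 x hx y hy hxy.symm
  have hnb : ∀ x ∈ s, G.Adj z x → x ∈ D ∪ S := by
    intro x hx hzx
    by_cases hxM : x ∈ M
    · exact Or.inl (comp_adj hzD hxM hzx)
    · right
      refine ⟨hx, ?_, z, hzD, hzx.symm⟩
      by_contra h
      refine hxM ⟨hx, ?_, h⟩
      rintro rfl
      exact (hDM z hzD).2.2 hzx.symm
  exact ⟨z, ⟨hsub hz.1, fun x hx y hy h1 h2 => hz.2 x (hnb x hx h1) y (hnb y hy h2) h1 h2⟩,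
    (hDM z hzD).2⟩

/-! ### Vertices whose neighbourhood has neither a stable triple nor an induced four-vertex path -/

/-- The neighbourhood of `z` in `s` contains no three pairwise nonadjacent vertices and no induced
path on four vertices. -/
structure GoodV (G : SimpleGraph V) (s : Set V) (z : V) : Prop where
  triple : ∀ x ∈ s, ∀ y ∈ s, ∀ w ∈ s, G.Adj z x → G.Adj z y → G.Adj z w → x ≠ y → y ≠ w → x ≠ w →
    ¬ G.Adj x y → ¬ G.Adj y w → ¬ G.Adj x w → False
  path : ∀ p ∈ s, ∀ q ∈ s, ∀ r ∈ s, ∀ t ∈ s, G.Adj z p → G.Adj z q → G.Adj z r → G.Adj z t →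
    G.Adj p q → G.Adj q r → G.Adj r t → ¬ G.Adj p r → ¬ G.Adj p t → ¬ G.Adj q t → False

/-- The common neighbours of two distinct nonadjacent vertices form a clique. -/
theorem common_clique (hG : BEFree G) {z v x y : V} (hzv : ¬ G.Adj v z) (hne : z ≠ v)
    (h1 : G.Adj z x) (h2 : G.Adj z y) (h3 : G.Adj v x) (h4 : G.Adj v y) (hxy : x ≠ y) :
    G.Adj x y := by
  by_contra h
  exact hG.c4 z x v y h1 h3.symm h4 h2.symm (fun h => hzv h.symm) h hne hxy

/-- If `z` is complete to the induced path `p q r t` and `v ≁ z` has exactly the neighbours `r, t`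
on the path, then `z` dominates `q`. -/
theorem gem_dominates (hG : BEFree G) {z p q r t v : V} (zp : G.Adj z p) (zq : G.Adj z q)
    (zr : G.Adj z r) (zt : G.Adj z t) (pq : G.Adj p q) (qr : G.Adj q r) (rt : G.Adj r t)
    (pr : ¬ G.Adj p r) (pt : ¬ G.Adj p t) (qt : ¬ G.Adj q t) (vr : G.Adj v r)
    (vz : ¬ G.Adj v z) (vp : ¬ G.Adj v p) (vq : ¬ G.Adj v q) {x : V} (hx : G.Adj q x)
    (hxz : x ≠ z) : G.Adj z x := by
  by_contra zx
  have n1 : q ≠ t := by rintro rfl; exact pt pq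
  have n2 : p ≠ r := by rintro rfl; exact pt rt
  have n3 : v ≠ q := by rintro rfl; exact vp pq.symm
  have xt : ¬ G.Adj x t := fun h => hG.c4 x t z q h zt.symm zq hx (fun h => zx h.symm)
    (fun h => qt h.symm) hxz n1.symm
  by_cases xv : G.Adj v x
  · by_cases xp : G.Adj x p
    · by_cases xr : G.Adj x r
      · exact hG.c4 p x r z xp.symm xr zr.symm zp pr (fun h => zx h.symm) n2 hxz
      · exact hG.c4 x v r q xv.symm vr qr.symm hx xr vq (by rintro rfl; exact pr xp.symm) n3
    · exact hG.bull q z p x t zq.symm pq.symm zp hx zt (fun h => zx h.symm) xp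
        (fun h => qt h.symm) (fun h => pt h.symm) xt
  · by_cases xr : G.Adj x r
    · by_cases xp : G.Adj x p
      · exact hG.c4 p x r z xp.symm xr zr.symm zp pr (fun h => zx h.symm) n2 hxz
      · exact hG.bull q r x p v qr hx xr.symm pq.symm vr.symm pr (fun h => xp h.symm) vq xv
          (fun h => vp h.symm)
    · exact hG.bull q r z x v qr zq.symm zr.symm hx vr.symm xr (fun h => zx h.symm) vq vz
        (fun h => xv h.symm)

/-- `D` is a component (or empty) of the part of `s` anticomplete to the edge `v₁v₂`, and is
hole-free. -/
structure Base (G : SimpleGraph V) (s : Set V) (v₁ v₂ : V) (D : Set V) : Prop where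
  adj : G.Adj v₁ v₂
  sub : D ⊆ s
  anti₁ : ∀ x ∈ D, ¬ G.Adj v₁ x
  anti₂ : ∀ x ∈ D, ¬ G.Adj v₂ x
  cover : ∀ z ∈ D, ∀ x ∈ s, G.Adj z x → x ∈ D ∨ G.Adj v₁ x ∨ G.Adj v₂ x
  holeFree : HoleFree G D
  conn : IsConn G D

/-- `d` has a neighbour in `s` that is a private neighbour of `v₁`: adjacent to `v₁` but not to
`v₂`. -/
def Sees (G : SimpleGraph V) (s : Set V) (v₁ v₂ d : V) : Prop :=
  ∃ a ∈ s, G.Adj d a ∧ G.Adj v₁ a ∧ ¬ G.Adj v₂ a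

section BaseLemmas

variable {s D : Set V} {v₁ v₂ : V}

theorem Base.symm (h : Base G s v₁ v₂ D) : Base G s v₂ v₁ D :=
  ⟨h.adj.symm, h.sub, h.anti₂, h.anti₁, fun z hz x hx hzx => by have := h.cover z hz x hx hzx; tauto,
    h.holeFree, h.conn⟩

/-- Private neighbours of the two ends of an edge are nonadjacent. -/
theorem private_not_adj (hG : BEFree G) (h : G.Adj v₁ v₂) {a b : V} (ha : G.Adj v₁ a)
    (ha' : ¬ G.Adj v₂ a) (hb : G.Adj v₂ b) (hb' : ¬ G.Adj v₁ b) (h1 : a ≠ v₂) (h2 : b ≠ v₁) :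
    ¬ G.Adj a b := fun hab =>
  hG.c4 a v₁ v₂ b ha.symm h hb hab.symm (fun h => ha' h.symm) hb' h1 h2.symm

/-- Adjacent vertices off `v₁v₂`, one having a private neighbour `a` of `v₁`, the other a private
neighbour `b` of `v₂`: both are adjacent to `a`. -/
theorem clone (hG : BEFree G) (h : G.Adj v₁ v₂) {z k a b : V} (z1 : ¬ G.Adj v₁ z)
    (z2 : ¬ G.Adj v₂ z) (k1 : ¬ G.Adj v₁ k) (k2 : ¬ G.Adj v₂ k) (hzk : G.Adj z k)
    (hza : G.Adj z a) (a1 : G.Adj v₁ a) (a2 : ¬ G.Adj v₂ a) (hkb : G.Adj k b) (b2 : G.Adj v₂ b)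
    (b1 : ¬ G.Adj v₁ b) : G.Adj k a := by
  by_contra hka
  have hab : ¬ G.Adj a b := private_not_adj hG h a1 a2 b2 b1
    (by rintro rfl; exact z2 hza.symm) (by rintro rfl; exact k1 hkb.symm)
  by_cases hzb : G.Adj z b
  · exact hG.bull z b k a v₂ hzb hzk hkb.symm hza b2.symm hab (fun h => hka h.symm) z2 k2
      (fun h => a2 h.symm)
  · exact hG.c6 hza a1.symm h b2 hkb.symm hzk.symm (fun h => z1 h.symm) (fun h => z2 h.symm) hzb
      (fun h => a2 h.symm) hab (fun h => hka h.symm) b1 k1 k2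

/-- Two nonadjacent vertices seeing private neighbours of both `v₁` and `v₂` share no private
neighbour of `v₁`. -/
theorem no_shared (hG : BEFree G) (h : G.Adj v₁ v₂) {d d' a b b' : V} (d1 : ¬ G.Adj v₁ d)
    (d2 : ¬ G.Adj v₂ d) (e1 : ¬ G.Adj v₁ d') (e2 : ¬ G.Adj v₂ d') (hne : d ≠ d')
    (hdd : ¬ G.Adj d d') (hda : G.Adj d a) (hea : G.Adj d' a) (a1 : G.Adj v₁ a)
    (a2 : ¬ G.Adj v₂ a) (hdb : G.Adj d b) (b2 : G.Adj v₂ b) (b1 : ¬ G.Adj v₁ b)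
    (heb : G.Adj d' b') (c2 : G.Adj v₂ b') (c1 : ¬ G.Adj v₁ b') : False := by
  have na : a ≠ v₂ := by rintro rfl; exact d2 hda.symm
  have hab : ¬ G.Adj a b := private_not_adj hG h a1 a2 b2 b1 na (by rintro rfl; exact d1 hdb.symm)
  have hab' : ¬ G.Adj a b' :=
    private_not_adj hG h a1 a2 c2 c1 na (by rintro rfl; exact e1 heb.symm)
  have h1 : ¬ G.Adj d' b := fun h' => hG.c4 d a d' b hda hea.symm h' hdb.symm hdd hab hne
    (by rintro rfl; exact a2 b2)
  have h2 : ¬ G.Adj d b' := fun h' => hG.c4 d a d' b' hda hea.symm heb h'.symm hdd hab' hne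
    (by rintro rfl; exact a2 c2)
  by_cases hbb : G.Adj b b'
  · exact hG.bull b b' v₂ d d' hbb b2.symm c2.symm hdb.symm heb.symm h2 (fun h => d2 h.symm) h1
      (fun h => e2 h.symm) hdd
  · exact hG.c6 hdb.symm hda hea.symm heb c2.symm b2 (fun h => hab h.symm) (fun h => h1 h.symm) hbb
      hdd h2 (fun h => d2 h.symm) hab' (fun h => a2 h.symm) (fun h => e2 h.symm)

/-- The vertices of `D` seeing private neighbours of both `v₁` and `v₂` form a clique. For two
nonadjacent ones, the pentagon through one of them and `v₁v₂`, together with the connected set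
around the other, would violate `att_edge`. -/
theorem mixed_clique [Finite V] (hG : BEFree G) (hB : Base G s v₁ v₂ D) {d d' : V} (hd : d ∈ D)
    (hd' : d' ∈ D) (m1 : Sees G s v₁ v₂ d) (m2 : Sees G s v₂ v₁ d) (m3 : Sees G s v₁ v₂ d')
    (m4 : Sees G s v₂ v₁ d') (hne : d ≠ d') : G.Adj d d' := by
  by_contra hdd
  obtain ⟨a, -, hda, a1, a2⟩ := m1
  obtain ⟨b, -, hdb, b2, b1⟩ := m2
  obtain ⟨a', -, hda', a1', a2'⟩ := m3
  obtain ⟨b', -, hdb', b2', b1'⟩ := m4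
  have d1 := hB.anti₁ d hd
  have d2 := hB.anti₂ d hd
  have e1 := hB.anti₁ d' hd'
  have e2 := hB.anti₂ d' hd'
  have h := hB.adj
  have hdd' : ¬ G.Adj d' d := fun h => hdd h.symm
  have na : a ≠ v₂ := by rintro rfl; exact d2 hda.symm
  have nb : b ≠ v₁ := by rintro rfl; exact d1 hdb.symm
  have na' : a' ≠ v₂ := by rintro rfl; exact e2 hda'.symm
  have nb' : b' ≠ v₁ := by rintro rfl; exact e1 hdb'.symm
  have s1 : ¬ G.Adj d' a := fun h' =>
    no_shared hG h d1 d2 e1 e2 hne hdd hda h' a1 a2 hdb b2 b1 hdb' b2' b1'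
  have s2 : ¬ G.Adj d a' := fun h' =>
    no_shared hG h d1 d2 e1 e2 hne hdd h' hda' a1' a2' hdb b2 b1 hdb' b2' b1'
  have s3 : ¬ G.Adj d' b := fun h' =>
    no_shared hG h.symm d2 d1 e2 e1 hne hdd hdb h' b2 b1 hda a1 a2 hda' a1' a2'
  have s4 : ¬ G.Adj d b' := fun h' =>
    no_shared hG h.symm d2 d1 e2 e1 hne hdd h' hdb' b2' b1' hda a1 a2 hda' a1' a2'
  have haa : ¬ G.Adj a a' := fun h' => hG.bull a a' v₁ d d' h' a1.symm a1'.symm hda.symm hda'.symm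
    s2 (fun h => d1 h.symm) s1 (fun h => e1 h.symm) hdd
  have hbb : ¬ G.Adj b b' := fun h' => hG.bull b b' v₂ d d' h' b2.symm b2'.symm hdb.symm hdb'.symm
    s4 (fun h => d2 h.symm) s3 (fun h => e2 h.symm) hdd
  have hab : ¬ G.Adj a b := private_not_adj hG h a1 a2 b2 b1 na nb
  have hab' : ¬ G.Adj a b' := private_not_adj hG h a1 a2 b2' b1' na nb'
  have ha'b : ¬ G.Adj a' b := private_not_adj hG h a1' a2' b2 b1 na' nb
  obtain ⟨c, hC, c0, c1, c2, c3, c4⟩ := hole_five hda a1.symm h b2 hdb.symm (fun h => d1 h.symm)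
    (fun h => d2 h.symm) (fun h => a2 h.symm) hab b1
  have call : ∀ i, c i = d ∨ c i = a ∨ c i = v₁ ∨ c i = v₂ ∨ c i = b := by
    intro i
    rw [← hC.mod i]
    have := Nat.mod_lt i (show 0 < 5 by omega)
    generalize i % 5 = r at *
    interval_cases r <;> simp [*]
  set M : Set V := {x | x ∈ D ∧ ∀ i, x ≠ c i ∧ ¬ G.Adj x (c i)} with hM
  have hd'M : d' ∈ M := by
    refine ⟨hd', fun i => ?_⟩
    rcases call i with h' | h' | h' | h' | h' <;> rw [h']
    · exact ⟨hne.symm, hdd'⟩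
    · exact ⟨by rintro rfl; exact e1 a1, s1⟩
    · exact ⟨by rintro rfl; exact e2 h.symm, fun h => e1 h.symm⟩
    · exact ⟨by rintro rfl; exact e1 h, fun h => e2 h.symm⟩
    · exact ⟨by rintro rfl; exact e2 b2, s3⟩
  have hdF : d ∉ comp G M d' := fun h' => (h'.1.2 0).1 c0.symm
  obtain ⟨f, -, hf, r, hr, hrF, hfr⟩ := hB.conn.cross hd' (mem_comp_self hd'M) hd hdF
  have hrc : ∃ i, G.Adj r (c i) := by
    by_contra hno
    push Not at hno
    refine hrF (comp_adj hf ⟨hr, fun i => ⟨?_, hno i⟩⟩ hfr)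
    rintro rfl
    exact (hf.1.2 i).2 hfr
  have hfd' := mem_comp_self (G := G) hd'M
  obtain ⟨i, hi⟩ := att_edge hG hC (comp_conn (M := M) (v := d')) (fun e he i => he.1.2 i)
    (T := {r, a', b'})
    (by
      rintro t (rfl | rfl | rfl)
      · exact ⟨f, hf, hfr.symm⟩
      · exact ⟨d', hfd', hda'.symm⟩
      · exact ⟨d', hfd', hdb'.symm⟩)
    (by
      rintro t (rfl | rfl | rfl)
      · exact hrc
      · exact ⟨2, by rw [c2]; exact a1'.symm⟩
      · exact ⟨3, by rw [c3]; exact b2'.symm⟩)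
  have i1 := hi a' (by simp)
  have i2 := hi b' (by simp)
  have i3 := hi r (by simp)
  rw [← hC.succ_congr (hC.mod i), ← hC.mod i] at i1 i2 i3
  have r1 := hB.anti₁ r hr
  have r2 := hB.anti₂ r hr
  have c5 : c 5 = d := by rw [← c0]; exact hC.per 0
  have := Nat.mod_lt i (show 0 < 5 by omega)
  have g1 : ¬ G.Adj a' d := fun h => s2 h.symm
  have g2 : ¬ G.Adj a' a := fun h => haa h.symm
  have g3 : ¬ G.Adj a' v₂ := fun h => a2' h.symm
  have g4 : ¬ G.Adj b' d := fun h => s4 h.symm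
  have g5 : ¬ G.Adj b' a := fun h => hab' h.symm
  have g6 : ¬ G.Adj b' v₁ := fun h => b1' h.symm
  have g7 : ¬ G.Adj b' b := fun h => hbb h.symm
  have g8 : ¬ G.Adj r v₁ := fun h => r1 h.symm
  have g9 : ¬ G.Adj r v₂ := fun h => r2 h.symm
  generalize i % 5 = m at *
  interval_cases m <;> simp_all

end BaseLemmas

/-! ### A good vertex away from a given edge -/

section Selection

variable {s D : Set V} {v₁ v₂ : V}

/-- The neighbours of `z` in `s` that are adjacent to `v₁` or `v₂`. -/
def outer (G : SimpleGraph V) (s : Set V) (v₁ v₂ z : V) : Set V :=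
  {x | x ∈ s ∧ G.Adj z x ∧ (G.Adj v₁ x ∨ G.Adj v₂ x)}

theorem outer_comm (z : V) : outer G s v₁ v₂ z = outer G s v₂ v₁ z := by
  ext x; simp only [outer, Set.mem_ofPred_eq, or_comm]

/-- The vertex `q` of an induced path dominated by `z` as in `gem_dominates` has fewer outer
neighbours than `z`. -/
theorem outer_lt {z q t : V} (hz : ¬ G.Adj v₁ z) (hw : ¬ G.Adj v₂ z)
    (hdom : ∀ x, G.Adj q x → x ≠ z → G.Adj z x) (ht : t ∈ s) (zt : G.Adj z t)
    (qt : ¬ G.Adj q t) (vt : G.Adj v₁ t ∨ G.Adj v₂ t) :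
    outer G s v₁ v₂ q < outer G s v₁ v₂ z := by
  refine ⟨fun x hx => ⟨hx.1, hdom x hx.2.1 ?_, hx.2.2⟩, fun h => qt (h ⟨ht, zt, vt⟩).2.1⟩
  rintro rfl
  exact hx.2.2.elim hz hw

/-- A simplicial vertex of `D` whose outer neighbours are all adjacent to `v₁` is good, if its set
of outer neighbours is minimal among the simplicial vertices of `D` not seeing private neighbours of
both `v₁` and `v₂`. -/
theorem good_of_unmixed (hG : BEFree G) (hB : Base G s v₁ v₂ D) {z : V} (hz : Simplicial G D z)
    (hun : ∀ x ∈ s, G.Adj z x → G.Adj v₂ x → G.Adj v₁ x)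
    (hmin : ∀ q, Simplicial G D q → ¬ (Sees G s v₁ v₂ q ∧ Sees G s v₂ v₁ q) →
      ¬ outer G s v₁ v₂ q < outer G s v₁ v₂ z) : GoodV G s z := by
  have z1 := hB.anti₁ z hz.1
  have z2 := hB.anti₂ z hz.1
  have hzv : z ≠ v₁ := by rintro rfl; exact z2 hB.adj.symm
  have hcl : ∀ x ∈ s, G.Adj z x → x ∈ D ∨ G.Adj v₁ x := by
    intro x hx hzx
    rcases hB.cover z hz.1 x hx hzx with h | h | h
    · exact Or.inl h
    · exact Or.inr h
    · exact Or.inr (hun x hx hzx h)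
  have hc1 : ∀ x ∈ D, ∀ y ∈ D, G.Adj z x → G.Adj z y → x ≠ y → G.Adj x y := hz.2
  have hc2 : ∀ x y, G.Adj v₁ x → G.Adj v₁ y → G.Adj z x → G.Adj z y → x ≠ y → G.Adj x y :=
    fun x y a b c d e => common_clique hG z1 hzv c d a b e
  have key : ∀ p ∈ s, ∀ q ∈ s, ∀ r ∈ s, ∀ t ∈ s, G.Adj z p → G.Adj z q → G.Adj z r → G.Adj z t →
      G.Adj p q → G.Adj q r → G.Adj r t → ¬ G.Adj p r → ¬ G.Adj p t → ¬ G.Adj q t → p ∈ D →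
      False := by
    intro p hp q hq r hr t ht zp zq zr zt pq qr rt pr pt qt hpD
    have n1 : q ≠ t := by rintro rfl; exact pt pq
    have n2 : p ≠ r := by rintro rfl; exact pt rt
    have n3 : p ≠ t := by rintro rfl; exact pr rt.symm
    have vt : G.Adj v₁ t := (hcl t ht zt).resolve_left (fun h => pt (hc1 p hpD t h zp zt n3))
    have vr : G.Adj v₁ r := (hcl r hr zr).resolve_left (fun h => pr (hc1 p hpD r h zp zr n2))
    have hqD : q ∈ D := (hcl q hq zq).resolve_right (fun h => qt (hc2 q t h vt zq zt n1))
    have hdom : ∀ x, G.Adj q x → x ≠ z → G.Adj z x := fun x hx hxz =>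
      gem_dominates hG zp zq zr zt pq qr rt pr pt qt vr z1 (hB.anti₁ p hpD)
        (hB.anti₁ q hqD) hx hxz
    refine hmin q ⟨hqD, ?_⟩ ?_ (outer_lt z1 z2 hdom ht zt qt (Or.inl vt))
    · intro x hx y hy qx qy hxy
      by_cases hxz : x = z
      · subst hxz; exact hdom y qy hxy.symm
      by_cases hyz : y = z
      · subst hyz; exact (hdom x qx hxy).symm
      exact hz.2 x hx y hy (hdom x qx hxz) (hdom y qy hyz) hxy
    · rintro ⟨-, b, hb, qb, hb2, hb1⟩
      by_cases hbz : b = z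
      · subst hbz; exact z2 hb2
      exact hb1 (hun b hb (hdom b qb hbz) hb2)
  constructor
  · intro x hx y hy w hw zx zy zw xy yw xw nxy nyw nxw
    rcases hcl x hx zx with h1 | h1 <;> rcases hcl y hy zy with h2 | h2
    · exact nxy (hc1 x h1 y h2 zx zy xy)
    · rcases hcl w hw zw with h3 | h3
      · exact nxw (hc1 x h1 w h3 zx zw xw)
      · exact nyw (hc2 y w h2 h3 zy zw yw)
    · rcases hcl w hw zw with h3 | h3
      · exact nyw (hc1 y h2 w h3 zy zw yw)
      · exact nxw (hc2 x w h1 h3 zx zw xw)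
    · exact nxy (hc2 x y h1 h2 zx zy xy)
  · intro p hp q hq r hr t ht zp zq zr zt pq qr rt pr pt qt
    rcases hcl p hp zp with h | h
    · exact key p hp q hq r hr t ht zp zq zr zt pq qr rt pr pt qt h
    rcases hcl t ht zt with h' | h'
    · exact key t ht r hr q hq p hp zt zr zq zp rt.symm qr.symm pq.symm (fun h => qt h.symm)
        (fun h => pt h.symm) (fun h => pr h.symm) h'
    · exact pt (hc2 p t h h' zp zt (by rintro rfl; exact pr rt.symm))

/-- If `D` is a clique all of whose vertices see private neighbours of both `v₁` and `v₂`, then a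
vertex of `D` with a minimal set of outer neighbours is good. -/
theorem good_of_mixed (hG : BEFree G) (hB : Base G s v₁ v₂ D) {z : V} (hz : z ∈ D)
    (hD : ∀ x ∈ D, ∀ y ∈ D, x ≠ y → G.Adj x y)
    (hmix : ∀ x ∈ D, Sees G s v₁ v₂ x ∧ Sees G s v₂ v₁ x)
    (hmin : ∀ q ∈ D, ¬ outer G s v₁ v₂ q < outer G s v₁ v₂ z) : GoodV G s z := by
  have z1 := hB.anti₁ z hz
  have z2 := hB.anti₂ z hz
  have hzv1 : z ≠ v₁ := by rintro rfl; exact z2 hB.adj.symm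
  have hzv2 : z ≠ v₂ := by rintro rfl; exact z1 hB.adj
  have hcov := hB.cover z hz
  have hc1 : ∀ x y, G.Adj v₁ x → G.Adj v₁ y → G.Adj z x → G.Adj z y → x ≠ y → G.Adj x y :=
    fun x y a b c d e => common_clique hG z1 hzv1 c d a b e
  have hc2 : ∀ x y, G.Adj v₂ x → G.Adj v₂ y → G.Adj z x → G.Adj z y → x ≠ y → G.Adj x y :=
    fun x y a b c d e => common_clique hG z2 hzv2 c d a b e
  -- A neighbour of `z` missing some vertex of `D` adjacent to `z` sees both `v₁` and `v₂`.
  have hboth : ∀ x ∈ D, G.Adj z x → ∀ y ∈ s, G.Adj z y → ¬ G.Adj x y → x ≠ y →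
      G.Adj v₁ y ∧ G.Adj v₂ y := by
    intro x hx zx y hy zy hxy hne
    obtain ⟨⟨a, -, xa, a1, a2⟩, b, -, xb, b2, b1⟩ := hmix x hx
    have x1 := hB.anti₁ x hx
    have x2 := hB.anti₂ x hx
    by_contra hcon
    rcases hcov y hy zy with h | h | h
    · exact hxy (hD x hx y h hne)
    · exact hxy (clone hG hB.adj z1 z2 x1 x2 zx zy h (fun h' => hcon ⟨h, h'⟩) xb b2 b1)
    · exact hxy (clone hG hB.adj.symm z2 z1 x2 x1 zx zy h (fun h' => hcon ⟨h', h⟩) xa a1 a2)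
  have key : ∀ p ∈ s, ∀ q ∈ s, ∀ r ∈ s, ∀ t ∈ s, G.Adj z p → G.Adj z q → G.Adj z r → G.Adj z t →
      G.Adj p q → G.Adj q r → G.Adj r t → ¬ G.Adj p r → ¬ G.Adj p t → ¬ G.Adj q t → p ∈ D →
      False := by
    intro p hp q hq r hr t ht zp zq zr zt pq qr rt pr pt qt hpD
    have n1 : q ≠ t := by rintro rfl; exact pt pq
    have n2 : p ≠ r := by rintro rfl; exact pt rt
    have n3 : p ≠ t := by rintro rfl; exact pr rt.symm
    have vr := hboth p hpD zp r hr zr pr n2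
    have vt := hboth p hpD zp t ht zt pt n3
    have hqD : q ∈ D := by
      rcases hcov q hq zq with h | h | h
      · exact h
      · exact absurd (hc1 q t h vt.1 zq zt n1) qt
      · exact absurd (hc2 q t h vt.2 zq zt n1) qt
    exact hmin q hqD (outer_lt z1 z2 (fun x hx hxz =>
      gem_dominates hG zp zq zr zt pq qr rt pr pt qt vr.1 z1 (hB.anti₁ p hpD)
        (hB.anti₁ q hqD) hx hxz) ht zt qt (Or.inl vt.1))
  have key2 : ∀ p ∈ s, ∀ q ∈ s, ∀ r ∈ s, ∀ t ∈ s, G.Adj z p → G.Adj z q → G.Adj z r → G.Adj z t →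
      G.Adj p q → G.Adj q r → G.Adj r t → ¬ G.Adj p r → ¬ G.Adj p t → ¬ G.Adj q t → t ∉ D →
      G.Adj v₁ p → False := by
    intro p hp q hq r hr t ht zp zq zr zt pq qr rt pr pt qt htD p1
    have n1 : q ≠ t := by rintro rfl; exact pt pq
    have n2 : p ≠ r := by rintro rfl; exact pt rt
    have n3 : p ≠ t := by rintro rfl; exact pr rt.symm
    have t1 : ¬ G.Adj v₁ t := fun h => pt (hc1 p t p1 h zp zt n3)
    have t2 : G.Adj v₂ t := ((hcov t ht zt).resolve_left htD).resolve_left t1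
    have p2 : ¬ G.Adj v₂ p := fun h => pt (hc2 p t h t2 zp zt n3)
    have r1 : ¬ G.Adj v₁ r := fun h => pr (hc1 p r p1 h zp zr n2)
    have r2 : G.Adj v₂ r := by
      rcases hcov r hr zr with h | h | h
      · exact absurd (hboth r h zr p hp zp (fun h => pr h.symm) n2.symm).2 p2
      · exact absurd h r1
      · exact h
    have q2 : ¬ G.Adj v₂ q := fun h => qt (hc2 q t h t2 zq zt n1)
    have q1 : G.Adj v₁ q := by
      rcases hcov q hq zq with h | h | h
      · exact absurd (hboth q h zq t ht zt qt n1).1 t1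
      · exact h
      · exact absurd h q2
    exact private_not_adj hG hB.adj q1 q2 r2 r1 (by rintro rfl; exact z2 zq.symm)
      (by rintro rfl; exact z1 zr.symm) qr
  -- No member of a stable triple in the neighbourhood of `z` lies in `D`.
  have key3 : ∀ x ∈ s, ∀ y ∈ s, ∀ w ∈ s, G.Adj z x → G.Adj z y → G.Adj z w → x ≠ y → y ≠ w →
      x ≠ w → ¬ G.Adj x y → ¬ G.Adj y w → ¬ G.Adj x w → x ∉ D := by
    intro x hx y hy w hw zx zy zw xy yw xw nxy nyw nxw hxD
    exact nyw (hc1 y w (hboth x hxD zx y hy zy nxy xy).1 (hboth x hxD zx w hw zw nxw xw).1 zy zw yw)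
  constructor
  · intro x hx y hy w hw zx zy zw xy yw xw nxy nyw nxw
    have nyx : ¬ G.Adj y x := fun h => nxy h.symm
    have nwx : ¬ G.Adj w x := fun h => nxw h.symm
    have nwy : ¬ G.Adj w y := fun h => nyw h.symm
    have h1 := (hcov x hx zx).resolve_left
      (key3 x hx y hy w hw zx zy zw xy yw xw nxy nyw nxw)
    have h2 := (hcov y hy zy).resolve_left
      (key3 y hy x hx w hw zy zx zw xy.symm xw yw nyx nxw nyw)
    have h3 := (hcov w hw zw).resolve_left
      (key3 w hw x hx y hy zw zx zy xw.symm xy yw.symm nwx nxy nwy)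
    have f1 := fun a b => nxy (hc1 x y a b zx zy xy)
    have f2 := fun a b => nxy (hc2 x y a b zx zy xy)
    have f3 := fun a b => nyw (hc1 y w a b zy zw yw)
    have f4 := fun a b => nyw (hc2 y w a b zy zw yw)
    have f5 := fun a b => nxw (hc1 x w a b zx zw xw)
    have f6 := fun a b => nxw (hc2 x w a b zx zw xw)
    rcases h1 with h1 | h1 <;> rcases h2 with h2 | h2 <;> rcases h3 with h3 | h3 <;>
      first
      | exact f1 h1 h2 | exact f2 h1 h2 | exact f3 h2 h3 | exact f4 h2 h3
      | exact f5 h1 h3 | exact f6 h1 h3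
  · intro p hp q hq r hr t ht zp zq zr zt pq qr rt pr pt qt
    have tr : ¬ G.Adj t p := fun h => pt h.symm
    have tq : ¬ G.Adj t q := fun h => qt h.symm
    have rp : ¬ G.Adj r p := fun h => pr h.symm
    by_cases hpD : p ∈ D
    · exact key p hp q hq r hr t ht zp zq zr zt pq qr rt pr pt qt hpD
    by_cases htD : t ∈ D
    · exact key t ht r hr q hq p hp zt zr zq zp rt.symm qr.symm pq.symm tq tr rp htD
    rcases (hcov p hp zp).resolve_left hpD with p1 | p2
    · exact key2 p hp q hq r hr t ht zp zq zr zt pq qr rt pr pt qt htD p1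
    rcases (hcov t ht zt).resolve_left htD with t1 | t2
    · exact key2 t ht r hr q hq p hp zt zr zq zp rt.symm qr.symm pq.symm tq tr rp hpD t1
    · exact pt (hc2 p t p2 t2 zp zt (by rintro rfl; exact pr rt.symm))

/-- The hole-free case: some vertex of `D` is good. -/
theorem exists_good_base [Finite V] (hG : BEFree G) (hB : Base G s v₁ v₂ D) (hne : D.Nonempty) :
    ∃ z ∈ D, GoodV G s z := by
  have wf := InvImage.wf (outer G s v₁ v₂) (wellFounded_lt (α := Set V))
  by_cases hun : {z | Simplicial G D z ∧ ¬ (Sees G s v₁ v₂ z ∧ Sees G s v₂ v₁ z)}.Nonempty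
  · obtain ⟨z, ⟨hz, hzm⟩, hmin⟩ := wf.has_min _ hun
    refine ⟨z, hz.1, ?_⟩
    have hmin' : ∀ q, Simplicial G D q → ¬ (Sees G s v₁ v₂ q ∧ Sees G s v₂ v₁ q) →
      ¬ outer G s v₁ v₂ q < outer G s v₁ v₂ z := fun q h1 h2 => hmin q ⟨h1, h2⟩
    by_cases hs : Sees G s v₂ v₁ z
    · have hs' : ¬ Sees G s v₁ v₂ z := fun h => hzm ⟨h, hs⟩
      refine good_of_unmixed hG hB.symm hz ?_ ?_
      · intro x hx zx x1
        by_contra h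
        exact hs' ⟨x, hx, zx, x1, h⟩
      · intro q h1 h2
        rw [← outer_comm q, ← outer_comm z]
        exact hmin' q h1 (fun h => h2 h.symm)
    · refine good_of_unmixed hG hB hz ?_ hmin'
      intro x hx zx x2
      by_contra h
      exact hs ⟨x, hx, zx, x2, h⟩
  · have hall : ∀ z, Simplicial G D z → Sees G s v₁ v₂ z ∧ Sees G s v₂ v₁ z := by
      intro z hz
      by_contra h
      exact hun ⟨z, hz, h⟩
    have hD : ∀ x ∈ D, ∀ y ∈ D, x ≠ y → G.Adj x y := by
      intro x hx y hy hxy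
      by_contra h
      obtain ⟨p, hp, hpx, hxp⟩ := dirac D hB.holeFree x hx y hy hxy.symm h
      obtain ⟨q, hq, hqp, hpq⟩ := dirac D hB.holeFree p hp.1 x hx hpx.symm (fun h => hxp h.symm)
      have m1 := hall p hp
      have m2 := hall q hq
      exact hpq (mixed_clique hG hB hp.1 hq.1 m1.1 m1.2 m2.1 m2.2 hqp.symm)
    obtain ⟨z, hz, hmin⟩ := wf.has_min D hne
    exact ⟨z, hz, good_of_mixed hG hB hz hD
      (fun x hx => hall x ⟨hx, fun a ha b hb _ _ hab => hD a ha b hb hab⟩) hmin⟩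

/-- If some vertex of `s` is anticomplete to the edge `v₁v₂`, then some good vertex is. -/
theorem exists_good [Finite V] (hG : BEFree G) (s : Set V) (v₁ v₂ : V) (h1 : v₁ ∈ s) (h2 : v₂ ∈ s)
    (hadj : G.Adj v₁ v₂) (hu : ∃ u ∈ s, ¬ G.Adj v₁ u ∧ ¬ G.Adj v₂ u) :
    ∃ z ∈ s, ¬ G.Adj v₁ z ∧ ¬ G.Adj v₂ z ∧ GoodV G s z := by
  induction s using WellFoundedLT.induction generalizing v₁ v₂ with
  | _ s ih =>
  set Y : Set V := {x | x ∈ s ∧ ¬ G.Adj v₁ x ∧ ¬ G.Adj v₂ x} with hY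
  by_cases hfree : HoleFree G Y
  · obtain ⟨u, hu, hu1, hu2⟩ := hu
    have huY : u ∈ Y := ⟨hu, hu1, hu2⟩
    have hDY : ∀ x ∈ comp G Y u, x ∈ Y := fun x h => h.1
    obtain ⟨z, hz, hgood⟩ := exists_good_base (D := comp G Y u) hG
      ⟨hadj, fun x hx => (hDY x hx).1, fun x hx => (hDY x hx).2.1, fun x hx => (hDY x hx).2.2,
        fun z hz x hx hzx => by
          by_cases hxY : x ∈ Y
          · exact Or.inl (comp_adj hz hxY hzx)
          · have : ¬ (¬ G.Adj v₁ x ∧ ¬ G.Adj v₂ x) := fun h => hxY ⟨hx, h⟩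
            tauto,
        fun n c hc h => hfree n c hc (fun i => hDY _ (h i)), comp_conn⟩ ⟨u, mem_comp_self huY⟩
    exact ⟨z, (hDY z hz).1, (hDY z hz).2.1, (hDY z hz).2.2, hgood⟩
  · unfold HoleFree at hfree
    push Not at hfree
    obtain ⟨n, c, hC, hcY⟩ := hfree
    have hn : 5 ≤ n := by
      rcases hC.four.eq_or_lt with h | h
      · exact (hG.even n c hC (by rw [← h]; decide)).elim
      · exact h
    set M : Set V := {x | x ∈ s ∧ ∀ i, x ≠ c i ∧ ¬ G.Adj x (c i)} with hM
    have hv1M : v₁ ∈ M := ⟨h1, fun i =>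
      ⟨by intro h; exact (hcY i).2.2 (h ▸ hadj.symm), (hcY i).2.1⟩⟩
    have hv2M : v₂ ∈ M := ⟨h2, fun i =>
      ⟨by intro h; exact (hcY i).2.1 (h ▸ hadj), (hcY i).2.2⟩⟩
    have hv1E : v₁ ∈ comp G M v₁ := mem_comp_self hv1M
    have hv2E : v₂ ∈ comp G M v₁ := comp_adj hv1E hv2M hadj
    set E := comp G M v₁ with hE
    have hEM : ∀ x ∈ E, x ∈ M := fun x h => h.1
    have hcE : ∀ i, c i ∉ E := fun i h => ((hEM _ h).2 i).1 rfl
    obtain ⟨i, hi⟩ := att_edge hG hC (comp_conn (M := M) (v := v₁)) (fun e he => (hEM e he).2)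
      (T := {t | t ∈ s ∧ t ∉ E ∧ ∃ e ∈ E, G.Adj t e}) (fun t ht => ht.2.2) (by
        rintro t ⟨hts, htE, e, he, hte⟩
        by_contra hno
        push Not at hno
        refine htE (comp_adj he ⟨hts, fun i => ⟨?_, hno i⟩⟩ hte.symm)
        rintro rfl
        exact ((hEM e he).2 i).2 hte.symm)
    have hlt : s \ E < s := ⟨Set.sdiff_subset, fun h => (h h1).2 hv1E⟩
    obtain ⟨z, hz, hz1, hz2, hgood⟩ := ih (s \ E) hlt (c i) (c (i + 1)) ⟨(hcY i).1, hcE i⟩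
      ⟨(hcY _).1, hcE _⟩ (hC.adj_succ i) ⟨c (i + 3), ⟨(hcY _).1, hcE _⟩,
        hC.not_adj i 3 (by omega) hn, by
          have := hC.not_adj (i + 1) 2 le_rfl (by omega)
          rwa [add_assoc] at this⟩
    have hzE : ∀ e ∈ E, ¬ G.Adj z e := by
      intro e he hze
      rcases hi z ⟨hz.1, hz.2, e, he, hze⟩ with h | h
      · exact hz1 h.symm
      · exact hz2 h.symm
    refine ⟨z, hz.1, fun h => hzE _ hv1E h.symm, fun h => hzE _ hv2E h.symm, ?_⟩
    have hmem : ∀ x ∈ s, G.Adj z x → x ∈ s \ E := fun x hx hzx => ⟨hx, fun h => hzE x h hzx⟩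
    exact ⟨fun x hx y hy w hw zx zy zw => hgood.triple x (hmem x hx zx) y (hmem y hy zy) w
        (hmem w hw zw) zx zy zw,
      fun p hp q hq r hr t ht zp zq zr zt => hgood.path p (hmem p hp zp) q (hmem q hq zq) r
        (hmem r hr zr) t (hmem t ht zt) zp zq zr zt⟩

end Selection

/-! ### Perfect elimination orders and perfection -/

/-- Every nonempty subset of `P` has a simplicial vertex; that is, `G[P]` is chordal. -/
def Elim (G : SimpleGraph V) (P : Set V) : Prop :=
  ∀ t ⊆ P, t.Nonempty → ∃ z, Simplicial G t z

lemma Elim.mono {P Q : Set V} (h : Elim G P) (hQ : Q ⊆ P) : Elim G Q :=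
  fun t ht hne => h t (ht.trans hQ) hne

lemma elim_empty : Elim G ∅ := by
  intro t ht hne
  exact absurd (Set.subset_empty_iff.1 ht) hne.ne_empty

lemma Elim.adjoin {P : Set V} {z : V} (h : Elim G P)
    (hz : ∀ x ∈ P, ∀ y ∈ P, G.Adj z x → G.Adj z y → x ≠ y → G.Adj x y) :
    Elim G (insert z P) := by
  intro t ht hne
  by_cases hzt : z ∈ t
  · refine ⟨z, hzt, fun x hx y hy zx zy xy => ?_⟩
    have hx' := (ht hx).resolve_left (fun e => zx.ne e.symm)
    have hy' := (ht hy).resolve_left (fun e => zy.ne e.symm)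
    exact hz x hx' y hy' zx zy xy
  · exact h t (fun x hx => (ht hx).resolve_left (fun e => hzt (e ▸ hx))) hne

/-- Greedy colouring along a perfect elimination order. -/
lemma Elim.coloring [Finite V] (k : ℕ) (s : Set V) (h : Elim G s)
    (hk : ∀ t : Finset V, ↑t ⊆ s → G.IsClique (↑t : Set V) → t.card ≤ k) :
    ∃ c : V → ℕ, (∀ x ∈ s, c x < k) ∧ ∀ x ∈ s, ∀ y ∈ s, G.Adj x y → c x ≠ c y := by
  classical
  induction s using WellFoundedLT.induction with
  | ind s ih =>
  rcases s.eq_empty_or_nonempty with rfl | hne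
  · exact ⟨fun _ => 0, by simp, by simp⟩
  obtain ⟨z, hz, hzs⟩ := h s subset_rfl hne
  have hlt : s \ {z} < s := ⟨Set.sdiff_subset, fun h => (h hz).2 rfl⟩
  obtain ⟨c, hc1, hc2⟩ := ih _ hlt (h.mono Set.sdiff_subset)
    (fun t ht => hk t (ht.trans Set.sdiff_subset))
  have hfin : (s ∩ {x | G.Adj z x}).Finite := Set.toFinite _
  set N : Finset V := hfin.toFinset with hN
  have memN : ∀ x, x ∈ N ↔ x ∈ s ∧ G.Adj z x := by intro x; simp [hN]
  have hcard : (insert z N).card ≤ k := by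
    apply hk
    · intro x hx
      rcases Finset.mem_insert.1 (Finset.mem_coe.1 hx) with rfl | hx
      · exact hz
      · exact ((memN x).1 hx).1
    · intro x hx y hy xy
      rcases Finset.mem_insert.1 (Finset.mem_coe.1 hx) with rfl | hx <;>
      rcases Finset.mem_insert.1 (Finset.mem_coe.1 hy) with rfl | hy
      · exact absurd rfl xy
      · exact ((memN y).1 hy).2
      · exact ((memN x).1 hx).2.symm
      · exact hzs x ((memN x).1 hx).1 y ((memN y).1 hy).1 ((memN x).1 hx).2 ((memN y).1 hy).2 xy
  have hzN : z ∉ N := fun h => ((memN z).1 h).2.ne rfl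
  rw [Finset.card_insert_of_notMem hzN] at hcard
  obtain ⟨a, ha, haN⟩ : ∃ a ∈ Finset.range k, a ∉ N.image c := by
    apply Finset.exists_mem_notMem_of_card_lt_card
    rw [Finset.card_range]
    exact lt_of_le_of_lt Finset.card_image_le hcard
  have hne' : ∀ x ∈ s, G.Adj z x → c x ≠ a := fun x hx zx e =>
    haN (Finset.mem_image.2 ⟨x, (memN x).2 ⟨hx, zx⟩, e⟩)
  refine ⟨Function.update c z a, fun x hx => ?_, fun x hx y hy xy => ?_⟩
  · by_cases e : x = z
    · subst e; simpa using ha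
    · rw [Function.update_of_ne e]; exact hc1 x ⟨hx, e⟩
  · by_cases e : x = z
    · subst e
      rw [Function.update_self, Function.update_of_ne xy.ne']
      exact (hne' y hy xy).symm
    · by_cases e' : y = z
      · subst e'
        rw [Function.update_self, Function.update_of_ne e]
        exact hne' x hx xy.symm
      · rw [Function.update_of_ne e, Function.update_of_ne e']
        exact hc2 x ⟨hx, e⟩ y ⟨hy, e'⟩ xy

lemma cliqueNumOn_bddAbove {U : Type*} [Finite U] (H : SimpleGraph U) (s : Set U) :
    BddAbove {n | ∃ t : Finset U, ↑t ⊆ s ∧ H.IsNClique n t} := by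
  have := Fintype.ofFinite U
  refine ⟨Fintype.card U, ?_⟩
  rintro n ⟨t, -, ht⟩
  rw [← ht.card_eq]
  exact Finset.card_le_univ t

lemma Elim.isPerfect [Finite V] {P : Set V} (h : Elim G P) : IsPerfect (G.induce P) := by
  classical
  intro s
  set H := G.induce P with hH
  have hb := cliqueNumOn_bddAbove H s
  apply le_antisymm
  · have hs : Elim G (Subtype.val '' s) := h.mono (by rintro _ ⟨x, -, rfl⟩; exact x.2)
    obtain ⟨c, hc1, hc2⟩ := hs.coloring (cliqueNumOn H s) _ (by
      intro t ht htc
      have htP : ∀ x ∈ t, x ∈ P := fun x hx => by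
        obtain ⟨y, -, rfl⟩ := ht hx; exact y.2
      let t' : Finset P := t.subtype (· ∈ P)
      have hcard : t'.card = t.card := by
        rw [Finset.card_subtype, Finset.filter_true_of_mem htP]
      refine le_csSup hb ⟨t', ?_, ?_, hcard⟩
      · intro x hx
        obtain ⟨y, hy, hyx⟩ := ht (Finset.mem_subtype.1 (Finset.mem_coe.1 hx))
        rwa [← Subtype.ext hyx]
      · intro x hx y hy xy
        exact htc (Finset.mem_subtype.1 (Finset.mem_coe.1 hx))
          (Finset.mem_subtype.1 (Finset.mem_coe.1 hy)) (fun e => xy (Subtype.ext e)))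
    have : (H.induce s).Colorable (cliqueNumOn H s) :=
      ⟨Coloring.mk (fun x => ⟨c x.1.1, hc1 _ ⟨x.1, x.2, rfl⟩⟩) (by
        intro x y hxy e
        exact hc2 _ ⟨x.1, x.2, rfl⟩ _ ⟨y.1, y.2, rfl⟩ hxy (Fin.mk.inj_iff.1 e))⟩
    exact this.chromaticNumber_le
  · obtain ⟨t, hts, ht⟩ := Nat.sSup_mem (s := {n | ∃ t : Finset P, ↑t ⊆ s ∧ H.IsNClique n t})
      ⟨0, ∅, by simp, by simp⟩ hb
    have htS : ∀ x ∈ t, x ∈ s := fun x hx => hts hx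
    let t' : Finset s := t.subtype (· ∈ s)
    have hcard : t'.card = cliqueNumOn H s := by
      rw [Finset.card_subtype, Finset.filter_true_of_mem htS]; exact ht.card_eq
    have hcl : (H.induce s).IsClique (↑t' : Set s) := by
      intro x hx y hy xy
      exact ht.isClique (Finset.mem_subtype.1 (Finset.mem_coe.1 hx))
          (Finset.mem_subtype.1 (Finset.mem_coe.1 hy)) (fun e => xy (Subtype.ext e))
    rw [← hcard]
    exact hcl.card_le_chromaticNumber

/-! ### Weighted divisions -/

/-- `s` splits into a chordal part `P` and a part `W` each of whose cliques is strictly lighter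
than some clique of `s`. -/
def Div (G : SimpleGraph V) (w : V → ℕ) (s : Set V) : Prop :=
  ∃ P W : Set V, P ∪ W = s ∧ P ∩ W = ∅ ∧ Elim G P ∧
    ∀ t : Finset V, ↑t ⊆ W → G.IsClique (↑t : Set V) →
      ∃ t' : Finset V, ↑t' ⊆ s ∧ G.IsClique (↑t' : Set V) ∧ ∑ v ∈ t, w v < ∑ v ∈ t', w v

lemma heavier {w : V → ℕ} (hw : ∀ v, 0 < w v) {s : Set V} {t : Finset V} (hts : ↑t ⊆ s)
    (ht : G.IsClique (↑t : Set V)) {a : V} (ha : a ∈ s) (hat : ∀ x ∈ t, G.Adj a x) :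
    ∃ t' : Finset V, ↑t' ⊆ s ∧ G.IsClique (↑t' : Set V) ∧ ∑ v ∈ t, w v < ∑ v ∈ t', w v := by
  classical
  have hn : a ∉ t := fun h => (hat a h).ne rfl
  refine ⟨insert a t, ?_, ?_, ?_⟩
  · rw [Finset.coe_insert]; exact Set.insert_subset ha hts
  · rw [Finset.coe_insert]
    exact ht.insert (fun x hx _ => hat x hx)
  · rw [Finset.sum_insert hn]
    have := hw a
    omega

/-- A vertex whose neighbourhood has no stable triple and no induced four-vertex path can be
added to a division: to the chordal part if its neighbours there form a clique, and otherwise to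
the light part, since two nonadjacent neighbours `a`, `b` in the chordal part cannot both miss
a vertex of a clique through `z`. -/
lemma Div.step {w : V → ℕ} (hw : ∀ v, 0 < w v) {s : Set V} {z : V} (hz : z ∈ s)
    (hg : GoodV G s z) (h : (s \ {z}).Nonempty → Div G w (s \ {z})) : Div G w s := by
  classical
  rcases (s \ {z}).eq_empty_or_nonempty with he | hne
  · have hs : s = {z} := by
      apply subset_antisymm
      · exact Set.sdiff_eq_empty.1 he
      · simpa using hz
    refine ⟨{z}, ∅, by simp [hs], by simp, ?_, ?_⟩
    · have := elim_empty (G := G).adjoin (z := z) (by simp)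
      simpa using this
    · intro t ht htc
      refine heavier hw (ht.trans (Set.empty_subset _)) htc hz fun x hx => ?_
      exact absurd (ht hx) (Set.notMem_empty x)
  obtain ⟨P, W, hU, hI, hE, hC⟩ := h hne
  have hzP : z ∉ P := fun hp => (hU.subset (Or.inl hp)).2 rfl
  have hzW : z ∉ W := fun hp => (hU.subset (Or.inr hp)).2 rfl
  have hPs : P ⊆ s := fun x hx => (hU.subset (Or.inl hx)).1
  have hWs : W ⊆ s := fun x hx => (hU.subset (Or.inr hx)).1
  by_cases hcl : ∀ x ∈ P, ∀ y ∈ P, G.Adj z x → G.Adj z y → x ≠ y → G.Adj x y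
  · refine ⟨insert z P, W, ?_, ?_, hE.adjoin hcl, ?_⟩
    · rw [Set.insert_union, hU, Set.insert_sdiff_singleton, Set.insert_eq_of_mem hz]
    · rw [Set.insert_inter_of_notMem hzW, hI]
    · intro t ht htc
      obtain ⟨t', h1, h2, h3⟩ := hC t ht htc
      exact ⟨t', h1.trans Set.sdiff_subset, h2, h3⟩
  · push Not at hcl
    obtain ⟨a, ha, b, hb, za, zb, ab, nab⟩ := hcl
    refine ⟨P, insert z W, ?_, ?_, hE, ?_⟩
    · rw [Set.union_insert, hU, Set.insert_sdiff_singleton, Set.insert_eq_of_mem hz]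
    · rw [Set.inter_insert_of_notMem hzP, hI]
    · intro t ht htc
      by_cases hzt : z ∈ t
      · have hts : ↑t ⊆ s := ht.trans (Set.insert_subset hz hWs)
        have notP : ∀ x ∈ t, x ∉ P := fun x hx hxP => by
          rcases ht hx with rfl | hxW
          · exact hzP hxP
          · exact (hI.subset ⟨hxP, hxW⟩).elim
        by_cases hca : ∀ x ∈ t, G.Adj a x
        · exact heavier hw hts htc (hPs ha) hca
        by_cases hcb : ∀ x ∈ t, G.Adj b x
        · exact heavier hw hts htc (hPs hb) hcb
        exfalso
        push Not at hca hcb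
        obtain ⟨q₁, hq₁, na⟩ := hca
        obtain ⟨q₂, hq₂, nb⟩ := hcb
        have z1 : G.Adj z q₁ := htc hzt hq₁ (fun e => na (e ▸ za.symm))
        have z2 : G.Adj z q₂ := htc hzt hq₂ (fun e => nb (e ▸ zb.symm))
        have key : ∀ q ∈ t, G.Adj z q → ¬ G.Adj a q → ¬ G.Adj b q → False :=
          fun q hq zq h1 h2 => hg.triple a (hPs ha) b (hPs hb) q (hts hq) za zb zq ab
            (fun e => notP q hq (e ▸ hb)) (fun e => notP q hq (e ▸ ha)) nab h2 h1
        have h2 : G.Adj a q₂ := by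
          by_contra h; exact key q₂ hq₂ z2 h nb
        have h1 : G.Adj b q₁ := by
          by_contra h; exact key q₁ hq₁ z1 na h
        have h12 : G.Adj q₂ q₁ := htc hq₂ hq₁ (fun e => na (e ▸ h2))
        exact hg.path a (hPs ha) q₂ (hts hq₂) q₁ (hts hq₁) b (hPs hb) za z2 z1 zb
          h2 h12 h1.symm na nab (fun h => nb h.symm)
      · obtain ⟨t', h1, h2, h3⟩ := hC t
          (fun x hx => (ht hx).resolve_left (fun e => hzt (e ▸ hx))) htc
        exact ⟨t', h1.trans Set.sdiff_subset, h2, h3⟩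

/-- An edge `vu` dominating `s` is itself the chordal part of a division: by the absence of
four-holes, each clique disjoint from `{v, u}` is complete to `v` or to `u`. -/
lemma div_of_dominating (hG : BEFree G) {w : V → ℕ} (hw : ∀ v, 0 < w v) {s : Set V} {v u : V}
    (hv : v ∈ s) (hu : u ∈ s) (vu : G.Adj v u)
    (hd : ∀ x ∈ s, G.Adj v x ∨ G.Adj u x) : Div G w s := by
  classical
  refine ⟨{v, u}, s \ {v, u}, ?_, ?_, ?_, ?_⟩
  · exact Set.union_sdiff_cancel (Set.insert_subset hv (by simpa using hu))
  · exact Set.inter_sdiff_self _ _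
  · have h1 := elim_empty (G := G).adjoin (z := u) (by simp)
    have h2 := h1.adjoin (z := v) (by
      rintro x (rfl | hx) y (rfl | hy) _ _ xy
      · exact absurd rfl xy
      · exact hy.elim
      · exact hx.elim
      · exact hx.elim)
    simpa using h2
  · intro t ht htc
    have hts : ↑t ⊆ s := ht.trans Set.sdiff_subset
    by_cases hcv : ∀ x ∈ t, G.Adj v x
    · exact heavier hw hts htc hv hcv
    by_cases hcu : ∀ x ∈ t, G.Adj u x
    · exact heavier hw hts htc hu hcu
    exfalso
    push Not at hcv hcu
    obtain ⟨a, ha, na⟩ := hcv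
    obtain ⟨k, hk, nk⟩ := hcu
    have ua := (hd a (hts ha)).resolve_left na
    have vk := (hd k (hts hk)).resolve_right nk
    have ka : G.Adj k a := htc hk ha (fun e => na (e ▸ vk))
    exact hG.c4 v k a u vk ka ua.symm vu.symm na (fun h => nk h.symm)
      (fun e => (ht ha).2 (Or.inl e.symm)) (fun e => (ht hk).2 (Or.inr e))

lemma div_all [Finite V] (hG : BEFree G) {w : V → ℕ} (hw : ∀ v, 0 < w v) (s : Set V)
    (hne : s.Nonempty) : Div G w s := by
  induction s using WellFoundedLT.induction with
  | ind s ih =>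
  have step : ∀ z ∈ s, GoodV G s z → Div G w s := fun z hz hg =>
    Div.step hw hz hg (ih _ ⟨Set.sdiff_subset, fun h => (h hz).2 rfl⟩)
  obtain ⟨v, hv⟩ := hne
  by_cases hiso : ∃ u ∈ s, G.Adj v u
  · obtain ⟨u, hu, vu⟩ := hiso
    by_cases hd : ∃ x ∈ s, ¬ G.Adj v x ∧ ¬ G.Adj u x
    · obtain ⟨z, hz, -, -, hg⟩ := exists_good hG s v u hv hu vu hd
      exact step z hz hg
    · push Not at hd
      exact div_of_dominating hG hw hv hu vu fun x hx => or_iff_not_imp_left.2 (hd x hx)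
  · push Not at hiso
    exact step v hv
      ⟨fun x hx _ _ _ _ h => absurd h (hiso x hx), fun x hx _ _ _ _ _ _ h => absurd h (hiso x hx)⟩

lemma wCliqueNumOn_lt [Finite V] {w : V → ℕ} {s W : Set V}
    (h : ∀ t : Finset V, ↑t ⊆ W → G.IsClique (↑t : Set V) →
      ∃ t' : Finset V, ↑t' ⊆ s ∧ G.IsClique (↑t' : Set V) ∧ ∑ v ∈ t, w v < ∑ v ∈ t', w v) :
    wCliqueNumOn G w W < wCliqueNumOn G w s := by
  have := Fintype.ofFinite V
  have hb : ∀ r : Set V, BddAbove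
      {n | ∃ t : Finset V, ↑t ⊆ r ∧ G.IsClique (↑t : Set V) ∧ ∑ v ∈ t, w v = n} := by
    refine fun r => ⟨∑ v, w v, ?_⟩
    rintro n ⟨t, -, -, rfl⟩
    exact Finset.sum_le_sum_of_subset (Finset.subset_univ t)
  obtain ⟨t, ht, htc, hts⟩ := Nat.sSup_mem (s :=
    {n | ∃ t : Finset V, ↑t ⊆ W ∧ G.IsClique (↑t : Set V) ∧ ∑ v ∈ t, w v = n})
    ⟨0, ∅, by simp, by simp, by simp⟩ (hb W)
  obtain ⟨t', h1, h2, h3⟩ := h t ht htc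
  have h4 : ∑ v ∈ t', w v ≤ wCliqueNumOn G w s := le_csSup (hb s) ⟨t', h1, h2, rfl⟩
  have h5 : ∑ v ∈ t, w v = wCliqueNumOn G w W := hts
  omega

lemma wCliqueNumOn_one (s : Set V) : wCliqueNumOn G (fun _ => 1) s = cliqueNumOn G s := by
  unfold wCliqueNumOn cliqueNumOn
  congr 1
  ext n
  simp [isNClique_iff]

end BullEvenHole

/-- Every (bull, even hole)-free graph is perfectly weight divisible, and hence
perfectly divisible. -/
theorem bull_evenHole_free_perfectlyWeightDivisible {V : Type*} [Fintype V]
    (G : SimpleGraph V) (hbull : IsFree G bull)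
    (heven : ∀ k : ℕ, 4 ≤ k → Even k → IsFree G (SimpleGraph.cycleGraph k)) :
    PerfectlyWeightDivisible G ∧ PerfectlyDivisible G := by
  have hG := BullEvenHole.beFree_of_free hbull heven
  have main : ∀ w : V → ℕ, (∀ v, 0 < w v) → ∀ s : Set V, s.Nonempty →
      ∃ P W : Set V, P ∪ W = s ∧ P ∩ W = ∅ ∧
        IsPerfect (G.induce P) ∧ wCliqueNumOn G w W < wCliqueNumOn G w s := by
    intro w hw s hs
    obtain ⟨P, W, h1, h2, h3, h4⟩ := BullEvenHole.div_all hG hw s hs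
    exact ⟨P, W, h1, h2, h3.isPerfect, BullEvenHole.wCliqueNumOn_lt h4⟩
  refine ⟨main, fun s hs => ?_⟩
  simpa only [BullEvenHole.wCliqueNumOn_one] using main (fun _ => 1) (fun _ => one_pos) s hs
end
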